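/- arXiv:1610.04738 — 2 statements merged into one kernel-verified Lean document; each statement's English description precedes it below -/
import Mathlib

section
/- Let p > 2, let N ≥ 1 be an integer, and let f ∈ C^1([0,∞)) satisfy (f0), (f1), (f2), (f3). Then there exists a nonconstant radial profile solution u of the Neumann problem −Δ_p u + u^{p−1} = f(u) in the unit ball of ℝ^N; that is, there exists u ∈ C^1([0,1]) with u(r) > 0 for all r ∈ [0,1], u nondecreasing on [0,1], u not constant, u'(0) = u'(1) = 0, and such that the map r ↦ r^{N−1}|u'(r)|^{p−2}u'(r) is differentiable on (0,1) with derivative equal to r^{N−1}(u(r)^{p−1} − f(u(r))) for every r ∈ (0,1). -/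
open Real Filter Set

/-- The "flux" `s ↦ s^(N-1) |u'(s)|^(p-2) u'(s)` appearing in the radial form of the
`p`-Laplacian. -/
noncomputable def flux (p : ℝ) (N : ℕ) (u' : ℝ → ℝ) (s : ℝ) : ℝ :=
  s ^ (N - 1) * (|u' s| ^ (p - 2) * u' s)

/-- `u ∈ C^1([0,1])` (with derivative `u'`) is a radial profile solution of the Neumann
problem `-Δ_p u + u^(p-1) = f(u)` in the unit ball of `ℝ^N`. -/
def IsRadialNeumannSolution (p : ℝ) (N : ℕ) (f : ℝ → ℝ) (u u' : ℝ → ℝ) : Prop :=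
  (∀ r ∈ Set.Icc (0:ℝ) 1, HasDerivWithinAt u (u' r) (Set.Icc 0 1) r) ∧
  ContinuousOn u' (Set.Icc 0 1) ∧
  u' 0 = 0 ∧ u' 1 = 0 ∧
  ∀ r ∈ Set.Ioo (0:ℝ) 1,
    HasDerivAt (flux p N u') (r ^ (N - 1) * ((u r) ^ (p - 1) - f (u r))) r

/-!
With `w = r^(N-1) |u'|^(p-2) u'` the equation reads `u' = (w / r^(N-1))^(1/(p-1))`,
`w' = r^(N-1) g(u)`, `w 0 = 0`, where `g(s) = s^(p-1) - f(s)`. One shoots from `u 0 = d` below `u₀`,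
a zero at which `g` crosses downwards, and looks for `w 1 = 0`. Let `a < u₀` be the last zero of `g`
before `u₀`.

Because `1 / (p - 1) < 1`, a profile started just below `u₀` crosses `u₀` before time `1 / 2` and
then drives its flux below zero: `w 1 < 0`. A profile which has not reached `u₀` by time `1` has
`w 1 > 0`, since `g > 0` on `(a, u₀)`. By the intermediate value theorem some `d` in between gives
`w 1 = 0` together with `u 1 ≥ u₀ > u 0`, hence a nonconstant solution.

The system is not Lipschitz, so `d` cannot be varied continuously in it. The intermediate value
argument is carried out on regularised systems, and a limit of their solutions is taken; the sign
condition near `u₀` holds for every solution of the limit system and passes to the approximations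
by compactness.
-/

section

open MeasureTheory intervalIntegral Topology Metric
open scoped NNReal

theorem exists_pos_forall_lt_mul_rpow {q κ c : ℝ} (hq : q < 1) (hκ : 0 < κ) (hc : 0 < c) :
    ∃ m₀ > 0, ∀ m ∈ Ioo 0 m₀, m < c * (κ * m) ^ q := by
  have hq' : 0 < 1 - q := sub_pos.2 hq
  refine ⟨(c * κ ^ q) ^ (1 - q)⁻¹, by positivity, fun m ⟨hm, hlt⟩ => ?_⟩
  have hroot : m ^ (1 - q) < c * κ ^ q :=
    (Real.lt_rpow_inv_iff_of_pos hm.le (by positivity) hq').1 hlt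
  calc m = m ^ (1 - q) * m ^ q := by rw [← Real.rpow_add hm]; simp
    _ < c * κ ^ q * m ^ q := by gcongr
    _ = c * (κ * m) ^ q := by rw [Real.mul_rpow hκ.le hm.le, mul_assoc]

theorem exists_subseq_tendsto_of_lipschitzOnWith {X E : Type*} [PseudoMetricSpace X]
    [MetricSpace E] [ProperSpace E] {s : Set X} (hs : IsCompact s) {x₀ : X} (hx₀ : x₀ ∈ s)
    {K : ℝ≥0} {F : ℕ → X → E} (hF : ∀ n, LipschitzOnWith K (F n) s)
    (hbdd : Bornology.IsBounded (range fun n => F n x₀)) :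
    ∃ φ : ℕ → ℕ, StrictMono φ ∧ ∃ F₀ : X → E, ContinuousOn F₀ s ∧
      ∀ x ∈ s, Tendsto (fun n => F (φ n) x) atTop (𝓝 (F₀ x)) := by
  have : CompactSpace s := isCompact_iff_compactSpace.1 hs
  let G : ℕ → BoundedContinuousFunction s E := fun n =>
    .mkOfCompact ⟨s.domRestrict (F n), (hF n).continuousOn.domRestrict⟩
  have hG : ∀ n, LipschitzWith K (G n) := fun n => (hF n).to_restrict
  obtain ⟨R, hR⟩ := hbdd.subset_closedBall (F 0 x₀)
  have hmem : ∀ n x, G n x ∈ closedBall (F 0 x₀) (K * diam s + R) := fun n x => by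
    refine (dist_triangle _ (F n x₀) _).trans (add_le_add ?_ (hR (mem_range_self n)))
    exact ((hF n).dist_le_mul x x.2 x₀ hx₀).trans
      (by gcongr; exact dist_le_diam_of_mem hs.isBounded x.2 hx₀)
  have hcompact : IsCompact (closure (range G)) := by
    refine BoundedContinuousFunction.arzela_ascoli _
      (isCompact_closedBall (F 0 x₀) (K * diam s + R)) _ ?_
      (LipschitzWith.uniformEquicontinuous _ K ?_).equicontinuous
    · rintro _ x ⟨n, rfl⟩
      exact hmem n x
    · rintro ⟨_, n, rfl⟩
      exact hG n
  obtain ⟨G₀, -, φ, hφ, hlim⟩ :=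
    hcompact.tendsto_subseq fun n => subset_closure (mem_range_self n)
  have hext : ∀ x (hx : x ∈ s), Function.extend Subtype.val G₀ (fun _ => F 0 x₀) x = G₀ ⟨x, hx⟩ :=
    fun x hx => Subtype.val_injective.extend_apply G₀ _ ⟨x, hx⟩
  refine ⟨φ, hφ, Function.extend Subtype.val G₀ fun _ => F 0 x₀, ?_, fun x hx => ?_⟩
  · exact continuousOn_iff_continuous_domRestrict.2
      (G₀.continuous.congr fun x => (hext x x.2).symm)
  · rw [hext x hx]
    exact ((continuous_eval_const (⟨x, hx⟩ : s)).tendsto G₀).comp hlim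

theorem exists_flow_of_lipschitzWith {E : Type*} [NormedAddCommGroup E] [NormedSpace ℝ E]
    [CompleteSpace E] {v : ℝ → E → E} {K : ℝ≥0} {L : ℝ}
    (hlip : ∀ t ∈ Icc (0 : ℝ) 1, LipschitzWith K (v t))
    (hcont : ∀ x, ContinuousOn (v · x) (Icc 0 1))
    (hbdd : ∀ t ∈ Icc (0 : ℝ) 1, ∀ x, ‖v t x‖ ≤ L) (x₀ : E) (R : ℝ≥0) :
    ∃ α : E → ℝ → E,
      (∀ x ∈ closedBall x₀ R, α x 0 = x ∧
        ∀ t ∈ Icc (0 : ℝ) 1, HasDerivWithinAt (α x) (v t (α x t)) (Icc 0 1) t) ∧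
      ContinuousOn (α · 1) (closedBall x₀ R) := by
  have hL : 0 ≤ L := (norm_nonneg _).trans (hbdd 0 (left_mem_Icc.2 zero_le_one) x₀)
  have hpl : IsPicardLindelof v (⟨0, left_mem_Icc.2 zero_le_one⟩ : Icc (0 : ℝ) 1) x₀
      (L.toNNReal + R) R L.toNNReal K :=
    { lipschitzOnWith := fun t ht => (hlip t ht).lipschitzOnWith
      continuousOn := fun x _ => hcont x
      norm_le := fun t ht x _ => by simpa only [Real.coe_toNNReal L hL] using hbdd t ht x
      mul_max_le := by simp }
  obtain ⟨α, hα, L', hL'⟩ := hpl.exists_forall_mem_closedBall_eq_hasDerivWithinAt_lipschitzOnWith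
  exact ⟨α, hα, (hL' 1 (right_mem_Icc.2 zero_le_one)).continuousOn⟩

theorem exists_last_zero {g : ℝ → ℝ} {x y : ℝ} (hg : ContinuousOn g (Icc x y)) (hxy : x < y)
    (hx : g x ≤ 0) (hy : 0 < g y) : ∃ a ∈ Ico x y, g a = 0 ∧ ∀ s ∈ Ioc a y, 0 < g s := by
  obtain ⟨a, ⟨⟨hxa, hay⟩, hga⟩, hlast⟩ :=
    (isCompact_Icc.of_isClosed_subset (hg.preimage_isClosed_of_isClosed isClosed_Icc isClosed_Iic)
      inter_subset_left).exists_isGreatest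
      (⟨x, left_mem_Icc.2 hxy.le, hx⟩ : (Icc x y ∩ g ⁻¹' Iic 0).Nonempty)
  have hpos : ∀ s ∈ Ioc a y, 0 < g s := fun s hs => by
    by_contra! hgs
    exact (hlast ⟨⟨hxa.trans hs.1.le, hs.2⟩, hgs⟩).not_gt hs.1
  have hay' : a < y := hay.lt_of_ne (by rintro rfl; exact hy.not_ge hga)
  have hcont : ContinuousWithinAt g (Ioi a) a :=
    (hg a ⟨hxa, hay⟩).mono_of_mem_nhdsWithin (Icc_mem_nhdsGT_of_mem ⟨hxa, hay'⟩)
  refine ⟨a, ⟨hxa, hay'⟩, le_antisymm hga (ge_of_tendsto hcont ?_), hpos⟩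
  filter_upwards [Ioc_mem_nhdsGT hay'] with s hs using (hpos s hs).le

theorem hasDerivWithinAt_Icc_of_eq_integral {F G : ℝ → ℝ} {a b c t : ℝ}
    (hF : ContinuousOn F (Icc a b)) (hG : ∀ t ∈ Icc a b, G t = c + ∫ r in a..t, F r)
    (ht : t ∈ Icc a b) : HasDerivWithinAt G (F t) (Icc a b) t := by
  have : Fact (t ∈ Icc a b) := ⟨ht⟩
  refine (HasDerivWithinAt.const_add c (integral_hasDerivWithinAt_right ?_
    (hF.stronglyMeasurableAtFilter_nhdsWithin measurableSet_Icc t) (hF t ht))).congr hG (hG t ht)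
  exact (hF.mono (Icc_subset_Icc_right ht.2)).intervalIntegrable_of_Icc ht.1

theorem eq_add_integral_of_hasDerivWithinAt_Icc {F G : ℝ → ℝ} {a b t : ℝ}
    (hF : ContinuousOn F (Icc a b)) (hG : ∀ t ∈ Icc a b, HasDerivWithinAt G (F t) (Icc a b) t)
    (ht : t ∈ Icc a b) : G t = G a + ∫ r in a..t, F r := by
  have hsub : Icc a t ⊆ Icc a b := Icc_subset_Icc_right ht.2
  rw [integral_eq_sub_of_hasDerivAt_of_le ht.1
    (fun r hr => (hG r (hsub hr)).continuousWithinAt.mono hsub)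
    (fun r hr => (hG r (hsub (Ioo_subset_Icc_self hr))).hasDerivAt
      (Icc_mem_nhds hr.1 (hr.2.trans_le ht.2)))
    ((hF.mono hsub).intervalIntegrable_of_Icc ht.1), add_sub_cancel]

/-! ### Shooting systems -/

/-- The data of a system `u' = ψ(w / ρ)`, `w' = ρ g(u)` on `[0, 1]`: `slope` is `ψ`, `weight` is
`ρ` and `source` is `g`. For the radial `p`-Laplacian, `ρ(r) = r ^ (N - 1)`, `w = ρ |u'|^(p-2) u'`
and `ψ` is a truncation of the inverse of `y ↦ |y|^(p-2) y`; cutting it off at negative arguments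
makes every profile nondecreasing. -/
structure ShootingSystem where
  slope : ℝ → ℝ
  weight : ℝ → ℝ
  source : ℝ → ℝ
  slopeBound : ℝ
  sourceBound : ℝ
  continuous_slope : Continuous slope
  slope_nonneg : ∀ y, 0 ≤ slope y
  slope_le : ∀ y, slope y ≤ slopeBound
  slope_of_nonpos : ∀ y ≤ 0, slope y = 0
  continuous_weight : Continuous weight
  monotoneOn_weight : MonotoneOn weight (Icc 0 1)
  weight_pos : ∀ r ∈ Ioc (0 : ℝ) 1, 0 < weight r
  continuous_source : Continuous source
  abs_source_le : ∀ s, |source s| ≤ sourceBound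

namespace ShootingSystem

/-- `u` (the profile) and `w` (the flux) solve the system with `w 0 = 0`. The integral form is used
because `w / ρ` need not be continuous at `0` a priori. -/
structure IsSolution (S : ShootingSystem) (u w : ℝ → ℝ) : Prop where
  continuousOn_profile : ContinuousOn u (Icc 0 1)
  continuousOn_flux : ContinuousOn w (Icc 0 1)
  profile_eq : ∀ t ∈ Icc (0 : ℝ) 1, u t = u 0 + ∫ r in 0..t, S.slope (w r / S.weight r)
  flux_eq : ∀ t ∈ Icc (0 : ℝ) 1, w t = ∫ r in 0..t, S.weight r * S.source (u r)

variable {S : ShootingSystem} {u w : ℝ → ℝ} {s t c : ℝ}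

theorem norm_slope_le (S : ShootingSystem) (y : ℝ) : ‖S.slope y‖ ≤ S.slopeBound := by
  simpa only [Real.norm_eq_abs, abs_of_nonneg (S.slope_nonneg y)] using S.slope_le y

theorem weight_le (S : ShootingSystem) {r : ℝ} (hr : r ∈ Icc (0 : ℝ) 1) :
    S.weight r ≤ S.weight 1 :=
  S.monotoneOn_weight hr (right_mem_Icc.2 zero_le_one) hr.2

theorem weight_zero_le (S : ShootingSystem) {r : ℝ} (hr : r ∈ Icc (0 : ℝ) 1) :
    S.weight 0 ≤ S.weight r :=
  S.monotoneOn_weight (left_mem_Icc.2 zero_le_one) hr hr.1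

theorem norm_weight_mul_source_le (S : ShootingSystem) {r : ℝ} (hr : r ∈ Icc (0 : ℝ) 1)
    (hpos : 0 ≤ S.weight r) (s : ℝ) :
    ‖S.weight r * S.source s‖ ≤ S.weight 1 * S.sourceBound := by
  rw [norm_mul, Real.norm_of_nonneg hpos]
  exact mul_le_mul (S.weight_le hr) (S.abs_source_le s) (norm_nonneg _)
    (hpos.trans (S.weight_le hr))

theorem integral_weight_pos (S : ShootingSystem) (hs : 0 ≤ s) (hst : s < t) (ht : t ≤ 1) :
    0 < ∫ r in s..t, S.weight r :=
  intervalIntegral_pos_of_pos_on (S.continuous_weight.intervalIntegrable _ _)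
    (fun r hr => S.weight_pos r ⟨hs.trans_lt hr.1, hr.2.le.trans ht⟩) hst

theorem uIoc_subset_Ioc_zero_one (hs : s ∈ Icc (0 : ℝ) 1) (ht : t ∈ Icc (0 : ℝ) 1) :
    uIoc s t ⊆ Ioc 0 1 :=
  Ioc_subset_Ioc (le_min hs.1 ht.1) (max_le hs.2 ht.2)

namespace IsSolution

theorem flux_zero (h : S.IsSolution u w) : w 0 = 0 := by
  simpa only [integral_same] using h.flux_eq 0 (left_mem_Icc.2 zero_le_one)

theorem intervalIntegrable_slope (h : S.IsSolution u w) (hs : s ∈ Icc (0 : ℝ) 1)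
    (ht : t ∈ Icc (0 : ℝ) 1) :
    IntervalIntegrable (fun r => S.slope (w r / S.weight r)) volume s t := by
  have hcont : ContinuousOn (fun r => S.slope (w r / S.weight r)) (Ioc 0 1) :=
    S.continuous_slope.comp_continuousOn
      ((h.continuousOn_flux.mono Ioc_subset_Icc_self).div S.continuous_weight.continuousOn
        fun r hr => (S.weight_pos r hr).ne')
  have hint : IntegrableOn (fun r => S.slope (w r / S.weight r)) (Ioc 0 1) :=
    IntegrableOn.of_bound measure_Ioc_lt_top (hcont.aestronglyMeasurable measurableSet_Ioc)
      S.slopeBound (.of_forall fun r => S.norm_slope_le _)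
  exact intervalIntegrable_iff.2 (hint.mono_set (uIoc_subset_Ioc_zero_one hs ht))

theorem continuousOn_source (h : S.IsSolution u w) :
    ContinuousOn (fun r => S.weight r * S.source (u r)) (Icc 0 1) :=
  S.continuous_weight.continuousOn.mul
    (S.continuous_source.comp_continuousOn h.continuousOn_profile)

theorem intervalIntegrable_source (h : S.IsSolution u w) (hs : s ∈ Icc (0 : ℝ) 1)
    (ht : t ∈ Icc (0 : ℝ) 1) :
    IntervalIntegrable (fun r => S.weight r * S.source (u r)) volume s t :=
  (h.continuousOn_source.mono (uIcc_subset_Icc hs ht)).intervalIntegrable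

theorem profile_sub (h : S.IsSolution u w) (hs : s ∈ Icc (0 : ℝ) 1) (ht : t ∈ Icc (0 : ℝ) 1) :
    u t - u s = ∫ r in s..t, S.slope (w r / S.weight r) := by
  have h0 : (0 : ℝ) ∈ Icc (0 : ℝ) 1 := left_mem_Icc.2 zero_le_one
  rw [h.profile_eq t ht, h.profile_eq s hs, add_sub_add_left_eq_sub,
    integral_interval_sub_left (h.intervalIntegrable_slope h0 ht)
      (h.intervalIntegrable_slope h0 hs)]

theorem flux_sub (h : S.IsSolution u w) (hs : s ∈ Icc (0 : ℝ) 1) (ht : t ∈ Icc (0 : ℝ) 1) :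
    w t - w s = ∫ r in s..t, S.weight r * S.source (u r) := by
  have h0 : (0 : ℝ) ∈ Icc (0 : ℝ) 1 := left_mem_Icc.2 zero_le_one
  rw [h.flux_eq t ht, h.flux_eq s hs, integral_interval_sub_left
    (h.intervalIntegrable_source h0 ht) (h.intervalIntegrable_source h0 hs)]

theorem mul_sub_le_profile_sub (h : S.IsSolution u w) (hs : 0 ≤ s) (hst : s ≤ t) (ht : t ≤ 1)
    (hc : ∀ r ∈ Ioo s t, c ≤ S.slope (w r / S.weight r)) : c * (t - s) ≤ u t - u s := by
  have hs' : s ∈ Icc (0 : ℝ) 1 := ⟨hs, hst.trans ht⟩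
  have ht' : t ∈ Icc (0 : ℝ) 1 := ⟨hs.trans hst, ht⟩
  rw [h.profile_sub hs' ht']
  simpa only [intervalIntegral.integral_const, smul_eq_mul, mul_comm c] using
    integral_mono_on_of_le_Ioo hst intervalIntegrable_const (h.intervalIntegrable_slope hs' ht') hc

theorem profile_sub_le_mul_sub (h : S.IsSolution u w) (hs : 0 ≤ s) (hst : s ≤ t) (ht : t ≤ 1)
    (hc : ∀ r ∈ Ioo s t, S.slope (w r / S.weight r) ≤ c) : u t - u s ≤ c * (t - s) := by
  have hs' : s ∈ Icc (0 : ℝ) 1 := ⟨hs, hst.trans ht⟩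
  have ht' : t ∈ Icc (0 : ℝ) 1 := ⟨hs.trans hst, ht⟩
  rw [h.profile_sub hs' ht']
  simpa only [intervalIntegral.integral_const, smul_eq_mul, mul_comm c] using
    integral_mono_on_of_le_Ioo hst (h.intervalIntegrable_slope hs' ht') intervalIntegrable_const hc

theorem mul_integral_le_flux_sub (h : S.IsSolution u w) (hs : 0 ≤ s) (hst : s ≤ t) (ht : t ≤ 1)
    (hc : ∀ r ∈ Ioo s t, c ≤ S.source (u r)) : c * ∫ r in s..t, S.weight r ≤ w t - w s := by
  have hs' : s ∈ Icc (0 : ℝ) 1 := ⟨hs, hst.trans ht⟩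
  have ht' : t ∈ Icc (0 : ℝ) 1 := ⟨hs.trans hst, ht⟩
  rw [h.flux_sub hs' ht', mul_comm, ← intervalIntegral.integral_mul_const]
  refine integral_mono_on_of_le_Ioo hst ((S.continuous_weight.intervalIntegrable _ _).mul_const c)
    (h.intervalIntegrable_source hs' ht') fun r hr => ?_
  exact mul_le_mul_of_nonneg_left (hc r hr)
    (S.weight_pos r ⟨hs.trans_lt hr.1, hr.2.le.trans ht⟩).le

theorem flux_sub_le_mul_integral (h : S.IsSolution u w) (hs : 0 ≤ s) (hst : s ≤ t) (ht : t ≤ 1)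
    (hc : ∀ r ∈ Ioo s t, S.source (u r) ≤ c) : w t - w s ≤ c * ∫ r in s..t, S.weight r := by
  have hs' : s ∈ Icc (0 : ℝ) 1 := ⟨hs, hst.trans ht⟩
  have ht' : t ∈ Icc (0 : ℝ) 1 := ⟨hs.trans hst, ht⟩
  rw [h.flux_sub hs' ht', mul_comm, ← intervalIntegral.integral_mul_const]
  refine integral_mono_on_of_le_Ioo hst (h.intervalIntegrable_source hs' ht')
    ((S.continuous_weight.intervalIntegrable _ _).mul_const c) fun r hr => ?_
  exact mul_le_mul_of_nonneg_left (hc r hr)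
    (S.weight_pos r ⟨hs.trans_lt hr.1, hr.2.le.trans ht⟩).le

theorem monotoneOn_profile (h : S.IsSolution u w) : MonotoneOn u (Icc 0 1) :=
  fun s hs t ht hst => by
    simpa using h.mul_sub_le_profile_sub hs.1 hst ht.2 fun r _ => S.slope_nonneg _

theorem profile_eq_of_flux_nonpos (h : S.IsSolution u w) (hs : 0 ≤ s) (hst : s ≤ t) (ht : t ≤ 1)
    (hw : ∀ r ∈ Ioo s t, w r ≤ 0) : u t = u s := by
  refine le_antisymm ?_ (h.monotoneOn_profile ⟨hs, hst.trans ht⟩ ⟨hs.trans hst, ht⟩ hst)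
  have := h.profile_sub_le_mul_sub (c := 0) hs hst ht fun r hr =>
    (S.slope_of_nonpos _ (div_nonpos_of_nonpos_of_nonneg (hw r hr)
      (S.weight_pos r ⟨hs.trans_lt hr.1, hr.2.le.trans ht⟩).le)).le
  linarith

theorem exists_flux_pos_of_profile_lt (h : S.IsSolution u w) (hs : 0 ≤ s) (hst : s ≤ t)
    (ht : t ≤ 1) (hu : u s < u t) : ∃ r ∈ Ioo s t, 0 < w r := by
  by_contra! hw
  exact hu.ne' (h.profile_eq_of_flux_nonpos hs hst ht hw)

theorem flux_le_of_source_nonneg (h : S.IsSolution u w) (hs : 0 ≤ s) (hst : s ≤ t) (ht : t ≤ 1)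
    (hg : ∀ r ∈ Ioo s t, 0 ≤ S.source (u r)) : w s ≤ w t := by
  simpa using h.mul_integral_le_flux_sub hs hst ht hg

theorem flux_le_of_source_nonpos (h : S.IsSolution u w) (hs : 0 ≤ s) (hst : s ≤ t) (ht : t ≤ 1)
    (hg : ∀ r ∈ Ioo s t, S.source (u r) ≤ 0) : w t ≤ w s := by
  simpa using h.flux_sub_le_mul_integral hs hst ht hg

theorem flux_div_weight_le (h : S.IsSolution u w) (hc : 0 ≤ c) (ht : t ∈ Ioc (0 : ℝ) 1)
    (hg : ∀ r ∈ Ioo 0 t, S.source (u r) ≤ c) : w t / S.weight t ≤ c * t := by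
  have hweight : ∫ r in (0 : ℝ)..t, S.weight r ≤ t * S.weight t := by
    simpa using integral_mono_on ht.1.le (S.continuous_weight.intervalIntegrable 0 t)
      (intervalIntegrable_const (μ := volume)) fun r hr => S.monotoneOn_weight
        ⟨hr.1, hr.2.trans ht.2⟩ (Ioc_subset_Icc_self ht) hr.2
  have hflux := h.flux_sub_le_mul_integral le_rfl ht.1.le ht.2 hg
  rw [h.flux_zero, sub_zero] at hflux
  rw [div_le_iff₀ (S.weight_pos t ht)]
  calc w t ≤ c * ∫ r in (0 : ℝ)..t, S.weight r := hflux
    _ ≤ c * (t * S.weight t) := by gcongr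
    _ = c * t * S.weight t := (mul_assoc _ _ _).symm

theorem hasDerivWithinAt_profile (h : S.IsSolution u w)
    (hcont : ContinuousOn (fun r => w r / S.weight r) (Icc 0 1)) (ht : t ∈ Icc (0 : ℝ) 1) :
    HasDerivWithinAt u (S.slope (w t / S.weight t)) (Icc 0 1) t :=
  hasDerivWithinAt_Icc_of_eq_integral (S.continuous_slope.comp_continuousOn hcont) h.profile_eq ht

theorem hasDerivWithinAt_flux (h : S.IsSolution u w) (ht : t ∈ Icc (0 : ℝ) 1) :
    HasDerivWithinAt w (S.weight t * S.source (u t)) (Icc 0 1) t :=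
  hasDerivWithinAt_Icc_of_eq_integral (c := 0) h.continuousOn_source
    (fun t ht => by rw [zero_add, h.flux_eq t ht]) ht

theorem hasDerivAt_flux (h : S.IsSolution u w) (ht : t ∈ Ioo (0 : ℝ) 1) :
    HasDerivAt w (S.weight t * S.source (u t)) t :=
  (h.hasDerivWithinAt_flux (Ioo_subset_Icc_self ht)).hasDerivAt (Icc_mem_nhds ht.1 ht.2)

-- At a negative minimum of `w` the source vanishes; but `u` has not moved since `w` was last zero,
-- so `w` has not moved either.
theorem flux_nonneg (h : S.IsSolution u w) (hw : 0 ≤ w 1) (ht : t ∈ Icc (0 : ℝ) 1) : 0 ≤ w t := by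
  obtain ⟨m, hm, hmin⟩ := isCompact_Icc.exists_isMinOn ⟨t, ht⟩ h.continuousOn_flux
  refine le_trans (not_lt.1 fun hneg => ?_) (hmin ht)
  have hm' : m ∈ Ioo (0 : ℝ) 1 :=
    ⟨hm.1.lt_of_ne (by rintro rfl; exact hneg.ne h.flux_zero),
      hm.2.lt_of_ne (by rintro rfl; exact hw.not_gt hneg)⟩
  have hsource : S.source (u m) = 0 := by
    have hderiv := (hmin.isLocalMin (Icc_mem_nhds hm'.1 hm'.2)).hasDerivAt_eq_zero
      (h.hasDerivAt_flux hm')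
    exact (mul_eq_zero.1 hderiv).resolve_left (S.weight_pos m (Ioo_subset_Ioc_self hm')).ne'
  obtain ⟨s, hs, hws, hlast⟩ := exists_last_zero
    (h.continuousOn_flux.mono (Icc_subset_Icc_right hm.2)).neg hm'.1
    (neg_nonpos.2 h.flux_zero.ge) (neg_pos.2 hneg)
  have hconst : ∀ r ∈ Ioo s m, u m = u r := fun r hr =>
    h.profile_eq_of_flux_nonpos (hs.1.trans hr.1.le) hr.2.le hm.2 fun x hx =>
      (neg_pos.1 (hlast x ⟨hr.1.trans hx.1, hx.2.le⟩)).le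
  have hle : w s ≤ w m := h.flux_le_of_source_nonneg hs.1 hs.2.le hm.2 fun r hr => by
    rw [← hconst r hr, hsource]
  exact hneg.not_ge ((neg_eq_zero.1 hws).ge.trans hle)

theorem continuousOn_flux_div_weight (h : S.IsSolution u w) (hw : 0 ≤ w 1) :
    ContinuousOn (fun r => w r / S.weight r) (Icc 0 1) := by
  have hbound : 0 ≤ S.sourceBound := (abs_nonneg _).trans (S.abs_source_le 0)
  intro t ht
  rcases ht.1.eq_or_lt with rfl | htpos
  · have hzero : w 0 / S.weight 0 = 0 := by rw [h.flux_zero, zero_div]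
    have hlinear : Tendsto (fun r => S.sourceBound * r) (𝓝[Icc 0 1] 0) (𝓝 0) :=
      ((continuous_const_mul _).tendsto' 0 0 (mul_zero _)).mono_left nhdsWithin_le_nhds
    rw [ContinuousWithinAt, hzero]
    refine tendsto_of_tendsto_of_tendsto_of_le_of_le' tendsto_const_nhds hlinear ?_ ?_ <;>
      filter_upwards [self_mem_nhdsWithin] with r hr <;> rcases hr.1.eq_or_lt with rfl | hrpos
    · exact hzero.ge
    · exact div_nonneg (h.flux_nonneg hw hr) (S.weight_pos r ⟨hrpos, hr.2⟩).le
    · rw [hzero, mul_zero]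
    · exact h.flux_div_weight_le hbound ⟨hrpos, hr.2⟩ fun x _ => le_of_abs_le (S.abs_source_le _)
  · exact (h.continuousOn_flux t ht).div S.continuous_weight.continuousWithinAt
      (S.weight_pos t ⟨htpos, ht.2⟩).ne'

theorem lipschitzOnWith_profile (h : S.IsSolution u w) :
    LipschitzOnWith S.slopeBound.toNNReal u (Icc 0 1) := by
  refine LipschitzOnWith.of_dist_le' fun t ht s hs => ?_
  rw [dist_eq_norm, Real.dist_eq, h.profile_sub hs ht]
  exact intervalIntegral.norm_integral_le_of_norm_le_const fun r _ => S.norm_slope_le _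

theorem lipschitzOnWith_flux (h : S.IsSolution u w) :
    LipschitzOnWith (S.weight 1 * S.sourceBound).toNNReal w (Icc 0 1) := by
  refine LipschitzOnWith.of_dist_le' fun t ht s hs => ?_
  rw [dist_eq_norm, Real.dist_eq, h.flux_sub hs ht]
  refine intervalIntegral.norm_integral_le_of_norm_le_const fun r hr => ?_
  have hr := uIoc_subset_Ioc_zero_one hs ht hr
  exact S.norm_weight_mul_source_le (Ioc_subset_Icc_self hr) (S.weight_pos r hr).le _

theorem flux_one_pos (h : S.IsSolution u w) {a z : ℝ} (hpos : ∀ s ∈ Ioo a z, 0 < S.source s)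
    (hu0 : a < u 0) (hu1 : u 1 < z) : 0 < w 1 := by
  have h0 : (0 : ℝ) ∈ Icc (0 : ℝ) 1 := left_mem_Icc.2 zero_le_one
  have h1 : (1 : ℝ) ∈ Icc (0 : ℝ) 1 := right_mem_Icc.2 zero_le_one
  obtain ⟨x, hx, hmin⟩ := isCompact_Icc.exists_isMinOn
    (nonempty_Icc.2 (h.monotoneOn_profile h0 h1 zero_le_one)) S.continuous_source.continuousOn
  have hflux := h.mul_integral_le_flux_sub le_rfl zero_le_one le_rfl fun r hr =>
    hmin ⟨h.monotoneOn_profile h0 (Ioo_subset_Icc_self hr) hr.1.le,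
      h.monotoneOn_profile (Ioo_subset_Icc_self hr) h1 hr.2.le⟩
  rw [h.flux_zero, sub_zero] at hflux
  exact (mul_pos (hpos x ⟨hu0.trans_le hx.1, hx.2.trans_lt hu1⟩)
    (S.integral_weight_pos le_rfl zero_lt_one le_rfl)).trans_le hflux

end IsSolution
end ShootingSystem

/-! ### Limits of shooting systems -/

namespace ShootingSystem

/-- Convergence of systems under which limits of solutions are solutions: the slopes and the
sources converge continuously, the weights pointwise, and the Lipschitz constants of the solutions
stay bounded. -/
structure ConvergesTo (S : ℕ → ShootingSystem) (S₀ : ShootingSystem) : Prop where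
  tendsto_slope : ∀ y,
    Tendsto (fun x : ℕ × ℝ => (S x.1).slope x.2) (atTop ×ˢ 𝓝 y) (𝓝 (S₀.slope y))
  tendsto_weight : ∀ r ∈ Ioc (0 : ℝ) 1,
    Tendsto (fun n => (S n).weight r) atTop (𝓝 (S₀.weight r))
  tendsto_source : ∀ y,
    Tendsto (fun x : ℕ × ℝ => (S x.1).source x.2) (atTop ×ˢ 𝓝 y) (𝓝 (S₀.source y))
  exists_bound : ∃ D, ∀ n, (S n).slopeBound ≤ D ∧ (S n).weight 1 * (S n).sourceBound ≤ D

namespace ConvergesTo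

variable {S : ℕ → ShootingSystem} {S₀ : ShootingSystem} {u w : ℕ → ℝ → ℝ} {U W : ℝ → ℝ}

theorem comp (hS : ConvergesTo S S₀) {φ : ℕ → ℕ} (hφ : Tendsto φ atTop atTop) :
    ConvergesTo (S ∘ φ) S₀ where
  tendsto_slope y := (hS.tendsto_slope y).comp (hφ.prodMap tendsto_id)
  tendsto_weight r hr := (hS.tendsto_weight r hr).comp hφ
  tendsto_source y := (hS.tendsto_source y).comp (hφ.prodMap tendsto_id)
  exists_bound := hS.exists_bound.imp fun _ hD n => hD (φ n)

theorem tendsto_integral_slope (hS : ConvergesTo S S₀) (h : ∀ n, (S n).IsSolution (u n) (w n))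
    (hw : ∀ t ∈ Icc (0 : ℝ) 1, Tendsto (w · t) atTop (𝓝 (W t))) {t : ℝ} (ht : t ∈ Icc (0 : ℝ) 1) :
    Tendsto (fun n => ∫ r in 0..t, (S n).slope (w n r / (S n).weight r)) atTop
      (𝓝 (∫ r in 0..t, S₀.slope (W r / S₀.weight r))) := by
  obtain ⟨D, hD⟩ := hS.exists_bound
  have h0 : (0 : ℝ) ∈ Icc (0 : ℝ) 1 := left_mem_Icc.2 zero_le_one
  refine intervalIntegral.tendsto_integral_filter_of_dominated_convergence (fun _ => D)
    (.of_forall fun n => ((h n).intervalIntegrable_slope h0 ht).def'.aestronglyMeasurable)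
    (.of_forall fun n => .of_forall fun r _ => ((S n).norm_slope_le _).trans (hD n).1)
    intervalIntegrable_const (.of_forall fun r hr => ?_)
  have hr := uIoc_subset_Ioc_zero_one h0 ht hr
  exact (hS.tendsto_slope _).comp (tendsto_id.prodMk
    ((hw r (Ioc_subset_Icc_self hr)).div (hS.tendsto_weight r hr) (S₀.weight_pos r hr).ne'))

theorem tendsto_integral_source (hS : ConvergesTo S S₀) (h : ∀ n, (S n).IsSolution (u n) (w n))
    (hu : ∀ t ∈ Icc (0 : ℝ) 1, Tendsto (u · t) atTop (𝓝 (U t))) {t : ℝ} (ht : t ∈ Icc (0 : ℝ) 1) :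
    Tendsto (fun n => ∫ r in 0..t, (S n).weight r * (S n).source (u n r)) atTop
      (𝓝 (∫ r in 0..t, S₀.weight r * S₀.source (U r))) := by
  obtain ⟨D, hD⟩ := hS.exists_bound
  have h0 : (0 : ℝ) ∈ Icc (0 : ℝ) 1 := left_mem_Icc.2 zero_le_one
  refine intervalIntegral.tendsto_integral_filter_of_dominated_convergence (fun _ => D)
    (.of_forall fun n => ((h n).intervalIntegrable_source h0 ht).def'.aestronglyMeasurable)
    (.of_forall fun n => .of_forall fun r hr => ?_)
    intervalIntegrable_const (.of_forall fun r hr => ?_)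
  · have hr := uIoc_subset_Ioc_zero_one h0 ht hr
    exact ((S n).norm_weight_mul_source_le (Ioc_subset_Icc_self hr)
      ((S n).weight_pos r hr).le _).trans (hD n).2
  · have hr := uIoc_subset_Ioc_zero_one h0 ht hr
    exact (hS.tendsto_weight r hr).mul
      ((hS.tendsto_source _).comp (tendsto_id.prodMk (hu r (Ioc_subset_Icc_self hr))))

theorem isSolution_of_tendsto (hS : ConvergesTo S S₀) (h : ∀ n, (S n).IsSolution (u n) (w n))
    (hU : ContinuousOn U (Icc 0 1)) (hW : ContinuousOn W (Icc 0 1))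
    (hu : ∀ t ∈ Icc (0 : ℝ) 1, Tendsto (u · t) atTop (𝓝 (U t)))
    (hw : ∀ t ∈ Icc (0 : ℝ) 1, Tendsto (w · t) atTop (𝓝 (W t))) : S₀.IsSolution U W where
  continuousOn_profile := hU
  continuousOn_flux := hW
  profile_eq t ht := tendsto_nhds_unique (hu t ht)
    (((hu 0 (left_mem_Icc.2 zero_le_one)).add (hS.tendsto_integral_slope h hw ht)).congr
      fun n => ((h n).profile_eq t ht).symm)
  flux_eq t ht := tendsto_nhds_unique (hw t ht)
    ((hS.tendsto_integral_source h hu ht).congr fun n => ((h n).flux_eq t ht).symm)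

theorem exists_subseq_tendsto_isSolution (hS : ConvergesTo S S₀)
    (h : ∀ n, (S n).IsSolution (u n) (w n))
    (hbdd : Bornology.IsBounded (range fun n => u n 0)) :
    ∃ φ : ℕ → ℕ, ∃ U W, S₀.IsSolution U W ∧
      (∀ t ∈ Icc (0 : ℝ) 1, Tendsto (fun n => u (φ n) t) atTop (𝓝 (U t))) ∧
      ∀ t ∈ Icc (0 : ℝ) 1, Tendsto (fun n => w (φ n) t) atTop (𝓝 (W t)) := by
  obtain ⟨D, hD⟩ := hS.exists_bound
  have h0 : (0 : ℝ) ∈ Icc (0 : ℝ) 1 := left_mem_Icc.2 zero_le_one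
  have hlip : ∀ n, LipschitzOnWith D.toNNReal (fun t => (u n t, w n t)) (Icc 0 1) := fun n => by
    simpa only [max_self] using
      ((h n).lipschitzOnWith_profile.weaken (Real.toNNReal_le_toNNReal (hD n).1)).prodMk
        ((h n).lipschitzOnWith_flux.weaken (Real.toNNReal_le_toNNReal (hD n).2))
  have hbdd' : Bornology.IsBounded (range fun n => (u n 0, w n 0)) := by
    refine (hbdd.prod (Bornology.isBounded_singleton (x := (0 : ℝ)))).subset ?_
    rintro _ ⟨n, rfl⟩
    exact ⟨mem_range_self n, (h n).flux_zero⟩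
  obtain ⟨φ, hφ, F, hF, hlim⟩ :=
    exists_subseq_tendsto_of_lipschitzOnWith isCompact_Icc h0 hlip hbdd'
  have hU : ∀ t ∈ Icc (0 : ℝ) 1, Tendsto (fun n => u (φ n) t) atTop (𝓝 (F t).1) :=
    fun t ht => (hlim t ht).fst_nhds
  have hW : ∀ t ∈ Icc (0 : ℝ) 1, Tendsto (fun n => w (φ n) t) atTop (𝓝 (F t).2) :=
    fun t ht => (hlim t ht).snd_nhds
  exact ⟨φ, fun t => (F t).1, fun t => (F t).2,
    (hS.comp hφ.tendsto_atTop).isSolution_of_tendsto (fun n => h (φ n)) hF.fst hF.snd hU hW,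
    hU, hW⟩

end ConvergesTo

/-- The systems covered by the Picard–Lindelöf theorem. -/
structure IsRegular (S : ShootingSystem) : Prop where
  exists_lipschitzWith_slope : ∃ K, LipschitzWith K S.slope
  exists_lipschitzWith_source : ∃ K, LipschitzWith K S.source
  weight_zero_pos : 0 < S.weight 0

/-- The time-dependent vector field whose integral curves are the pairs `(u, w)`. -/
noncomputable def vectorField (S : ShootingSystem) (t : ℝ) (x : ℝ × ℝ) : ℝ × ℝ :=
  (S.slope (x.2 / S.weight t), S.weight t * S.source x.1)

namespace IsRegular

variable {S : ShootingSystem} {u w : ℝ → ℝ} {a d z t : ℝ}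

theorem weight_pos (hS : S.IsRegular) (ht : t ∈ Icc (0 : ℝ) 1) : 0 < S.weight t :=
  hS.weight_zero_pos.trans_le (S.weight_zero_le ht)

theorem norm_vectorField_le (hS : S.IsRegular) (ht : t ∈ Icc (0 : ℝ) 1) (x : ℝ × ℝ) :
    ‖S.vectorField t x‖ ≤ max S.slopeBound (S.weight 1 * S.sourceBound) :=
  max_le_max (S.norm_slope_le _) (S.norm_weight_mul_source_le ht (hS.weight_pos ht).le _)

theorem exists_lipschitzWith_vectorField (hS : S.IsRegular) :
    ∃ K, ∀ t ∈ Icc (0 : ℝ) 1, LipschitzWith K (S.vectorField t) := by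
  obtain ⟨K₁, hK₁⟩ := hS.exists_lipschitzWith_slope
  obtain ⟨K₂, hK₂⟩ := hS.exists_lipschitzWith_source
  refine ⟨max (K₁ * (S.weight 0)⁻¹.toNNReal) ((S.weight 1).toNNReal * K₂), fun t ht => ?_⟩
  have hpos := hS.weight_pos ht
  have hdiv : LipschitzWith (S.weight 0)⁻¹.toNNReal fun x : ℝ × ℝ => x.2 / S.weight t :=
    LipschitzWith.of_dist_le' fun x y => by
      rw [Real.dist_eq, ← sub_div, abs_div, abs_of_pos hpos, div_eq_inv_mul]
      gcongr
      · exact inv_nonneg.2 hS.weight_zero_pos.le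
      · exact hS.weight_zero_pos
      · exact S.weight_zero_le ht
      · exact le_max_right _ _
  have hmul : LipschitzWith (S.weight 1).toNNReal fun s : ℝ => S.weight t * s :=
    LipschitzWith.of_dist_le' fun x y => by
      rw [Real.dist_eq, ← mul_sub, abs_mul, abs_of_pos hpos, Real.dist_eq]
      exact mul_le_mul_of_nonneg_right (S.weight_le ht) (abs_nonneg _)
  rw [← mul_one ((S.weight 1).toNNReal * K₂)]
  exact (hK₁.comp hdiv).prodMk ((hmul.comp hK₂).comp LipschitzWith.prod_fst)

theorem continuousOn_vectorField (hS : S.IsRegular) {x : ℝ → ℝ × ℝ}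
    (hx : ContinuousOn x (Icc 0 1)) : ContinuousOn (fun t => S.vectorField t (x t)) (Icc 0 1) :=
  (S.continuous_slope.comp_continuousOn (hx.snd.div S.continuous_weight.continuousOn
    fun _ ht => (hS.weight_pos ht).ne')).prodMk
    (S.continuous_weight.continuousOn.mul (S.continuous_source.comp_continuousOn hx.fst))

theorem isSolution_of_hasDerivWithinAt (hS : S.IsRegular) {x : ℝ → ℝ × ℝ} (hx0 : (x 0).2 = 0)
    (hx : ∀ t ∈ Icc (0 : ℝ) 1, HasDerivWithinAt x (S.vectorField t (x t)) (Icc 0 1) t) :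
    S.IsSolution (fun t => (x t).1) (fun t => (x t).2) := by
  have hcont : ContinuousOn x (Icc 0 1) := fun t ht => (hx t ht).continuousWithinAt
  have hfield := hS.continuousOn_vectorField hcont
  refine ⟨hcont.fst, hcont.snd, fun t ht => ?_, fun t ht => ?_⟩
  · exact eq_add_integral_of_hasDerivWithinAt_Icc hfield.fst (fun t ht => (hx t ht).fst) ht
  · refine (eq_add_integral_of_hasDerivWithinAt_Icc hfield.snd
      (fun t ht => (hx t ht).snd) ht).trans ?_
    rw [hx0, zero_add]
    rfl

theorem hasDerivWithinAt_of_isSolution (hS : S.IsRegular) (h : S.IsSolution u w)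
    (ht : t ∈ Icc (0 : ℝ) 1) :
    HasDerivWithinAt (fun t => (u t, w t)) (S.vectorField t (u t, w t)) (Icc 0 1) t :=
  (h.hasDerivWithinAt_profile (h.continuousOn_flux.div S.continuous_weight.continuousOn
    fun _ ht => (hS.weight_pos ht).ne') ht).prodMk (h.hasDerivWithinAt_flux ht)

theorem exists_solutions_continuousOn (hS : S.IsRegular) (had : a ≤ d) :
    ∃ u w : ℝ → ℝ → ℝ, (∀ e ∈ Icc a d, S.IsSolution (u e) (w e) ∧ u e 0 = e) ∧
      ContinuousOn (u · 1) (Icc a d) ∧ ContinuousOn (w · 1) (Icc a d) := by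
  obtain ⟨K, hK⟩ := hS.exists_lipschitzWith_vectorField
  obtain ⟨α, hα, hcont⟩ := exists_flow_of_lipschitzWith hK
    (fun x => hS.continuousOn_vectorField (x := fun _ => x) continuousOn_const)
    (fun t ht x => hS.norm_vectorField_le ht x) (a, 0) (d - a).toNNReal
  have hmem : ∀ e ∈ Icc a d, ((e, 0) : ℝ × ℝ) ∈ closedBall (a, 0) (d - a).toNNReal :=
    fun e he => by
      rw [mem_closedBall, Prod.dist_eq, Real.coe_toNNReal _ (sub_nonneg.2 had), dist_self,
        Real.dist_eq, abs_of_nonneg (sub_nonneg.2 he.1)]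
      exact max_le (by linarith [he.2]) (sub_nonneg.2 had)
  have hcont' : ContinuousOn (fun e : ℝ => α (e, 0) 1) (Icc a d) :=
    hcont.comp (f := fun e : ℝ => ((e, 0) : ℝ × ℝ)) (by fun_prop) hmem
  refine ⟨fun e t => (α (e, 0) t).1, fun e t => (α (e, 0) t).2, fun e he => ?_,
    hcont'.fst, hcont'.snd⟩
  obtain ⟨hinit, hderiv⟩ := hα _ (hmem e he)
  exact ⟨hS.isSolution_of_hasDerivWithinAt (congrArg Prod.snd hinit) hderiv,
    congrArg Prod.fst hinit⟩

theorem profile_one_eq_of_source_eq_zero (hS : S.IsRegular) (h : S.IsSolution u w)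
    (hzero : S.source (u 0) = 0) : u 1 = u 0 := by
  obtain ⟨K, hK⟩ := hS.exists_lipschitzWith_vectorField
  have hstationary : ∀ t, S.vectorField t (u 0, 0) = 0 := fun t => by
    simp only [vectorField, hzero, mul_zero, zero_div, S.slope_of_nonpos 0 le_rfl,
      Prod.mk_zero_zero]
  have heq := ODE_solution_unique_of_mem_Icc_right (v := S.vectorField) (s := fun _ => univ)
    (f := fun t => (u t, w t)) (g := fun _ => (u 0, 0))
    (fun t ht => (hK t (Ico_subset_Icc_self ht)).lipschitzOnWith)
    (h.continuousOn_profile.prodMk h.continuousOn_flux)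
    (fun t ht => (hS.hasDerivWithinAt_of_isSolution h
      (Ico_subset_Icc_self ht)).mono_of_mem_nhdsWithin (Icc_mem_nhdsGE_of_mem ht))
    (fun _ _ => mem_univ _) continuousOn_const
    (fun t _ => by rw [hstationary]; exact hasDerivWithinAt_const _ _ _)
    (fun _ _ => mem_univ _) (Prod.ext rfl h.flux_zero)
  exact congrArg Prod.fst (heq (right_mem_Icc.2 zero_le_one))

theorem exists_flux_one_eq_zero (hS : S.IsRegular) (had : a < d) (haz : a < z)
    (ha : S.source a = 0) (hpos : ∀ s ∈ Ioo a z, 0 < S.source s)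
    (hneg : ∀ u w, S.IsSolution u w → u 0 = d → w 1 < 0) :
    ∃ u w, S.IsSolution u w ∧ w 1 = 0 ∧ u 0 ∈ Icc a d ∧ z ≤ u 1 := by
  obtain ⟨u, w, hsol, hu, hw⟩ := hS.exists_solutions_continuousOn had.le
  obtain ⟨e, he, hue⟩ : ∃ e ∈ Ioo a d, u e 1 < z := by
    obtain ⟨hsola, ha0⟩ := hsol a (left_mem_Icc.2 had.le)
    have hua : u a 1 < z := by
      rwa [hS.profile_one_eq_of_source_eq_zero hsola (by rwa [ha0]), ha0]
    have hnear := ((hu a (left_mem_Icc.2 had.le)).mono Ioo_subset_Icc_self).eventually_lt_const hua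
    rw [nhdsWithin_Ioo_eq_nhdsGT had] at hnear
    exact (Filter.Eventually.and (Ioo_mem_nhdsGT had) hnear).exists
  have hsole := hsol e (Ioo_subset_Icc_self he)
  have hwe : 0 < w e 1 := hsole.1.flux_one_pos hpos (by rw [hsole.2]; exact he.1) hue
  have hsold := hsol d (right_mem_Icc.2 had.le)
  obtain ⟨x, hx, hwx⟩ := intermediate_value_Icc' he.2.le
    (hw.mono (Icc_subset_Icc_left he.1.le)) ⟨(hneg _ _ hsold.1 hsold.2).le, hwe.le⟩
  have hax : a < x := he.1.trans_le hx.1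
  obtain ⟨hsolx, hx0⟩ := hsol x ⟨hax.le, hx.2⟩
  refine ⟨u x, w x, hsolx, hwx, by rw [hx0]; exact ⟨hax.le, hx.2⟩, not_lt.1 fun hlt => ?_⟩
  exact (hsolx.flux_one_pos hpos (by rwa [hx0]) hlt).ne' hwx

end IsRegular

namespace ConvergesTo

variable {S : ℕ → ShootingSystem} {S₀ : ShootingSystem} {a d z : ℝ}

theorem eventually_flux_one_neg (hS : ConvergesTo S S₀)
    (hneg : ∀ u w, S₀.IsSolution u w → u 0 = d → w 1 < 0) :
    ∀ᶠ n in atTop, ∀ u w, (S n).IsSolution u w → u 0 = d → w 1 < 0 := by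
  by_contra hfreq
  obtain ⟨φ, hφ, hbad⟩ := extraction_of_frequently_atTop (not_eventually.1 hfreq)
  push Not at hbad
  choose u w hsol hu0 hw1 using hbad
  obtain ⟨ψ, U, W, hlim, hU, hW⟩ :=
    (hS.comp hφ.tendsto_atTop).exists_subseq_tendsto_isSolution hsol
      (by simp only [hu0, range_const, Bornology.isBounded_singleton])
  have hU0 : U 0 = d := tendsto_nhds_unique (hU 0 (left_mem_Icc.2 zero_le_one))
    (by simp only [hu0, tendsto_const_nhds])
  exact (hneg U W hlim hU0).not_ge
    (ge_of_tendsto' (hW 1 (right_mem_Icc.2 zero_le_one)) fun n => hw1 (ψ n))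

theorem exists_flux_one_eq_zero (hS : ConvergesTo S S₀) (hreg : ∀ n, (S n).IsRegular)
    (had : a < d) (haz : a < z) (ha : ∀ n, (S n).source a = 0)
    (hpos : ∀ n, ∀ s ∈ Ioo a z, 0 < (S n).source s)
    (hneg : ∀ u w, S₀.IsSolution u w → u 0 = d → w 1 < 0) :
    ∃ u w, S₀.IsSolution u w ∧ w 1 = 0 ∧ u 0 ∈ Icc a d ∧ z ≤ u 1 := by
  have h0 : (0 : ℝ) ∈ Icc (0 : ℝ) 1 := left_mem_Icc.2 zero_le_one
  have h1 : (1 : ℝ) ∈ Icc (0 : ℝ) 1 := right_mem_Icc.2 zero_le_one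
  obtain ⟨φ, hφ, hnegφ⟩ := extraction_of_eventually_atTop (hS.eventually_flux_one_neg hneg)
  choose u w hsol hw1 hu0 hu1 using fun n =>
    (hreg (φ n)).exists_flux_one_eq_zero had haz (ha _) (hpos _) (hnegφ n)
  obtain ⟨ψ, U, W, hlim, hU, hW⟩ :=
    (hS.comp hφ.tendsto_atTop).exists_subseq_tendsto_isSolution hsol
      ((isBounded_Icc a d).subset (range_subset_iff.2 hu0))
  exact ⟨U, W, hlim, tendsto_nhds_unique (hW 1 h1) (by simp only [hw1, tendsto_const_nhds]),
    isClosed_Icc.mem_of_tendsto (hU 0 h0) (.of_forall fun n => hu0 (ψ n)),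
    ge_of_tendsto' (hU 1 h1) fun n => hu1 (ψ n)⟩

end ConvergesTo
end ShootingSystem

/-! ### Shooting from just below a downward crossing -/

/-- `g` changes sign at `z` from positive to negative at a linear rate, quantified on
`[z - η, z + η]`: the rate is at least `b` on both sides and, to the left of `z`, at most `K`. -/
structure CrossesDown (g : ℝ → ℝ) (z η b K : ℝ) : Prop where
  radius_pos : 0 < η
  rate_pos : 0 < b
  mul_sub_le : ∀ s ∈ Icc (z - η) z, b * (z - s) ≤ g s
  le_mul_sub : ∀ s ∈ Icc (z - η) z, g s ≤ K * (z - s)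
  le_neg_mul_sub : ∀ s ∈ Icc z (z + η), g s ≤ -(b * (s - z))

namespace CrossesDown

variable {g : ℝ → ℝ} {z η b K s x β : ℝ}

theorem of_hasDerivAt (hg : HasDerivAt g (-β) z) (hβ : 0 < β) (hz : g z = 0) :
    ∃ η, CrossesDown g z η (β / 2) (2 * β) := by
  obtain ⟨η, hη, hball⟩ := (nhds_basis_closedBall.eventually_iff).1
    (hg.isLittleO.bound (half_pos hβ))
  have hnear : ∀ s ∈ Icc (z - η) (z + η), |g s + β * (s - z)| ≤ β / 2 * |s - z| := fun s hs => by
    have := hball (Real.closedBall_eq_Icc.ge hs)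
    simpa only [hz, sub_zero, smul_eq_mul, mul_comm (s - z), neg_mul, sub_neg_eq_add,
      Real.norm_eq_abs] using this
  have hleft : ∀ s ∈ Icc (z - η) z, |g s - β * (z - s)| ≤ β / 2 * (z - s) := fun s hs => by
    have := hnear s ⟨hs.1, hs.2.trans (by linarith)⟩
    rwa [abs_sub_comm s z, abs_of_nonneg (sub_nonneg.2 hs.2), ← neg_sub z s, mul_neg,
      ← sub_eq_add_neg] at this
  refine ⟨η, hη, half_pos hβ, fun s hs => ?_, fun s hs => ?_, fun s hs => ?_⟩
  · linarith [(abs_le.1 (hleft s hs)).1]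
  · linarith [(abs_le.1 (hleft s hs)).2, mul_nonneg hβ.le (sub_nonneg.2 hs.2)]
  · have := hnear s ⟨(by linarith : z - η ≤ z).trans hs.1, hs.2⟩
    rw [abs_of_nonneg (sub_nonneg.2 hs.1)] at this
    linarith [(abs_le.1 this).2]

theorem pos (hg : CrossesDown g z η b K) (hs : s ∈ Ico (z - η) z) : 0 < g s :=
  (mul_pos hg.rate_pos (sub_pos.2 hs.2)).trans_le (hg.mul_sub_le s (Ico_subset_Icc_self hs))

theorem nonneg (hg : CrossesDown g z η b K) (hs : s ∈ Icc (z - η) z) : 0 ≤ g s :=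
  (mul_nonneg hg.rate_pos.le (sub_nonneg.2 hs.2)).trans (hg.mul_sub_le s hs)

theorem nonpos (hg : CrossesDown g z η b K) (hs : s ∈ Icc z (z + η)) : g s ≤ 0 :=
  (hg.le_neg_mul_sub s hs).trans
    (neg_nonpos.2 (mul_nonneg hg.rate_pos.le (sub_nonneg.2 hs.1)))

theorem upper_rate_pos (hg : CrossesDown g z η b K) : 0 < K := by
  have hmem : z - η ∈ Icc (z - η) z := left_mem_Icc.2 (sub_le_self _ hg.radius_pos.le)
  have hle := (hg.mul_sub_le _ hmem).trans (hg.le_mul_sub _ hmem)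
  rw [sub_sub_cancel, mul_le_mul_iff_left₀ hg.radius_pos] at hle
  exact hg.rate_pos.trans_le hle

theorem exists_zero_lt (hg : CrossesDown g z η b K) (hcont : Continuous g) (hxz : x < z)
    (hx : g x ≤ 0) : ∃ a ∈ Ico x z, g a = 0 ∧ ∀ s ∈ Ioo a z, 0 < g s := by
  have hη := hg.radius_pos
  have hxη : x < z - η := not_le.1 fun hle => hx.not_gt (hg.pos ⟨hle, hxz⟩)
  obtain ⟨a, ha, hga, hpos⟩ := exists_last_zero hcont.continuousOn hxη hx
    (hg.pos ⟨le_rfl, sub_lt_self _ hη⟩)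
  refine ⟨a, ⟨ha.1, ha.2.trans (sub_lt_self _ hη)⟩, hga, fun s hs => ?_⟩
  rcases le_total s (z - η) with hle | hle
  · exact hpos s ⟨hs.1, hle⟩
  · exact hg.pos ⟨hle, hs.2⟩

end CrossesDown

namespace ShootingSystem

theorem IsSolution.mul_integral_mul_le_flux {S : ShootingSystem} {z η b K t : ℝ} {u w : ℝ → ℝ}
    (h : S.IsSolution u w) (hg : CrossesDown S.source z η b K)
    (hmem : ∀ r ∈ Icc 0 t, u r ∈ Icc (z - η) z) (ht : t ∈ Icc (0 : ℝ) 1) :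
    b * (∫ r in 0..t, S.weight r) * (z - u t) ≤ w t := by
  have hw : b * (z - u t) * (∫ r in 0..t, S.weight r) ≤ w t - w 0 :=
    h.mul_integral_le_flux_sub le_rfl ht.1 ht.2 fun r hr => by
      refine le_trans ?_ (hg.mul_sub_le _ (hmem r (Ioo_subset_Icc_self hr)))
      exact mul_le_mul_of_nonneg_left (sub_le_sub_left
        (h.monotoneOn_profile ⟨hr.1.le, hr.2.le.trans ht.2⟩ ht hr.2.le) z) hg.rate_pos.le
  rwa [h.flux_zero, sub_zero, mul_right_comm] at hw

/-- The systems of the radial `p`-Laplacian in dimension `n + 1`, with `q = 1 / (p - 1)` and the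
inverse of `y ↦ |y|^(p-2) y` truncated to `[0, C]`. The bound on the source keeps `w / ρ` below
`C`, so that the truncation at `C` is not felt by solutions. -/
structure IsPowerSystem (S : ShootingSystem) (q C : ℝ) (n : ℕ) : Prop where
  exponent_pos : 0 < q
  bound_nonneg : 0 ≤ C
  slope_eq : ∀ y, S.slope y = min (max y 0) C ^ q
  weight_eq : ∀ r, S.weight r = r ^ n
  source_le : ∀ s, S.source s ≤ C

namespace IsPowerSystem

variable {S : ShootingSystem} {q C z η b K c s t y μ : ℝ} {n : ℕ} {u w : ℝ → ℝ}

theorem slope_le_rpow (hS : S.IsPowerSystem q C n) (hc : 0 ≤ c) (hy : y ≤ c) :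
    S.slope y ≤ c ^ q := by
  rw [hS.slope_eq]
  exact Real.rpow_le_rpow (le_min (le_max_right _ _) hS.bound_nonneg)
    ((min_le_left _ _).trans (max_le hy hc)) hS.exponent_pos.le

theorem flux_div_weight_le (hS : S.IsPowerSystem q C n) (h : S.IsSolution u w)
    (ht : t ∈ Ioc (0 : ℝ) 1) : w t / S.weight t ≤ C :=
  (h.flux_div_weight_le hS.bound_nonneg ht fun _ _ => hS.source_le _).trans
    (mul_le_of_le_one_right hS.bound_nonneg ht.2)

theorem slope_flux_div_weight (hS : S.IsPowerSystem q C n) (h : S.IsSolution u w)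
    (ht : t ∈ Ioc (0 : ℝ) 1) (hw : 0 ≤ w t) :
    S.slope (w t / S.weight t) = (w t / S.weight t) ^ q := by
  rw [hS.slope_eq, max_eq_left (div_nonneg hw (S.weight_pos t ht).le),
    min_eq_left (hS.flux_div_weight_le h ht)]

theorem le_flux_div_weight (hS : S.IsPowerSystem q C n) (ht : t ∈ Ioc (0 : ℝ) 1) (hw : 0 ≤ w t) :
    w t ≤ w t / S.weight t := by
  refine le_div_self hw (S.weight_pos t ht) ?_
  rw [hS.weight_eq]
  exact pow_le_one₀ ht.1.le ht.2

theorem rpow_mul_sub_le_profile_sub (hS : S.IsPowerSystem q C n) (h : S.IsSolution u w)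
    (hs : 0 ≤ s) (hst : s ≤ t) (ht : t ≤ 1) (hc : 0 ≤ c) (hw : ∀ r ∈ Ioo s t, c ≤ w r) :
    c ^ q * (t - s) ≤ u t - u s := by
  refine h.mul_sub_le_profile_sub hs hst ht fun r hr => ?_
  have hr' : r ∈ Ioc (0 : ℝ) 1 := ⟨hs.trans_lt hr.1, hr.2.le.trans ht⟩
  have hwr : 0 ≤ w r := hc.trans (hw r hr)
  rw [hS.slope_flux_div_weight h hr' hwr]
  exact Real.rpow_le_rpow hc ((hw r hr).trans (hS.le_flux_div_weight hr' hwr)) hS.exponent_pos.le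

theorem rpow_flux_mul_le_of_profile_mem (hS : S.IsPowerSystem q C n)
    (hg : CrossesDown S.source z η b K) (h : S.IsSolution u w)
    (hmem : ∀ r ∈ Icc (0 : ℝ) (1 / 2), u r ∈ Icc (z - η) z) (hs : s ∈ Icc (0 : ℝ) (1 / 4))
    (hws : 0 ≤ w s) : w s ^ q * (1 / 4) ≤ z - u (1 / 4) := by
  have hflux : ∀ r ∈ Ioo (1 / 4 : ℝ) (1 / 2), w s ≤ w r := fun r hr =>
    h.flux_le_of_source_nonneg hs.1 (hs.2.trans hr.1.le) (by linarith [hr.2])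
      fun x hx => hg.nonneg (hmem x ⟨hs.1.trans hx.1.le, by linarith [hx.2, hr.2]⟩)
  have hgrow := hS.rpow_mul_sub_le_profile_sub h (by norm_num) (by norm_num) (by norm_num) hws hflux
  linarith [(hmem (1 / 2) (by norm_num)).2]

-- Since `q < 1`, a small distance `m = z - u (1 / 4)` still to be covered forces a slope of order
-- `m ^ q`, too large for `u` to stay below `z` during a fixed time.
theorem exists_lt_profile_half (hS : S.IsPowerSystem q C n) (hq : q < 1)
    (hg : CrossesDown S.source z η b K) :
    ∃ δ > 0, ∀ u w, S.IsSolution u w → u 0 ∈ Ico (z - δ) z → z < u (1 / 2) := by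
  have hI : 0 < ∫ r in (0 : ℝ)..1 / 4, S.weight r :=
    S.integral_weight_pos le_rfl (by norm_num) (by norm_num)
  obtain ⟨m₀, hm₀, hpow⟩ := exists_pos_forall_lt_mul_rpow hq (mul_pos hg.rate_pos hI)
    (by norm_num : (0 : ℝ) < 1 / 4)
  refine ⟨min η (m₀ / 2), lt_min hg.radius_pos (half_pos hm₀), fun u w h ⟨hlow, hu0⟩ => ?_⟩
  by_contra! hhalf
  have hmono : ∀ {s t : ℝ}, 0 ≤ s → s ≤ t → t ≤ 1 / 2 → u s ≤ u t := fun hs hst ht =>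
    h.monotoneOn_profile ⟨hs, by linarith⟩ ⟨by linarith, by linarith⟩ hst
  have hmem : ∀ r ∈ Icc (0 : ℝ) (1 / 2), u r ∈ Icc (z - η) z := fun r hr =>
    ⟨by linarith [hmono le_rfl hr.1 hr.2, min_le_left η (m₀ / 2)],
      (hmono hr.1 hr.2 le_rfl).trans hhalf⟩
  rcases (hmem (1 / 4) (by norm_num)).2.eq_or_lt with hquarter | hquarter
  · obtain ⟨r, hr, hwr⟩ := h.exists_flux_pos_of_profile_lt le_rfl (by norm_num)
      (by norm_num : (1 / 4 : ℝ) ≤ 1) (hu0.trans_eq hquarter.symm)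
    linarith [hS.rpow_flux_mul_le_of_profile_mem hg h hmem (Ioo_subset_Icc_self hr) hwr.le,
      Real.rpow_pos_of_pos hwr q]
  · have hw := h.mul_integral_mul_le_flux hg
      (fun r hr => hmem r ⟨hr.1, by linarith [hr.2]⟩) (by norm_num : (1 / 4 : ℝ) ∈ Icc (0 : ℝ) 1)
    have hm : z - u (1 / 4) ∈ Ioo 0 m₀ :=
      ⟨sub_pos.2 hquarter, by
        linarith [hmono le_rfl (by norm_num : (0 : ℝ) ≤ 1 / 4) (by norm_num),
          min_le_right η (m₀ / 2)]⟩
    have hpos := mul_pos (mul_pos hg.rate_pos hI) hm.1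
    linarith [hpow _ hm, Real.rpow_le_rpow hpos.le hw hS.exponent_pos.le,
      hS.rpow_flux_mul_le_of_profile_mem hg h hmem (by norm_num) (hpos.le.trans hw)]

theorem exists_flux_one_neg_of_lt_profile_half (hS : S.IsPowerSystem q C n) (hq : q < 1)
    (hg : CrossesDown S.source z η b K) :
    ∃ μ ∈ Ioc 0 η, ∀ u w, S.IsSolution u w → z < u (1 / 2) → u 1 < z + μ → w 1 < 0 := by
  have hI : 0 < ∫ r in (3 / 4 : ℝ)..1, S.weight r :=
    S.integral_weight_pos (by norm_num) (by norm_num) le_rfl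
  obtain ⟨m₀, hm₀, hpow⟩ := exists_pos_forall_lt_mul_rpow hq (mul_pos hg.rate_pos hI)
    (by norm_num : (0 : ℝ) < 1 / 4)
  refine ⟨min η m₀, ⟨lt_min hg.radius_pos hm₀, min_le_left _ _⟩, fun u w h hhalf hu1 => ?_⟩
  by_contra! hw1
  have hmono : ∀ {s t : ℝ}, 1 / 2 ≤ s → s ≤ t → t ≤ 1 → u s ≤ u t := fun hs hst ht =>
    h.monotoneOn_profile ⟨by linarith, by linarith⟩ ⟨by linarith, by linarith⟩ hst
  have hmem : ∀ r ∈ Icc (1 / 2 : ℝ) 1, u r ∈ Icc z (z + η) := fun r hr =>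
    ⟨hhalf.le.trans (hmono le_rfl hr.1 hr.2), by
      linarith [hmono hr.1 hr.2 le_rfl, min_le_left η m₀]⟩
  set m := u (3 / 4) - z
  have hm : m ∈ Ioo 0 m₀ :=
    ⟨by linarith [hmono le_rfl (by norm_num : (1 / 2 : ℝ) ≤ 3 / 4) (by norm_num)], by
      linarith [hmono (by norm_num) (by norm_num : (3 / 4 : ℝ) ≤ 1) le_rfl, min_le_right η m₀]⟩
  have hlast : w 1 - w (3 / 4) ≤ -(b * m) * ∫ r in (3 / 4 : ℝ)..1, S.weight r :=
    h.flux_sub_le_mul_integral (by norm_num) (by norm_num) le_rfl fun r hr =>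
      (hg.le_neg_mul_sub _ (hmem r ⟨by linarith [hr.1], hr.2.le⟩)).trans
        (neg_le_neg (mul_le_mul_of_nonneg_left
          (sub_le_sub_right (hmono (by norm_num) hr.1.le hr.2.le) z) hg.rate_pos.le))
  have hw : ∀ r ∈ Ioo (1 / 2 : ℝ) (3 / 4),
      b * (∫ r in (3 / 4 : ℝ)..1, S.weight r) * m ≤ w r := fun r hr => by
    have := h.flux_le_of_source_nonpos (by linarith [hr.1]) hr.2.le (by norm_num)
      fun x hx => hg.nonpos (hmem x ⟨by linarith [hr.1, hx.1], by linarith [hx.2]⟩)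
    linarith
  have hgrow := hS.rpow_mul_sub_le_profile_sub h (by norm_num) (by norm_num) (by norm_num)
    (mul_pos (mul_pos hg.rate_pos hI) hm.1).le hw
  linarith [hpow m hm]

theorem profile_one_lt (hS : S.IsPowerSystem q C n) (hg : CrossesDown S.source z η b K)
    (h : S.IsSolution u w) (hu0 : u 0 ∈ Ico (z - η) z) (hμ : μ ∈ Ioc 0 η)
    (hpow : (K * (z - u 0)) ^ q ≤ μ) : u 1 < z + μ := by
  by_contra! hu1
  obtain ⟨t, ht, hut⟩ := intermediate_value_Icc zero_le_one h.continuousOn_profile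
    (⟨by linarith [hu0.2, hμ.1], hu1⟩ : z + μ ∈ Icc (u 0) (u 1))
  have hc : 0 ≤ K * (z - u 0) := mul_nonneg hg.upper_rate_pos.le (sub_nonneg.2 hu0.2.le)
  have hsource : ∀ r ∈ Icc 0 t, S.source (u r) ≤ K * (z - u 0) := fun r hr => by
    have hr1 : r ≤ 1 := hr.2.trans ht.2
    have hlow := h.monotoneOn_profile (left_mem_Icc.2 zero_le_one) ⟨hr.1, hr1⟩ hr.1
    have hupp := h.monotoneOn_profile ⟨hr.1, hr1⟩ ht hr.2
    rcases le_total (u r) z with hz | hz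
    · exact (hg.le_mul_sub _ ⟨hu0.1.trans hlow, hz⟩).trans
        (mul_le_mul_of_nonneg_left (sub_le_sub_left hlow z) hg.upper_rate_pos.le)
    · exact (hg.nonpos ⟨hz, by linarith [hμ.2]⟩).trans hc
  have hslope : ∀ r ∈ Ioo 0 t, S.slope (w r / S.weight r) ≤ (K * (z - u 0)) ^ q := fun r hr => by
    have hr' : r ∈ Ioc (0 : ℝ) 1 := ⟨hr.1, hr.2.le.trans ht.2⟩
    refine hS.slope_le_rpow hc ((h.flux_div_weight_le hc hr' fun x hx => hsource x
      ⟨hx.1.le, hx.2.le.trans hr.2.le⟩).trans (mul_le_of_le_one_right hc hr'.2))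
  have hsub := h.profile_sub_le_mul_sub le_rfl ht.1 ht.2 hslope
  have := mul_le_of_le_one_right (Real.rpow_nonneg hc q) (by linarith [ht.2] : t - 0 ≤ 1)
  linarith [hu0.2]

theorem exists_flux_one_neg_of_profile_zero_near (hS : S.IsPowerSystem q C n) (hq : q < 1)
    (hg : CrossesDown S.source z η b K) :
    ∃ δ > 0, ∀ u w, S.IsSolution u w → u 0 ∈ Ico (z - δ) z → w 1 < 0 := by
  obtain ⟨δ, hδ, hhalf⟩ := hS.exists_lt_profile_half hq hg
  obtain ⟨μ, hμ, hneg⟩ := hS.exists_flux_one_neg_of_lt_profile_half hq hg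
  have hK := hg.upper_rate_pos
  have hμq : 0 < μ ^ q⁻¹ / K := div_pos (Real.rpow_pos_of_pos hμ.1 _) hK
  refine ⟨min (min δ η) (μ ^ q⁻¹ / K), lt_min (lt_min hδ hg.radius_pos) hμq,
    fun u w h ⟨hlow, hu0⟩ => ?_⟩
  have hdist : z - u 0 ≤ min (min δ η) (μ ^ q⁻¹ / K) := sub_le_comm.1 hlow
  obtain ⟨⟨hδ', hη'⟩, hμ'⟩ := le_min_iff.1 hdist |>.imp_left le_min_iff.1
  have hpow : (K * (z - u 0)) ^ q ≤ μ := by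
    rw [← Real.le_rpow_inv_iff_of_pos (mul_nonneg hK.le (sub_nonneg.2 hu0.le)) hμ.1.le
      hS.exponent_pos, mul_comm]
    exact (le_div_iff₀ hK).1 hμ'
  exact hneg u w h (hhalf u w h ⟨sub_le_comm.1 hδ', hu0⟩)
    (hS.profile_one_lt hg h ⟨sub_le_comm.1 hη', hu0⟩ hμ hpow)

end IsPowerSystem
end ShootingSystem

/-! ### Regularisation of power systems -/

/-- The function `y ↦ y ^ q` truncated to `[0, C]` and made Lipschitz by a shift `ε > 0` of its
argument, normalised to vanish for `y ≤ 0`. -/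
noncomputable def truncPow (q C ε y : ℝ) : ℝ := (min (max y 0) C + ε) ^ q - ε ^ q

section truncPow

variable {q C ε y : ℝ}

theorem tendsto_truncPow {ι : Type*} {l : Filter ι} {e v : ι → ℝ} (hq : 0 ≤ q)
    (he : Tendsto e l (𝓝 ε)) (hv : Tendsto v l (𝓝 y)) :
    Tendsto (fun i => truncPow q C (e i) (v i)) l (𝓝 (truncPow q C ε y)) :=
  Tendsto.sub
    ((((hv.max tendsto_const_nhds).min tendsto_const_nhds).add he).rpow_const (.inr hq))
    (he.rpow_const (.inr hq))

theorem truncPow_nonneg (hq : 0 ≤ q) (hC : 0 ≤ C) (hε : 0 ≤ ε) : 0 ≤ truncPow q C ε y :=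
  sub_nonneg.2 (Real.rpow_le_rpow hε
    (le_add_of_nonneg_left (le_min (le_max_right _ _) hC)) hq)

theorem truncPow_le (hq : 0 ≤ q) (hC : 0 ≤ C) (hε : 0 ≤ ε) : truncPow q C ε y ≤ (C + ε) ^ q :=
  (sub_le_self _ (Real.rpow_nonneg hε q)).trans
    (Real.rpow_le_rpow (add_nonneg (le_min (le_max_right _ _) hC) hε) (by gcongr; simp) hq)

theorem truncPow_of_nonpos (hC : 0 ≤ C) (hy : y ≤ 0) : truncPow q C ε y = 0 := by
  rw [truncPow, max_eq_right hy, min_eq_left hC, zero_add, sub_self]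

theorem truncPow_zero_shift (hq : q ≠ 0) : truncPow q C 0 y = min (max y 0) C ^ q := by
  rw [truncPow, add_zero, Real.zero_rpow hq, sub_zero]

theorem lipschitzOnWith_rpow_Ici (hq0 : 0 ≤ q) (hq : q ≤ 1) (hε : 0 < ε) :
    LipschitzOnWith (q * ε ^ (q - 1)).toNNReal (fun x : ℝ => x ^ q) (Ici ε) := by
  refine (convex_Ici ε).lipschitzOnWith_of_nnnorm_hasDerivWithin_le
    (fun x hx => (Real.hasDerivAt_rpow_const
      (.inl (hε.trans_le hx).ne')).hasDerivWithinAt) fun x hx => ?_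
  rw [← NNReal.coe_le_coe, coe_nnnorm, Real.coe_toNNReal _ (by positivity), Real.norm_of_nonneg
    (mul_nonneg hq0 (Real.rpow_nonneg (hε.le.trans hx) _))]
  exact mul_le_mul_of_nonneg_left
    (Real.rpow_le_rpow_of_nonpos hε hx (sub_nonpos.2 hq)) hq0

theorem exists_lipschitzWith_truncPow (hq0 : 0 ≤ q) (hq : q ≤ 1) (hC : 0 ≤ C) (hε : 0 < ε) :
    ∃ K, LipschitzWith K (truncPow q C ε) := by
  have hclamp : LipschitzWith 1 fun y : ℝ => min (max y 0) C :=
    (LipschitzWith.id.max_const 0).min_const C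
  have hmaps : MapsTo (fun y : ℝ => min (max y 0) C + ε) univ (Ici ε) := fun y _ =>
    le_add_of_nonneg_left (le_min (le_max_right _ _) hC)
  have hpow := (lipschitzOnWith_rpow_Ici hq0 hq hε).comp
    (hclamp.add (LipschitzWith.const ε)).lipschitzOnWith hmaps
  exact ⟨_, (lipschitzOnWith_univ.1 hpow).sub (LipschitzWith.const (ε ^ q))⟩

end truncPow

namespace ShootingSystem

variable {q C B : ℝ} {g : ℝ → ℝ}

/-- The regularisation of the radial `p`-Laplacian system with source `g` at scale `ε`, in dimension
`n + 1` and for `q = 1 / (p - 1)`; it is degenerate exactly for `ε = 0`. -/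
noncomputable def power (hq : 0 < q) (hC : 0 ≤ C) (hg : Continuous g) (hB : ∀ s, |g s| ≤ B)
    (n : ℕ) (ε : ℝ≥0) : ShootingSystem where
  slope := truncPow q C ε
  weight r := r ^ n + ε
  source := g
  slopeBound := (C + ε) ^ q
  sourceBound := B
  continuous_slope := continuous_iff_continuousAt.2 fun _ =>
    tendsto_truncPow hq.le tendsto_const_nhds tendsto_id
  slope_nonneg _ := truncPow_nonneg hq.le hC ε.2
  slope_le _ := truncPow_le hq.le hC ε.2
  slope_of_nonpos _ := truncPow_of_nonpos hC
  continuous_weight := by fun_prop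
  monotoneOn_weight r hr _ _ hrs := add_le_add (pow_le_pow_left₀ hr.1 hrs n) le_rfl
  weight_pos r hr := add_pos_of_pos_of_nonneg (pow_pos hr.1 n) ε.2
  continuous_source := hg
  abs_source_le := hB

variable {hq : 0 < q} {hC : 0 ≤ C} {hg : Continuous g} {hB : ∀ s, |g s| ≤ B} {n : ℕ}

theorem isPowerSystem_power (hgC : ∀ s, g s ≤ C) :
    (power hq hC hg hB n 0).IsPowerSystem q C n where
  exponent_pos := hq
  bound_nonneg := hC
  slope_eq _ := truncPow_zero_shift hq.ne'
  weight_eq _ := add_zero _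
  source_le := hgC

theorem isRegular_power (hq1 : q ≤ 1) (hlip : ∃ K, LipschitzWith K g) {ε : ℝ≥0} (hε : 0 < ε) :
    (power hq hC hg hB n ε).IsRegular where
  exists_lipschitzWith_slope := exists_lipschitzWith_truncPow hq.le hq1 hC hε
  exists_lipschitzWith_source := hlip
  weight_zero_pos := add_pos_of_nonneg_of_pos (by positivity) hε

theorem convergesTo_power {ε : ℕ → ℝ≥0} (hε : Tendsto ε atTop (𝓝 0)) :
    ConvergesTo (fun k => power hq hC hg hB n (ε k)) (power hq hC hg hB n 0) where
  tendsto_slope _ := tendsto_truncPow hq.le ((NNReal.tendsto_coe.2 hε).comp tendsto_fst) tendsto_snd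
  tendsto_weight _ _ := tendsto_const_nhds.add (NNReal.tendsto_coe.2 hε)
  tendsto_source y := (hg.tendsto y).comp tendsto_snd
  exists_bound := by
    have hε' : Tendsto (fun k => (ε k : ℝ)) atTop (𝓝 0) := NNReal.tendsto_coe.2 hε
    obtain ⟨D₁, hD₁⟩ := ((hε'.const_add C).rpow_const (.inr hq.le)).bddAbove_range
    obtain ⟨D₂, hD₂⟩ := ((hε'.const_add (1 ^ n)).mul_const B).bddAbove_range
    exact ⟨max D₁ D₂, fun k => ⟨le_max_of_le_left (hD₁ (mem_range_self k)),
      le_max_of_le_right (hD₂ (mem_range_self k))⟩⟩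

theorem exists_isSolution_flux_one_eq_zero {z η b K x : ℝ} (hq0 : 0 < q) (hq1 : q < 1)
    (hC : 0 ≤ C) (hlip : ∃ L, LipschitzWith L g) (hB : ∀ s, |g s| ≤ B) (hgC : ∀ s, g s ≤ C)
    (hz : CrossesDown g z η b K) (hxz : x < z) (hx : g x ≤ 0) (n : ℕ) :
    ∃ S : ShootingSystem, S.IsPowerSystem q C n ∧ S.source = g ∧
      ∃ u w, S.IsSolution u w ∧ w 1 = 0 ∧ u 0 ∈ Ico x z ∧ z ≤ u 1 := by
  have hg : Continuous g := hlip.choose_spec.continuous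
  have hS : (power hq0 hC hg hB n 0).IsPowerSystem q C n := isPowerSystem_power hgC
  obtain ⟨a, ha, hga, hpos⟩ := hz.exists_zero_lt hg hxz hx
  obtain ⟨δ, hδ, hneg⟩ := hS.exists_flux_one_neg_of_profile_zero_near hq1 hz
  obtain ⟨d, hd, hdz⟩ := exists_between (max_lt ha.2 (sub_lt_self z hδ))
  obtain ⟨had, hδd⟩ := max_lt_iff.1 hd
  have hε : Tendsto (fun k : ℕ => 1 / ((k : ℝ≥0) + 1)) atTop (𝓝 0) :=
    tendsto_one_div_add_atTop_nhds_zero_nat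
  obtain ⟨u, w, h, hw1, hu0, hu1⟩ := (convergesTo_power hε).exists_flux_one_eq_zero
    (fun k => isRegular_power hq1.le hlip (by positivity)) had ha.2 (fun _ => hga) (fun _ => hpos)
    fun u w h hu => hneg u w h ⟨hδd.le.trans hu.ge, hu.trans_lt hdz⟩
  exact ⟨_, hS, rfl, u, w, h, hw1, ⟨ha.1.trans hu0.1, hu0.2.trans_lt hdz⟩, hu1⟩

end ShootingSystem

/-! ### Regularity and positivity of the limit profile -/

theorem abs_rpow_sub_two_mul_rpow_inv {p y : ℝ} (hp : 1 < p) (hy : 0 ≤ y) :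
    |y ^ (p - 1)⁻¹| ^ (p - 2) * y ^ (p - 1)⁻¹ = y := by
  have hroot : 0 ≤ y ^ (p - 1)⁻¹ := Real.rpow_nonneg hy _
  have hp' : p - 2 + 1 = p - 1 := by ring
  rw [abs_of_nonneg hroot, ← Real.rpow_add_one' hroot (by linarith), hp',
    Real.rpow_inv_rpow hy (by linarith)]

namespace ShootingSystem.IsPowerSystem

variable {S : ShootingSystem} {p q C t : ℝ} {n : ℕ} {f u w : ℝ → ℝ}

theorem flux_slope_eq (hS : S.IsPowerSystem (p - 1)⁻¹ C n) (h : S.IsSolution u w)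
    (ht : t ∈ Ioc (0 : ℝ) 1) (hw : 0 ≤ w t) :
    flux p (n + 1) (fun r => S.slope (w r / S.weight r)) t = w t := by
  have hp : 1 < p := sub_pos.1 (inv_pos.1 hS.exponent_pos)
  rw [flux, hS.slope_flux_div_weight h ht hw, abs_rpow_sub_two_mul_rpow_inv hp
    (div_nonneg hw (S.weight_pos t ht).le), Nat.add_sub_cancel, ← hS.weight_eq,
    mul_div_cancel₀ _ (S.weight_pos t ht).ne']

theorem isRadialNeumannSolution (hS : S.IsPowerSystem (p - 1)⁻¹ C n) (h : S.IsSolution u w)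
    (hw1 : w 1 = 0) (hf : ∀ r ∈ Icc (0 : ℝ) 1, S.source (u r) = u r ^ (p - 1) - f (u r)) :
    IsRadialNeumannSolution p (n + 1) f u fun r => S.slope (w r / S.weight r) := by
  have hcont := h.continuousOn_flux_div_weight hw1.ge
  refine ⟨fun r hr => h.hasDerivWithinAt_profile hcont hr,
    S.continuous_slope.comp_continuousOn hcont, ?_, ?_, fun r hr => ?_⟩
  · exact S.slope_of_nonpos _ (by rw [h.flux_zero, zero_div])
  · exact S.slope_of_nonpos _ (by rw [hw1, zero_div])
  · have hflux : flux p (n + 1) (fun r => S.slope (w r / S.weight r)) =ᶠ[𝓝 r] w := by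
      filter_upwards [Ioo_mem_nhds hr.1 hr.2] with t ht
      exact hS.flux_slope_eq h (Ioo_subset_Ioc_self ht)
        (h.flux_nonneg hw1.ge (Ioo_subset_Icc_self ht))
    have hderiv := (h.hasDerivAt_flux hr).congr_of_eventuallyEq hflux
    rwa [hS.weight_eq, hf r (Ioo_subset_Icc_self hr)] at hderiv

theorem profile_le (hS : S.IsPowerSystem q C n) (h : S.IsSolution u w) (ht : t ∈ Icc (0 : ℝ) 1) :
    u t ≤ u 0 + C ^ q := by
  have hgrow := h.profile_sub_le_mul_sub le_rfl ht.1 ht.2 fun r hr =>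
    hS.slope_le_rpow hS.bound_nonneg
      (hS.flux_div_weight_le h ⟨hr.1, hr.2.le.trans ht.2⟩)
  rw [sub_zero] at hgrow
  linarith [mul_le_of_le_one_right (Real.rpow_nonneg hS.bound_nonneg q) ht.2]

theorem profile_sub_le_profile_mul (hS : S.IsPowerSystem q C n) (h : S.IsSolution u w)
    (hu0 : 0 ≤ u 0) (hsource : ∀ r ∈ Icc (0 : ℝ) 1, S.source (u r) ≤ u r ^ q⁻¹) {s : ℝ}
    (hs : 0 ≤ s) (hst : s ≤ t) (ht : t ≤ 1) : u t - u s ≤ u t * (t - s) := by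
  have ht' : t ∈ Icc (0 : ℝ) 1 := ⟨hs.trans hst, ht⟩
  have hnonneg : ∀ r ∈ Icc (0 : ℝ) 1, 0 ≤ u r := fun r hr =>
    hu0.trans (h.monotoneOn_profile (left_mem_Icc.2 zero_le_one) hr hr.1)
  have hpow : 0 ≤ u t ^ q⁻¹ := Real.rpow_nonneg (hnonneg t ht') _
  refine h.profile_sub_le_mul_sub hs hst ht fun r hr => ?_
  have hr' : r ∈ Ioc (0 : ℝ) 1 := ⟨hs.trans_lt hr.1, hr.2.le.trans ht⟩
  have hflux : w r / S.weight r ≤ u t ^ q⁻¹ * r := h.flux_div_weight_le hpow hr' fun x hx => by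
    have hx' : x ∈ Icc (0 : ℝ) 1 := ⟨hx.1.le, hx.2.le.trans hr'.2⟩
    exact (hsource x hx').trans (Real.rpow_le_rpow (hnonneg x hx')
      (h.monotoneOn_profile hx' ht' (hx.2.trans hr.2).le) (inv_nonneg.2 hS.exponent_pos.le))
  calc S.slope (w r / S.weight r)
      ≤ (u t ^ q⁻¹) ^ q :=
        hS.slope_le_rpow hpow (hflux.trans (mul_le_of_le_one_right hpow hr'.2))
    _ = u t := Real.rpow_inv_rpow (hnonneg t ht') hS.exponent_pos.ne'

-- A strong maximum principle: over half the interval a profile can grow at most by the factor two.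
theorem profile_zero_pos (hS : S.IsPowerSystem q C n) (h : S.IsSolution u w)
    (hu0 : 0 ≤ u 0) (hu1 : 0 < u 1)
    (hsource : ∀ r ∈ Icc (0 : ℝ) 1, S.source (u r) ≤ u r ^ q⁻¹) : 0 < u 0 := by
  have hfirst := hS.profile_sub_le_profile_mul h hu0 hsource
    (le_refl 0) (by norm_num : (0 : ℝ) ≤ 1 / 2) (by norm_num)
  have hsecond := hS.profile_sub_le_profile_mul h hu0 hsource
    (by norm_num : (0 : ℝ) ≤ 1 / 2) (by norm_num) (le_refl 1)
  linarith

end ShootingSystem.IsPowerSystem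

theorem exists_lipschitzWith_eqOn_Icc {F : ℝ → ℝ} {a b : ℝ} (hab : a ≤ b)
    (hF : LocallyLipschitzOn (Icc a b) F) :
    ∃ g : ℝ → ℝ, (∃ K, LipschitzWith K g) ∧ EqOn g F (Icc a b) ∧ ∀ s, g s ∈ F '' Icc a b := by
  obtain ⟨K, hK⟩ := hF.exists_lipschitzOnWith_of_compact isCompact_Icc
  refine ⟨fun s => F (projIcc a b hab s), ⟨K * 1, ?_⟩, fun s hs => ?_, fun s => ?_⟩
  · exact hK.to_restrict.comp (LipschitzWith.projIcc hab)
  · simp only [projIcc_of_mem hab hs]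
  · exact mem_image_of_mem F (projIcc a b hab s).2

theorem exists_isPowerSystem_isSolution {F : ℝ → ℝ} {q β z : ℝ} (hq0 : 0 < q) (hq1 : q < 1)
    (hlip : LocallyLipschitzOn (Ici 0) F) (hbdd : BddAbove (F '' Ici 0)) (hF0 : F 0 ≤ 0)
    (hz : 0 < z) (hFz : F z = 0) (hβ : 0 < β) (hderiv : HasDerivAt F (-β) z) (n : ℕ) :
    ∃ (S : ShootingSystem) (C : ℝ) (u w : ℝ → ℝ), S.IsPowerSystem q C n ∧ S.IsSolution u w ∧
      w 1 = 0 ∧ u 0 ∈ Ico 0 z ∧ z ≤ u 1 ∧ ∀ r ∈ Icc (0 : ℝ) 1, S.source (u r) = F (u r) := by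
  obtain ⟨C, hC⟩ := hbdd
  have hFC : ∀ s, 0 ≤ s → F s ≤ C := fun s hs => hC (mem_image_of_mem F hs)
  have hC0 : 0 ≤ C := hFz.ge.trans (hFC z hz.le)
  obtain ⟨M, hM⟩ := exists_gt (z + C ^ q)
  have hzM : z < M := (le_add_of_nonneg_right (Real.rpow_nonneg hC0 q)).trans_lt hM
  obtain ⟨g, hg, hgF, hrange⟩ := exists_lipschitzWith_eqOn_Icc (hz.trans hzM).le
    (hlip.mono Icc_subset_Ici_self)
  have hgC : ∀ s, g s ≤ C := fun s => by
    obtain ⟨x, hx, hgx⟩ := hrange s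
    exact hgx ▸ hFC x hx.1
  obtain ⟨B, hB⟩ := isCompact_Icc.exists_bound_of_continuousOn
    (hlip.continuousOn.mono (Icc_subset_Ici_self : Icc 0 M ⊆ Ici 0))
  have hgB : ∀ s, |g s| ≤ B := fun s => by
    obtain ⟨x, hx, hgx⟩ := hrange s
    exact hgx ▸ hB x hx
  obtain ⟨η, hcross⟩ := CrossesDown.of_hasDerivAt
    (hderiv.congr_of_eventuallyEq (hgF.eventuallyEq_of_mem (Icc_mem_nhds hz hzM))) hβ
    ((hgF ⟨hz.le, hzM.le⟩).trans hFz)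
  obtain ⟨S, hS, rfl, u, w, h, hw1, hu0, hu1⟩ := ShootingSystem.exists_isSolution_flux_one_eq_zero
    hq0 hq1 hC0 hg hgB hgC hcross hz ((hgF ⟨le_rfl, (hz.trans hzM).le⟩).trans_le hF0) n
  refine ⟨S, C, u, w, hS, h, hw1, hu0, hu1, fun r hr => hgF ⟨?_, ?_⟩⟩
  · exact hu0.1.trans (h.monotoneOn_profile (left_mem_Icc.2 zero_le_one) hr hr.1)
  · linarith [hS.profile_le h hr, hu0.2]

theorem locallyLipschitzOn_Ici_of_hasDerivWithinAt {f f' : ℝ → ℝ} {a : ℝ}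
    (hf : ∀ s ∈ Ici a, HasDerivWithinAt f (f' s) (Ici a) s) (hf' : ContinuousOn f' (Ici a)) :
    LocallyLipschitzOn (Ici a) f := by
  refine ContDiffOn.locallyLipschitzOn (convex_Ici a) ?_
  rw [contDiffOn_one_iff_derivWithin (uniqueDiffOn_Ici a)]
  exact ⟨fun s hs => (hf s hs).differentiableWithinAt, hf'.congr fun s hs =>
    (hf s hs).derivWithin (uniqueDiffOn_Ici a s hs)⟩

theorem bddAbove_image_Ici_of_eventually_nonpos {F : ℝ → ℝ} {a : ℝ} (hF : ContinuousOn F (Ici a))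
    (hev : ∀ᶠ s in atTop, F s ≤ 0) : BddAbove (F '' Ici a) := by
  obtain ⟨b, hb⟩ := eventually_atTop.1 hev
  obtain ⟨C, hC⟩ := isCompact_Icc.bddAbove_image (hF.mono (Icc_subset_Ici_self : Icc a b ⊆ Ici a))
  refine ⟨max C 0, ?_⟩
  rintro _ ⟨s, hs, rfl⟩
  rcases le_total s b with h | h
  · exact le_max_of_le_left (hC (mem_image_of_mem F ⟨hs, h⟩))
  · exact le_max_of_le_right (hb s h)

theorem bddAbove_rpow_sub_image_Ici {f : ℝ → ℝ} {α a : ℝ} (hα : 0 ≤ α)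
    (hf : ContinuousOn f (Ici 0)) (ha : 1 ≤ a) (hev : ∀ᶠ s in atTop, a ≤ f s / s ^ α) :
    BddAbove ((fun s => s ^ α - f s) '' Ici 0) := by
  refine bddAbove_image_Ici_of_eventually_nonpos
    ((Real.continuous_rpow_const hα).continuousOn.sub hf) ?_
  filter_upwards [hev, eventually_gt_atTop 0] with s hs hs0
  exact sub_nonpos.2 ((one_le_div (Real.rpow_pos_of_pos hs0 _)).1 (ha.trans hs))

theorem stmt_0_general {p : ℝ} (hp : 2 < p) {N : ℕ} (hN : 1 ≤ N) {f : ℝ → ℝ}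
    (hlip : LocallyLipschitzOn (Ici 0) f) (hnonneg : ∀ s ∈ Ici (0 : ℝ), 0 ≤ f s)
    (hbdd : BddAbove ((fun s => s ^ (p - 1) - f s) '' Ici 0))
    (hcross : ∃ u₀ c : ℝ, 0 < u₀ ∧ f u₀ = u₀ ^ (p - 1) ∧ HasDerivAt f c u₀ ∧
      (p - 1) * u₀ ^ (p - 2) < c) :
    ∃ u u' : ℝ → ℝ,
      IsRadialNeumannSolution p N f u u' ∧
      (∀ r ∈ Icc (0 : ℝ) 1, 0 < u r) ∧
      MonotoneOn u (Icc (0 : ℝ) 1) ∧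
      ¬ (∀ r ∈ Icc (0 : ℝ) 1, u r = u 0) := by
  obtain ⟨z, c, hz, hfz, hderiv, hc⟩ := hcross
  obtain ⟨n, rfl⟩ := Nat.exists_eq_add_of_le' hN
  have hp1 : p - 1 - 1 = p - 2 := by ring
  have hrpow : HasDerivAt (fun s => s ^ (p - 1)) ((p - 1) * z ^ (p - 2)) z :=
    hp1 ▸ Real.hasDerivAt_rpow_const (.inl hz.ne')
  have hpow : ContDiff ℝ 1 fun s : ℝ => s ^ (p - 1) :=
    Real.contDiff_rpow_const_of_le (by norm_num; linarith)
  obtain ⟨S, C, u, w, hS, h, hw1, hu0, hu1, hsource⟩ := exists_isPowerSystem_isSolution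
    (inv_pos.2 (by linarith : 0 < p - 1)) (inv_lt_one_of_one_lt₀ (by linarith))
    (hpow.locallyLipschitz.locallyLipschitzOn.sub hlip) hbdd
    (by simpa [Real.zero_rpow (by linarith : p - 1 ≠ 0)] using hnonneg 0 self_mem_Ici) hz
    (sub_eq_zero.2 hfz.symm) (sub_pos.2 hc) ((neg_sub c _).symm ▸ hrpow.sub hderiv) n
  have h0 : (0 : ℝ) ∈ Icc (0 : ℝ) 1 := left_mem_Icc.2 zero_le_one
  have hmono := h.monotoneOn_profile
  have hpos : 0 < u 0 := hS.profile_zero_pos h hu0.1 (hz.trans_le hu1) fun r hr => by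
    rw [hsource r hr, inv_inv]
    exact sub_le_self _ (hnonneg _ (hu0.1.trans (hmono h0 hr hr.1)))
  exact ⟨u, _, hS.isRadialNeumannSolution h hw1 hsource, fun r hr =>
    hpos.trans_le (hmono h0 hr hr.1), hmono, fun hconst =>
    (hu0.2.trans_le hu1).ne' (hconst 1 (right_mem_Icc.2 zero_le_one))⟩

end

theorem stmt_0 (p : ℝ) (hp : 2 < p) (N : ℕ) (hN : 1 ≤ N) (f f' : ℝ → ℝ)
    (hC1 : ∀ s ∈ Ici (0:ℝ), HasDerivWithinAt f (f' s) (Ici 0) s)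
    (hC1' : ContinuousOn f' (Ici 0))
    (hf0 : ∀ s ∈ Ici (0:ℝ), 0 ≤ f s ∧ 0 ≤ f' s)
    (hf1 : ∃ L ∈ Ico (0:ℝ) 1,
      Tendsto (fun s => f s / s ^ (p - 1)) (nhdsWithin 0 (Ioi 0)) (nhds L))
    (hf2 : ∃ a : ℝ, 1 < a ∧ ∀ᶠ s in atTop, a ≤ f s / s ^ (p - 1))
    (hf3 : ∃ u₀ : ℝ, 0 < u₀ ∧ f u₀ = u₀ ^ (p - 1) ∧ (p - 1) * u₀ ^ (p - 2) < f' u₀) :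
    ∃ u u' : ℝ → ℝ,
      IsRadialNeumannSolution p N f u u' ∧
      (∀ r ∈ Icc (0:ℝ) 1, 0 < u r) ∧
      MonotoneOn u (Icc (0:ℝ) 1) ∧
      ¬ (∀ r ∈ Icc (0:ℝ) 1, u r = u 0) := by
  have hlip := locallyLipschitzOn_Ici_of_hasDerivWithinAt hC1 hC1'
  obtain ⟨a, ha, hev⟩ := hf2
  obtain ⟨z, hz, hfz, hslope⟩ := hf3
  exact stmt_0_general hp hN hlip (fun s hs => (hf0 s hs).1)
    (bddAbove_rpow_sub_image_Ici (by linarith) hlip.continuousOn ha.le hev)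
    ⟨z, f' z, hz, hfz, (hC1 z hz.le).hasDerivAt (Ici_mem_nhds hz), hslope⟩
end

section
/- Let p > 2, let N ≥ 1 be an integer, and let f ∈ C^1([0,∞)) satisfy (f0), (f1), (f2). If there exist n pairwise distinct positive constants u_0^{(1)}, …, u_0^{(n)} each satisfying (f3) (i.e., f(u_0^{(i)}) = (u_0^{(i)})^{p−1} and f'(u_0^{(i)}) > (p−1)(u_0^{(i)})^{p−2} for each i), then there exist at least n pairwise distinct functions u^{(1)}, …, u^{(n)}, each of which is a nonconstant, positive (u^{(i)}(r) > 0 on [0,1]), nondecreasing radial profile solution of the Neumann problem −Δ_p u + u^{p−1} = f(u) in the unit ball of ℝ^N. -/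
open Real Filter Set

/-!
In terms of the profile `u` and its flux `w = r ^ (N - 1) * u' ^ (p - 1)`, the radial equation for
nondecreasing profiles is the planar system `u' = (w / r ^ (N - 1)) ^ (1 / (p - 1))`,
`w' = r ^ (N - 1) * G u` with `G s = s ^ (p - 1) - f s`, and the Neumann conditions are
`w 0 = w 1 = 0`. Fix a constant `c = u₀` as in (f3), so that `G` crosses zero downwards at `c`, and
let `z` be the last zero of `G` below `c`. We shoot from `u 0 = d` with `z ≤ d < c`. If `u 1 < c`
then `w 1 > 0`. If instead `d` is close to `c` then `w 1 < 0`: since `p > 2`, the power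
`y ^ (1 / (p - 1))` has infinite slope at `0`, and the trajectories around `(c, 0)` rotate
arbitrarily fast. In between there is a `d` with `w 1 = 0`.

The system is neither Lipschitz nor regular at `r = 0`, so the shooting is done for a Lipschitz
regularisation with parameter `ε`, keeping `d` away from `c` uniformly in `ε`, and the limit
`ε → 0` is taken by Arzelà–Ascoli. As `f ≥ 0`, the limit satisfies `u' ≤ u`, hence
`u r ≤ exp r * u 0`. This a priori bound makes the truncation of `G` used for the shooting
invisible, and it makes `u 0` positive because `c ≤ u 1`. Profiles attached to two constants are
distinct because `u 0` lies below its own constant and above every smaller zero of `G`.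
-/

open scoped Topology NNReal

section Calculus

variable {f f' : ℝ → ℝ} {a b x y C : ℝ}

theorem continuousOn_of_forall_hasDerivWithinAt {s : Set ℝ}
    (hf : ∀ t ∈ s, HasDerivWithinAt f (f' t) s t) : ContinuousOn f s :=
  fun t ht => (hf t ht).continuousWithinAt

theorem exists_sub_eq_mul_of_hasDerivWithinAt_Icc
    (hf : ∀ t ∈ Icc a b, HasDerivWithinAt f (f' t) (Icc a b) t)
    (hx : a ≤ x) (hxy : x < y) (hy : y ≤ b) :
    ∃ c ∈ Ioo x y, f y - f x = f' c * (y - x) := by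
  obtain ⟨c, hc, hslope⟩ := exists_hasDerivAt_eq_slope f f' hxy
    ((continuousOn_of_forall_hasDerivWithinAt hf).mono (Icc_subset_Icc hx hy))
    (fun t ht => (hf t ⟨hx.trans ht.1.le, ht.2.le.trans hy⟩).hasDerivAt
      (Icc_mem_nhds (hx.trans_lt ht.1) (ht.2.trans_le hy)))
  exact ⟨c, hc, by rw [hslope, div_mul_cancel₀ _ (sub_ne_zero.2 hxy.ne')]⟩

theorem sub_le_mul_sub_of_hasDerivWithinAt_le
    (hf : ∀ t ∈ Icc a b, HasDerivWithinAt f (f' t) (Icc a b) t)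
    (hx : a ≤ x) (hxy : x ≤ y) (hy : y ≤ b) (hC : ∀ t ∈ Ioo x y, f' t ≤ C) :
    f y - f x ≤ C * (y - x) := by
  rcases hxy.eq_or_lt with rfl | hlt
  · simp
  obtain ⟨c, hc, hslope⟩ := exists_sub_eq_mul_of_hasDerivWithinAt_Icc hf hx hlt hy
  rw [hslope]
  exact mul_le_mul_of_nonneg_right (hC c hc) (sub_nonneg.2 hxy)

theorem mul_sub_le_sub_of_le_hasDerivWithinAt
    (hf : ∀ t ∈ Icc a b, HasDerivWithinAt f (f' t) (Icc a b) t)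
    (hx : a ≤ x) (hxy : x ≤ y) (hy : y ≤ b) (hC : ∀ t ∈ Ioo x y, C ≤ f' t) :
    C * (y - x) ≤ f y - f x := by
  have hneg := sub_le_mul_sub_of_hasDerivWithinAt_le (f := -f) (f' := -f') (C := -C)
    (fun t ht => (hf t ht).neg) hx hxy hy (fun t ht => neg_le_neg (hC t ht))
  simp only [Pi.neg_apply] at hneg
  linarith

theorem le_of_hasDerivWithinAt_nonneg
    (hf : ∀ t ∈ Icc a b, HasDerivWithinAt f (f' t) (Icc a b) t)
    (hx : a ≤ x) (hxy : x ≤ y) (hy : y ≤ b) (hnonneg : ∀ t ∈ Ioo x y, 0 ≤ f' t) : f x ≤ f y := by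
  have := mul_sub_le_sub_of_le_hasDerivWithinAt hf hx hxy hy hnonneg
  linarith

theorem eq_of_hasDerivWithinAt_eq_zero
    (hf : ∀ t ∈ Icc a b, HasDerivWithinAt f (f' t) (Icc a b) t)
    (hx : a ≤ x) (hxy : x ≤ y) (hy : y ≤ b) (hzero : ∀ t ∈ Ioo x y, f' t = 0) : f y = f x := by
  have hle := sub_le_mul_sub_of_hasDerivWithinAt_le hf hx hxy hy (fun t ht => (hzero t ht).le)
  have hge := le_of_hasDerivWithinAt_nonneg hf hx hxy hy (fun t ht => (hzero t ht).ge)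
  linarith

theorem le_exp_sub_mul_of_hasDerivWithinAt_le
    (hf : ∀ t ∈ Icc a b, HasDerivWithinAt f (f' t) (Icc a b) t)
    (hx : a ≤ x) (hxy : x ≤ y) (hy : y ≤ b) (hle : ∀ t ∈ Ioo x y, f' t ≤ f t) :
    f y ≤ exp (y - x) * f x := by
  have hweighted : f y * exp (-y) - f x * exp (-x) ≤ 0 * (y - x) :=
    sub_le_mul_sub_of_hasDerivWithinAt_le (f := fun t => f t * exp (-t))
      (fun t ht => (hf t ht).mul (hasDerivAt_neg t).exp.hasDerivWithinAt) hx hxy hy fun t ht => by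
        nlinarith [hle t ht, exp_pos (-t)]
  rw [zero_mul, sub_nonpos] at hweighted
  calc f y = exp y * (f y * exp (-y)) := by
        rw [mul_comm (f y), ← mul_assoc, ← exp_add, add_neg_cancel, exp_zero, one_mul]
    _ ≤ exp y * (f x * exp (-x)) := mul_le_mul_of_nonneg_left hweighted (exp_pos y).le
    _ = exp (y - x) * f x := by rw [sub_eq_add_neg, exp_add]; ring

theorem integral_eq_sub_of_hasDerivWithinAt_Icc
    (hf : ∀ t ∈ Icc a b, HasDerivWithinAt f (f' t) (Icc a b) t)
    (hf' : ContinuousOn f' (Icc a b)) (hx : x ∈ Icc a b) :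
    ∫ s in a..x, f' s = f x - f a := by
  have hsub : Icc a x ⊆ Icc a b := Icc_subset_Icc_right hx.2
  refine intervalIntegral.integral_eq_sub_of_hasDerivAt_of_le hx.1
    ((continuousOn_of_forall_hasDerivWithinAt hf).mono hsub)
    (fun t ht => (hf t ⟨ht.1.le, ht.2.le.trans hx.2⟩).hasDerivAt
      (Icc_mem_nhds ht.1 (ht.2.trans_le hx.2))) ?_
  exact (hf'.mono (by rwa [uIcc_of_le hx.1])).intervalIntegrable

theorem hasDerivWithinAt_integral_of_continuousOn_Icc (hf : ContinuousOn f (Icc a b))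
    (hx : x ∈ Icc a b) : HasDerivWithinAt (fun y => ∫ s in a..y, f s) (f x) (Icc a b) x := by
  have : Fact (x ∈ Icc a b) := ⟨hx⟩
  refine intervalIntegral.integral_hasDerivWithinAt_right ?_
    (hf.stronglyMeasurableAtFilter_nhdsWithin measurableSet_Icc x) (hf x hx)
  refine (hf.mono ?_).intervalIntegrable
  rw [uIcc_of_le hx.1]
  exact Icc_subset_Icc_right hx.2

theorem tendsto_sub_of_hasDerivWithinAt_of_bounded {F F' : ℕ → ℝ → ℝ}
    (hF : ∀ k, ∀ t ∈ Icc a b, HasDerivWithinAt (F k) (F' k t) (Icc a b) t)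
    (hF' : ∀ k, ContinuousOn (F' k) (Icc a b)) (hC : ∀ k, ∀ t ∈ Icc a b, |F' k t| ≤ C)
    (hlim : ∀ t ∈ Ioc a b, Tendsto (fun k => F' k t) atTop (𝓝 (f' t))) (hx : x ∈ Icc a b) :
    Tendsto (fun k => F k x - F k a) atTop (𝓝 (∫ s in a..x, f' s)) := by
  simp only [← fun k => integral_eq_sub_of_hasDerivWithinAt_Icc (hF k) (hF' k) hx]
  have hsub : uIoc a x ⊆ Ioc a b := by
    rw [uIoc_of_le hx.1]
    exact Ioc_subset_Ioc_right hx.2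
  refine intervalIntegral.tendsto_integral_filter_of_dominated_convergence (fun _ => C)
    (.of_forall fun k => ?_) (.of_forall fun k => .of_forall fun s hs => ?_) (by simp)
    (.of_forall fun s hs => hlim s (hsub hs))
  · exact ((hF' k).mono (hsub.trans Ioc_subset_Icc_self)).aestronglyMeasurable measurableSet_uIoc
  · exact hC k s (Ioc_subset_Icc_self (hsub hs))

theorem abs_integral_pow_mul_div_pow_le {φ : ℝ → ℝ} {M r : ℝ} (hr : 0 ≤ r)
    (hM : ∀ s ∈ Icc 0 r, |φ s| ≤ M) (m : ℕ) :
    |(∫ s in 0..r, s ^ m * φ s) / r ^ m| ≤ M * r := by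
  have hpow : 0 ≤ r ^ m := pow_nonneg hr m
  have hM0 : 0 ≤ M := (abs_nonneg _).trans (hM r (right_mem_Icc.2 hr))
  have hle : |∫ s in 0..r, s ^ m * φ s| ≤ r ^ m * M * |r - 0| := by
    refine intervalIntegral.norm_integral_le_of_norm_le_const (E := ℝ) fun s hs => ?_
    rw [uIoc_of_le hr] at hs
    rw [Real.norm_eq_abs, abs_mul, abs_of_nonneg (pow_nonneg hs.1.le m)]
    exact mul_le_mul (pow_le_pow_left₀ hs.1.le hs.2 m) (hM s (Ioc_subset_Icc_self hs))
      (abs_nonneg _) hpow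
  rw [sub_zero, abs_of_nonneg hr] at hle
  rw [abs_div, abs_of_nonneg hpow]
  exact div_le_of_le_mul₀ hpow (mul_nonneg hM0 hr) (by linarith)

theorem continuousOn_integral_pow_mul_div_pow {φ : ℝ → ℝ} {R : ℝ} (hφ : ContinuousOn φ (Icc 0 R))
    (m : ℕ) : ContinuousOn (fun r => (∫ s in 0..r, s ^ m * φ s) / r ^ m) (Icc 0 R) := by
  intro r hr
  rcases hr.1.eq_or_lt with rfl | hr0
  · obtain ⟨M, hM⟩ := isCompact_Icc.exists_bound_of_continuousOn hφ
    have hbound : ∀ r ∈ Icc 0 R, ‖(∫ s in 0..r, s ^ m * φ s) / r ^ m‖ ≤ M * r :=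
      fun r hr => abs_integral_pow_mul_div_pow_le hr.1
        (fun s hs => hM s ⟨hs.1, hs.2.trans hr.2⟩) m
    have hlim : Tendsto (fun r => M * r) (𝓝[Icc 0 R] 0) (𝓝 0) :=
      ((continuous_const_mul M).tendsto' 0 0 (mul_zero M)).mono_left nhdsWithin_le_nhds
    simpa only [ContinuousWithinAt, intervalIntegral.integral_same, zero_div] using
      squeeze_zero_norm' (eventually_mem_nhdsWithin.mono hbound) hlim
  · have hint : ContinuousOn (fun s => s ^ m * φ s) (Icc 0 R) := (continuousOn_pow m).mul hφ
    exact (hasDerivWithinAt_integral_of_continuousOn_Icc hint hr).continuousWithinAt.div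
      (continuousWithinAt_id.pow m) (pow_pos hr0 m).ne'

theorem exists_strictMono_tendsto_of_lipschitzWith {X Y : Type*} [PseudoMetricSpace X]
    [CompactSpace X] [MetricSpace Y] {K : ℝ≥0} {u : ℕ → X → Y} {s : Set Y}
    (hu : ∀ k, LipschitzWith K (u k)) (hs : IsCompact s) (hmem : ∀ k x, u k x ∈ s) :
    ∃ v : X → Y, Continuous v ∧ ∃ φ : ℕ → ℕ, StrictMono φ ∧
      ∀ x, Tendsto (fun k => u (φ k) x) atTop (𝓝 (v x)) := by
  let U : ℕ → BoundedContinuousFunction X Y := fun k =>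
    BoundedContinuousFunction.mkOfCompact ⟨u k, (hu k).continuous⟩
  have hcompact : IsCompact (closure (range U)) := by
    refine BoundedContinuousFunction.arzela_ascoli s hs _ ?_ ?_
    · rintro _ x ⟨k, rfl⟩
      exact hmem k x
    · refine (LipschitzWith.uniformEquicontinuous _ K ?_).equicontinuous
      rintro ⟨_, k, rfl⟩
      exact hu k
  obtain ⟨v, -, φ, hφ, hlim⟩ :=
    hcompact.tendsto_subseq fun k => subset_closure (mem_range_self (f := U) k)
  exact ⟨v, v.continuous, φ, hφ, fun x =>
    ((continuous_eval_const (F := BoundedContinuousFunction X Y) x).tendsto v).comp hlim⟩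

theorem exists_lipschitzOnWith_Icc_of_hasDerivWithinAt
    (hf : ∀ t ∈ Icc a b, HasDerivWithinAt f (f' t) (Icc a b) t)
    (hf' : ContinuousOn f' (Icc a b)) : ∃ K : ℝ≥0, LipschitzOnWith K f (Icc a b) := by
  obtain ⟨M, hM⟩ := isCompact_Icc.exists_bound_of_continuousOn hf'
  refine ⟨M.toNNReal,
    (convex_Icc a b).lipschitzOnWith_of_nnnorm_hasDerivWithin_le hf fun t ht => ?_⟩
  exact NNReal.coe_le_coe.1 ((hM t ht).trans (Real.le_coe_toNNReal M))

end Calculus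

/-- The Cauchy problem `u' = ψ (w / a)`, `w' = a * g u`, `u 0 = d`, `w 0 = 0` on `[0, 1]`, for a
profile `u` and its weighted flux `w`. With `ψ y = y ^ (1 / (p - 1))`, `a r = r ^ (N - 1)` and
`g s = s ^ (p - 1) - f s` it is the radial equation for nondecreasing profiles, whose Neumann
condition at `r = 1` is `w 1 = 0`. -/
structure IsShootingSolution (ψ g a : ℝ → ℝ) (d : ℝ) (u w : ℝ → ℝ) : Prop where
  profile_zero : u 0 = d
  flux_zero : w 0 = 0
  hasDerivWithinAt_profile :
    ∀ t ∈ Icc (0 : ℝ) 1, HasDerivWithinAt u (ψ (w t / a t)) (Icc 0 1) t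
  hasDerivWithinAt_flux : ∀ t ∈ Icc (0 : ℝ) 1, HasDerivWithinAt w (a t * g (u t)) (Icc 0 1) t

/-- The time-dependent vector field on the `(u, w)`-plane whose trajectories from `(d, 0)` are the
solutions of the Cauchy problem `IsShootingSolution`. -/
noncomputable def shootingField (ψ g a : ℝ → ℝ) (t : ℝ) (x : ℝ × ℝ) : ℝ × ℝ :=
  (ψ (x.2 / a t), a t * g x.1)

section WellPosedness

variable {ψ g a : ℝ → ℝ} {Kψ Kg : ℝ≥0} {Mψ Mg : ℝ}

theorem exists_lipschitzWith_shootingField (hψ : LipschitzWith Kψ ψ) (hg : LipschitzWith Kg g)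
    (ha : ContinuousOn a (Icc 0 1)) (hpos : ∀ t ∈ Icc (0 : ℝ) 1, 0 < a t) :
    ∃ K : ℝ≥0, ∀ t ∈ Icc (0 : ℝ) 1, LipschitzWith K (shootingField ψ g a t) := by
  have hcont : ContinuousOn (fun t => max (Kψ * (‖(a t)⁻¹‖₊ * 1)) (‖a t‖₊ * (Kg * 1)))
      (Icc 0 1) := by
    have hinv := ha.inv₀ fun t ht => (hpos t ht).ne'
    exact ContinuousOn.sup (continuousOn_const.mul (hinv.nnnorm.mul continuousOn_const))
      (ha.nnnorm.mul continuousOn_const)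
  obtain ⟨K, hK⟩ := isCompact_Icc.bddAbove_image hcont
  refine ⟨K, fun t ht => LipschitzWith.weaken ?_ (hK (mem_image_of_mem _ ht))⟩
  have hfst : LipschitzWith (Kψ * (‖(a t)⁻¹‖₊ * 1)) fun x : ℝ × ℝ => ψ (x.2 / a t) := by
    have := hψ.comp ((lipschitzWith_smul (a t)⁻¹).comp (LipschitzWith.prod_snd (α := ℝ)))
    simpa only [Function.comp_def, smul_eq_mul, inv_mul_eq_div] using this
  exact hfst.prodMk ((lipschitzWith_smul (a t)).comp (hg.comp LipschitzWith.prod_fst))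

theorem exists_isShootingSolution (hψ : LipschitzWith Kψ ψ) (hg : LipschitzWith Kg g)
    (hMψ : ∀ y, |ψ y| ≤ Mψ) (hMg : ∀ y, |g y| ≤ Mg)
    (ha : ContinuousOn a (Icc 0 1)) (hpos : ∀ t ∈ Icc (0 : ℝ) 1, 0 < a t) (d : ℝ) :
    ∃ u w, IsShootingSolution ψ g a d u w := by
  obtain ⟨K, hK⟩ := exists_lipschitzWith_shootingField hψ hg ha hpos
  obtain ⟨A, hA⟩ := isCompact_Icc.exists_bound_of_continuousOn ha
  let M : ℝ≥0 := (max Mψ (A * Mg)).toNNReal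
  have hPL : IsPicardLindelof (shootingField ψ g a) (tmin := 0) (tmax := 1) ⟨0, by simp⟩
      ((d, 0) : ℝ × ℝ) M 0 M K := by
    refine ⟨fun t ht => (hK t ht).lipschitzOnWith, fun x _ => ?_, fun t ht x _ => ?_, by simp⟩
    · exact (hψ.continuous.comp_continuousOn
        (continuousOn_const.div ha fun t ht => (hpos t ht).ne')).prodMk (ha.mul continuousOn_const)
    · refine le_trans (max_le_max (hMψ _) ?_) (Real.le_coe_toNNReal _)
      simp only [shootingField, norm_mul]
      exact mul_le_mul (hA t ht) (hMg _) (norm_nonneg _) ((norm_nonneg _).trans (hA t ht))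
  obtain ⟨x, hx0, hx⟩ := hPL.exists_eq_forall_mem_Icc_hasDerivWithinAt₀
  exact ⟨fun t => (x t).1, fun t => (x t).2, congrArg Prod.fst hx0, congrArg Prod.snd hx0,
    fun t ht => (hx t ht).fst, fun t ht => (hx t ht).snd⟩

theorem exists_dist_isShootingSolution_le (hψ : LipschitzWith Kψ ψ) (hg : LipschitzWith Kg g)
    (ha : ContinuousOn a (Icc 0 1)) (hpos : ∀ t ∈ Icc (0 : ℝ) 1, 0 < a t) :
    ∃ L : ℝ≥0, ∀ {d₁ d₂ : ℝ} {u₁ w₁ u₂ w₂ : ℝ → ℝ}, IsShootingSolution ψ g a d₁ u₁ w₁ →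
      IsShootingSolution ψ g a d₂ u₂ w₂ →
      ∀ t ∈ Icc (0 : ℝ) 1, dist (u₁ t, w₁ t) (u₂ t, w₂ t) ≤ L * dist d₁ d₂ := by
  obtain ⟨K, hK⟩ := exists_lipschitzWith_shootingField hψ hg ha hpos
  have htraj {d : ℝ} {u w : ℝ → ℝ} (h : IsShootingSolution ψ g a d u w) :
      ∀ t ∈ Icc (0 : ℝ) 1, HasDerivWithinAt (fun t => (u t, w t))
        (shootingField ψ g a t (u t, w t)) (Icc 0 1) t :=
    fun t ht => (h.hasDerivWithinAt_profile t ht).prodMk (h.hasDerivWithinAt_flux t ht)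
  have hright {d : ℝ} {u w : ℝ → ℝ} (h : IsShootingSolution ψ g a d u w) :
      ∀ t ∈ Ico (0 : ℝ) 1, HasDerivWithinAt (fun t => (u t, w t))
        (shootingField ψ g a t (u t, w t)) (Ici t) t :=
    fun t ht => (htraj h t (Ico_subset_Icc_self ht)).mono_of_mem_nhdsWithin
      (mem_of_superset (Icc_mem_nhdsGE ht.2) (Icc_subset_Icc_left ht.1))
  refine ⟨(Real.exp K).toNNReal, fun {d₁ d₂ u₁ w₁ u₂ w₂} h₁ h₂ t ht => ?_⟩
  have hinit : dist (u₁ 0, w₁ 0) (u₂ 0, w₂ 0) ≤ dist d₁ d₂ := by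
    simp [h₁.profile_zero, h₁.flux_zero, h₂.profile_zero, h₂.flux_zero, Prod.dist_eq]
  have hdist := dist_le_of_trajectories_ODE_of_mem (s := fun _ => univ)
    (fun t ht => (hK t (Ico_subset_Icc_self ht)).lipschitzOnWith)
    (fun t ht => (htraj h₁ t ht).continuousWithinAt) (hright h₁) (fun _ _ => mem_univ _)
    (fun t ht => (htraj h₂ t ht).continuousWithinAt) (hright h₂) (fun _ _ => mem_univ _)
    hinit t ht
  rw [Real.coe_toNNReal _ (Real.exp_pos _).le, mul_comm]
  refine hdist.trans ?_
  gcongr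
  exact mul_le_of_le_one_right K.2 (by linarith [ht.2])

end WellPosedness

namespace IsShootingSolution

variable {ψ g a u w : ℝ → ℝ} {c d η T Ψ : ℝ}

theorem continuousOn_profile (h : IsShootingSolution ψ g a d u w) : ContinuousOn u (Icc 0 1) :=
  continuousOn_of_forall_hasDerivWithinAt h.hasDerivWithinAt_profile

theorem continuousOn_flux (h : IsShootingSolution ψ g a d u w) : ContinuousOn w (Icc 0 1) :=
  continuousOn_of_forall_hasDerivWithinAt h.hasDerivWithinAt_flux

theorem const_of_apply_eq_zero (hψ : ψ 0 = 0) (hd : g d = 0) :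
    IsShootingSolution ψ g a d (fun _ => d) (fun _ => 0) where
  profile_zero := rfl
  flux_zero := rfl
  hasDerivWithinAt_profile t _ := by
    simpa only [zero_div, hψ] using hasDerivWithinAt_const t (Icc 0 1) d
  hasDerivWithinAt_flux t _ := by
    simpa only [hd, mul_zero] using hasDerivWithinAt_const t (Icc 0 1) (0 : ℝ)

theorem monotoneOn_profile (h : IsShootingSolution ψ g a d u w) (hψ : ∀ y, 0 ≤ ψ y) :
    MonotoneOn u (Icc 0 1) := fun _ hx _ hy hxy =>
  le_of_hasDerivWithinAt_nonneg h.hasDerivWithinAt_profile hx.1 hxy hy.2 fun _ _ => hψ _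

theorem le_profile (h : IsShootingSolution ψ g a d u w) (hψ : ∀ y, 0 ≤ ψ y) :
    ∀ t ∈ Icc (0 : ℝ) 1, d ≤ u t := fun t ht => by
  simpa only [h.profile_zero] using
    h.monotoneOn_profile hψ (left_mem_Icc.2 zero_le_one) ht ht.1

theorem profile_eq_of_flux_nonpos (h : IsShootingSolution ψ g a d u w)
    (hψ : ∀ y ≤ 0, ψ y = 0) (ha : ∀ t ∈ Ioc (0 : ℝ) 1, 0 < a t) {x y : ℝ} (hx : 0 ≤ x)
    (hxy : x ≤ y) (hy : y ≤ 1) (hw : ∀ t ∈ Ioo x y, w t ≤ 0) : u y = u x :=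
  eq_of_hasDerivWithinAt_eq_zero h.hasDerivWithinAt_profile hx hxy hy fun t ht =>
    hψ _ (div_nonpos_of_nonpos_of_nonneg (hw t ht)
      (ha t ⟨hx.trans_lt ht.1, ht.2.le.trans hy⟩).le)

/- While `w < 0` the profile is frozen, so `g u` is constant. At the last point where `w` attains a
negative minimum this constant is zero, so the minimum persists beyond that point. -/
theorem flux_nonneg (h : IsShootingSolution ψ g a d u w) (hψ : ∀ y ≤ 0, ψ y = 0)
    (ha : ∀ t ∈ Ioc (0 : ℝ) 1, 0 < a t) (hw : 0 ≤ w 1) : ∀ t ∈ Icc (0 : ℝ) 1, 0 ≤ w t := by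
  intro t₀ ht₀
  by_contra! hneg
  obtain ⟨x, hx, hmin⟩ := isCompact_Icc.exists_isMinOn ⟨t₀, ht₀⟩ h.continuousOn_flux
  have hwx : w x < 0 := (hmin ht₀).trans_lt hneg
  obtain ⟨y, ⟨hy, hyx : w y = w x⟩, hlast⟩ : ∃ y, IsGreatest (Icc 0 1 ∩ w ⁻¹' {w x}) y :=
    (isCompact_Icc.of_isClosed_subset (h.continuousOn_flux.preimage_isClosed_of_isClosed
      isClosed_Icc isClosed_singleton) inter_subset_left).exists_isGreatest ⟨x, hx, rfl⟩
  have hy0 : 0 < y := hy.1.lt_of_ne fun h0 => by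
    rw [← h0, h.flux_zero] at hyx
    exact hwx.ne' hyx
  have hy1 : y < 1 := hy.2.lt_of_ne fun h1 => by
    rw [h1] at hyx
    exact (hyx.trans_lt hwx).not_ge hw
  have hnhds : Icc (0 : ℝ) 1 ∈ 𝓝 y := Icc_mem_nhds hy0 hy1
  have hcrit : g (u y) = 0 := by
    have hlocal : IsLocalMin w y := by
      filter_upwards [hnhds] with t ht using hyx.trans_le (hmin ht)
    have := hlocal.hasDerivAt_eq_zero ((h.hasDerivWithinAt_flux y hy).hasDerivAt hnhds)
    exact (mul_eq_zero.1 this).resolve_left (ha y ⟨hy0, hy.2⟩).ne'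
  obtain ⟨z, hyz, hz⟩ : ∃ z > y, Icc y z ⊆ {t | t ∈ Icc (0 : ℝ) 1 ∧ w t < 0} := by
    refine mem_nhdsGE_iff_exists_Icc_subset.1 (mem_nhdsWithin_of_mem_nhds ?_)
    exact Filter.inter_mem hnhds ((h.continuousOn_flux.continuousAt hnhds).eventually
      (gt_mem_nhds (hyx.trans_lt hwx)))
  have hz1 : z ∈ Icc (0 : ℝ) 1 := (hz (right_mem_Icc.2 hyz.le)).1
  have hfrozen : ∀ t ∈ Ioo y z, u t = u y := fun t ht =>
    h.profile_eq_of_flux_nonpos hψ ha hy.1 ht.1.le (ht.2.le.trans hz1.2) fun s hs =>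
      (hz ⟨hs.1.le, hs.2.le.trans ht.2.le⟩).2.le
  have hwz : w z = w y := eq_of_hasDerivWithinAt_eq_zero h.hasDerivWithinAt_flux hy.1 hyz.le hz1.2
    fun t ht => by rw [hfrozen t ht, hcrit, mul_zero]
  exact (hlast ⟨hz1, hwz.trans hyx⟩).not_gt hyz

theorem flux_div_le (h : IsShootingSolution ψ g a d u w) (hψ : ∀ y, 0 ≤ ψ y)
    (ha : ∀ t ∈ Ioc (0 : ℝ) 1, 0 < a t) (hmono : MonotoneOn a (Icc 0 1)) (hη : 0 ≤ η)
    (hg : ∀ s ∈ Icc d T, g s ≤ η) {r : ℝ} (hr : r ∈ Icc (0 : ℝ) 1) (hu : u r ≤ T) :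
    w r / a r ≤ η := by
  rcases hr.1.eq_or_lt with rfl | hr0
  · rwa [h.flux_zero, zero_div]
  have har : 0 < a r := ha r ⟨hr0, hr.2⟩
  have hle := sub_le_mul_sub_of_hasDerivWithinAt_le (C := a r * η) h.hasDerivWithinAt_flux
    le_rfl hr.1 hr.2 fun t ht => by
      have ht' : t ∈ Icc (0 : ℝ) 1 := ⟨ht.1.le, ht.2.le.trans hr.2⟩
      have hgt : g (u t) ≤ η := hg _
        ⟨h.le_profile hψ t ht', (h.monotoneOn_profile hψ ht' hr ht.2.le).trans hu⟩
      exact (mul_le_mul_of_nonneg_left hgt (ha t ⟨ht.1, ht'.2⟩).le).trans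
        (mul_le_mul_of_nonneg_right (hmono ht' hr ht.2.le) hη)
  rw [h.flux_zero, sub_zero, sub_zero] at hle
  rw [div_le_iff₀' har]
  exact hle.trans (mul_le_of_le_one_right (mul_nonneg har.le hη) hr.2)

theorem profile_le (h : IsShootingSolution ψ g a d u w) (hψ : ∀ y, 0 ≤ ψ y)
    (ha : ∀ t ∈ Ioc (0 : ℝ) 1, 0 < a t) (hmono : MonotoneOn a (Icc 0 1)) (hη : 0 ≤ η)
    (hg : ∀ s ∈ Icc d T, g s ≤ η) (hΨ : ∀ y ≤ η, ψ y ≤ Ψ) (hT : d + Ψ < T) :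
    ∀ t ∈ Icc (0 : ℝ) 1, u t ≤ T := by
  intro r hr
  by_contra! hlt
  have hΨ0 : 0 ≤ Ψ := (hψ η).trans (hΨ η le_rfl)
  obtain ⟨s, hs, hsT⟩ : T ∈ u '' Icc 0 r :=
    intermediate_value_Icc hr.1 (h.continuousOn_profile.mono (Icc_subset_Icc_right hr.2))
      ⟨by rw [h.profile_zero]; linarith, hlt.le⟩
  have hs1 : s ≤ 1 := hs.2.trans hr.2
  have hle := sub_le_mul_sub_of_hasDerivWithinAt_le (C := Ψ) h.hasDerivWithinAt_profile
    le_rfl hs.1 hs1 fun t ht => by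
      have ht' : t ∈ Icc (0 : ℝ) 1 := ⟨ht.1.le, ht.2.le.trans hs1⟩
      exact hΨ _ (h.flux_div_le hψ ha hmono hη hg ht'
        ((h.monotoneOn_profile hψ ht' ⟨hs.1, hs1⟩ ht.2.le).trans hsT.le))
  rw [h.profile_zero, hsT, sub_zero] at hle
  linarith [mul_le_of_le_one_right hΨ0 hs1]

theorem flux_one_pos (h : IsShootingSolution ψ g a d u w) (hψ : ∀ y, 0 ≤ ψ y)
    (ha : ∀ t ∈ Ioc (0 : ℝ) 1, 0 < a t) (hg : ∀ s ∈ Ico d c, 0 < g s) (hu : u 1 < c) :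
    0 < w 1 := by
  obtain ⟨t, ht, hslope⟩ := exists_sub_eq_mul_of_hasDerivWithinAt_Icc h.hasDerivWithinAt_flux
    le_rfl zero_lt_one le_rfl
  rw [h.flux_zero, sub_zero, sub_zero, mul_one] at hslope
  have ht' : t ∈ Icc (0 : ℝ) 1 := Ioo_subset_Icc_self ht
  rw [hslope]
  exact mul_pos (ha t (Ioo_subset_Ioc_self ht)) (hg _ ⟨h.le_profile hψ t ht',
    (h.monotoneOn_profile hψ ht' (right_mem_Icc.2 zero_le_one) ht.2.le).trans_lt hu⟩)

end IsShootingSolution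

/-- `g` crosses zero at `c` downwards, at slope at least `μ` in absolute value over the window
`[c - δ, c + δ]`. For `g s = s ^ (p - 1) - f s` this is the quantitative form of (f3) at `c`. -/
structure DecreasingCrossing (g : ℝ → ℝ) (c δ μ : ℝ) : Prop where
  radius_pos : 0 < δ
  slope_pos : 0 < μ
  mul_sub_le : ∀ s ∈ Icc (c - δ) c, μ * (c - s) ≤ g s
  le_neg_mul_sub : ∀ s ∈ Icc c (c + δ), g s ≤ -(μ * (s - c))

namespace DecreasingCrossing

variable {g h : ℝ → ℝ} {c δ μ : ℝ}

theorem congr (hg : DecreasingCrossing g c δ μ) (hgh : EqOn g h (Icc (c - δ) (c + δ))) :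
    DecreasingCrossing h c δ μ where
  radius_pos := hg.radius_pos
  slope_pos := hg.slope_pos
  mul_sub_le s hs := by
    rw [← hgh ⟨hs.1, hs.2.trans (le_add_of_nonneg_right hg.radius_pos.le)⟩]
    exact hg.mul_sub_le s hs
  le_neg_mul_sub s hs := by
    rw [← hgh ⟨(sub_le_self c hg.radius_pos.le).trans hs.1, hs.2⟩]
    exact hg.le_neg_mul_sub s hs

theorem apply_pos (hg : DecreasingCrossing g c δ μ) {s : ℝ} (hs : s ∈ Ico (c - δ) c) : 0 < g s :=
  (mul_pos hg.slope_pos (sub_pos.2 hs.2)).trans_le (hg.mul_sub_le s (Ico_subset_Icc_self hs))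

theorem apply_eq_zero (hg : DecreasingCrossing g c δ μ) : g c = 0 := by
  have hlower := hg.mul_sub_le c ⟨sub_le_self c hg.radius_pos.le, le_rfl⟩
  have hupper := hg.le_neg_mul_sub c ⟨le_rfl, le_add_of_nonneg_right hg.radius_pos.le⟩
  simp only [sub_self, mul_zero, neg_zero] at hlower hupper
  exact hupper.antisymm hlower

theorem exists_of_hasDerivAt {g' R : ℝ} (hg : HasDerivAt g g' c) (hc : g c = 0) (hg' : g' < 0)
    (hR : 0 < R) : ∃ δ μ, δ ≤ R ∧ DecreasingCrossing g c δ μ := by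
  have hslope : ∀ᶠ s in 𝓝[≠] c, slope g c s < g' / 2 :=
    hg.tendsto_slope.eventually (gt_mem_nhds (by linarith))
  obtain ⟨δ, hδ, hball⟩ := Metric.eventually_nhds_iff.1 (eventually_nhdsWithin_iff.1 hslope)
  have hsecant {s : ℝ} (hne : s ≠ c) (hs : |s - c| ≤ min R (δ / 2)) :
      slope g c s * (s - c) = g s ∧ slope g c s < g' / 2 := by
    refine ⟨?_, hball ?_ hne⟩
    · rw [slope_def_field, hc, sub_zero, div_mul_cancel₀ _ (sub_ne_zero.2 hne)]
    · rw [Real.dist_eq]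
      linarith [min_le_right R (δ / 2)]
  refine ⟨min R (δ / 2), -(g' / 2), min_le_left _ _,
    lt_min hR (half_pos hδ), by linarith, fun s hs => ?_, fun s hs => ?_⟩
  · rcases hs.2.eq_or_lt with rfl | hlt
    · simp [hc]
    obtain ⟨hg_eq, hlt'⟩ := hsecant hlt.ne (by rw [abs_le]; constructor <;> linarith [hs.1])
    nlinarith
  · rcases hs.1.eq_or_lt with rfl | hlt
    · simp [hc]
    obtain ⟨hg_eq, hlt'⟩ := hsecant hlt.ne' (by rw [abs_le]; constructor <;> linarith [hs.2])
    nlinarith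

theorem exists_last_zero (hg : DecreasingCrossing g c δ μ) {a : ℝ} (hac : a ≤ c - δ)
    (hcont : ContinuousOn g (Icc a c)) (ha : g a ≤ 0) :
    ∃ z ∈ Ico a c, g z = 0 ∧ ∀ s ∈ Ioo z c, 0 < g s := by
  have hcδ : c - δ < c := sub_lt_self c hg.radius_pos
  have hcont' : ContinuousOn g (Icc a (c - δ)) := hcont.mono (Icc_subset_Icc_right hcδ.le)
  obtain ⟨z, ⟨hz, hgz : g z ≤ 0⟩, hlast⟩ : ∃ z, IsGreatest (Icc a (c - δ) ∩ g ⁻¹' Iic 0) z :=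
    (isCompact_Icc.of_isClosed_subset (hcont'.preimage_isClosed_of_isClosed
      isClosed_Icc isClosed_Iic) inter_subset_left).exists_isGreatest ⟨a, left_mem_Icc.2 hac, ha⟩
  have hright : 0 < g (c - δ) := hg.apply_pos ⟨le_rfl, hcδ⟩
  refine ⟨z, ⟨hz.1, hz.2.trans_lt hcδ⟩, ?_, fun s hs => ?_⟩
  · obtain ⟨s, hs, hgs⟩ := intermediate_value_Icc hz.2
      (hcont'.mono (Icc_subset_Icc_left hz.1)) ⟨hgz, hright.le⟩
    rwa [← (hlast ⟨⟨hz.1.trans hs.1, hs.2⟩, hgs.le⟩).antisymm hs.1]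
  · rcases le_total s (c - δ) with hle | hge
    · exact not_le.1 fun hneg => (hlast ⟨⟨hz.1.trans hs.1.le, hle⟩, hneg⟩).not_gt hs.1
    · exact hg.apply_pos ⟨hge, hs.2⟩

end DecreasingCrossing

section Rotation

variable {u u' w w' : ℝ → ℝ} {α β κ k U : ℝ}

/- On the first half `w` grows at rate at least `k * (U - u mid)`, which on the second half drives
`u` up by more than `U - u mid` unless that gap is not positive. -/
theorem le_midpoint_of_le_hasDerivWithinAt (hαβ : α ≤ β) (hκ : 0 ≤ κ) (hk : 0 ≤ k)
    (hlong : 4 < κ * k * (β - α) ^ 2)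
    (hu : ∀ t ∈ Icc α β, HasDerivWithinAt u (u' t) (Icc α β) t)
    (hw : ∀ t ∈ Icc α β, HasDerivWithinAt w (w' t) (Icc α β) t)
    (hu' : ∀ t ∈ Icc α β, κ * w t ≤ u' t) (hw' : ∀ t ∈ Icc α β, k * (U - u t) ≤ w' t)
    (hwα : 0 ≤ w α) (huU : ∀ t ∈ Icc α β, u t ≤ U) :
    U ≤ u ((α + β) / 2) ∧ w ((α + β) / 2) ≤ 0 := by
  set mid := (α + β) / 2 with hmid
  have hα : α ≤ mid := by linarith
  have hβ : mid ≤ β := by linarith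
  have hwmono {x y : ℝ} (hx : α ≤ x) (hxy : x ≤ y) (hy : y ≤ β) : w x ≤ w y :=
    le_of_hasDerivWithinAt_nonneg hw hx hxy hy fun t ht =>
      have ht' : t ∈ Icc α β := ⟨hx.trans ht.1.le, ht.2.le.trans hy⟩
      (mul_nonneg hk (sub_nonneg.2 (huU t ht'))).trans (hw' t ht')
  have humono {x y : ℝ} (hx : α ≤ x) (hxy : x ≤ y) (hy : y ≤ β) : u x ≤ u y :=
    le_of_hasDerivWithinAt_nonneg hu hx hxy hy fun t ht =>
      have ht' : t ∈ Icc α β := ⟨hx.trans ht.1.le, ht.2.le.trans hy⟩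
      (mul_nonneg hκ (hwα.trans (hwmono le_rfl ht'.1 ht'.2))).trans (hu' t ht')
  have hfirst : k * (U - u mid) * (mid - α) ≤ w mid - w α :=
    mul_sub_le_sub_of_le_hasDerivWithinAt hw le_rfl hα hβ fun t ht =>
      (mul_le_mul_of_nonneg_left
        (sub_le_sub_left (humono ht.1.le ht.2.le hβ) U) hk).trans
        (hw' t ⟨ht.1.le, ht.2.le.trans hβ⟩)
  have hsecond : κ * w mid * (β - mid) ≤ u β - u mid :=
    mul_sub_le_sub_of_le_hasDerivWithinAt hu hα hβ le_rfl fun t ht =>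
      (mul_le_mul_of_nonneg_left (hwmono hα ht.1.le ht.2.le) hκ).trans
        (hu' t ⟨hα.trans ht.1.le, ht.2.le⟩)
  have huβ : u β ≤ U := huU β ⟨hαβ, le_rfl⟩
  have hhalf : mid - α = β - mid := by linarith
  have hlong' : 1 < κ * k * (β - mid) ^ 2 := by
    rw [show β - mid = (β - α) / 2 by rw [hmid]; ring]
    linarith
  have hpos : 0 < κ * (β - mid) := by
    refine (mul_nonneg hκ (sub_nonneg.2 hβ)).lt_of_ne fun h0 => ?_
    have : κ * k * (β - mid) ^ 2 = 0 := by linear_combination (-(k * (β - mid))) * h0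
    linarith
  have hgap : κ * k * (β - mid) ^ 2 * (U - u mid) ≤ U - u mid := by
    rw [hhalf] at hfirst
    have := mul_le_mul_of_nonneg_left (hfirst.trans (sub_le_self _ hwα)) hpos.le
    linarith
  have hU : U ≤ u mid := by nlinarith
  exact ⟨hU, nonpos_of_mul_nonpos_right (by linarith : κ * (β - mid) * w mid ≤ 0) hpos⟩

theorem midpoint_le_of_hasDerivWithinAt_le (hαβ : α ≤ β) (hκ : 0 ≤ κ) (hk : 0 ≤ k)
    (hlong : 4 < κ * k * (β - α) ^ 2)
    (hu : ∀ t ∈ Icc α β, HasDerivWithinAt u (u' t) (Icc α β) t)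
    (hw : ∀ t ∈ Icc α β, HasDerivWithinAt w (w' t) (Icc α β) t)
    (hu' : ∀ t ∈ Icc α β, κ * w t ≤ u' t) (hw' : ∀ t ∈ Icc α β, w' t ≤ -(k * (u t - U)))
    (hwβ : 0 ≤ w β) (huU : ∀ t ∈ Icc α β, U ≤ u t) : u ((α + β) / 2) ≤ U := by
  have hmem {t : ℝ} (ht : t ∈ Icc α β) : α + β - t ∈ Icc α β :=
    ⟨by linarith [ht.2], by linarith [ht.1]⟩
  have hreflect {φ φ' : ℝ → ℝ} (hφ : ∀ t ∈ Icc α β, HasDerivWithinAt φ (φ' t) (Icc α β) t)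
      (t : ℝ) (ht : t ∈ Icc α β) :
      HasDerivWithinAt (fun t => φ (α + β - t)) (-φ' (α + β - t)) (Icc α β) t := by
    have hrefl := (hasDerivWithinAt_id t (Icc α β)).const_sub (α + β)
    simpa [Function.comp_def] using (hφ _ (hmem ht)).comp t hrefl fun s hs => hmem hs
  have hmid := le_midpoint_of_le_hasDerivWithinAt (u := fun t => -u (α + β - t))
    (w := fun t => w (α + β - t)) (U := -U) hαβ hκ hk hlong
    (fun t ht => (hreflect hu t ht).neg) (hreflect hw)
    (fun t ht => by simpa using hu' _ (hmem ht))
    (fun t ht => by linarith [hw' _ (hmem ht)])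
    (by simpa using hwβ) (fun t ht => neg_le_neg (huU _ (hmem ht)))
  have hfix : α + β - (α + β) / 2 = (α + β) / 2 := by ring
  simpa only [hfix, neg_le_neg_iff] using hmid.1

theorem div_mul_le_apply_div {ψ : ℝ → ℝ} {K A η x y : ℝ} (hψK : ∀ y ∈ Icc 0 η, K * y ≤ ψ y)
    (hK : 0 ≤ K) (hx : 0 < x) (hxA : x ≤ A) (hy : 0 ≤ y) (hη : y / x ≤ η) :
    K / A * y ≤ ψ (y / x) := by
  refine le_trans ?_ (hψK _ ⟨div_nonneg hy hx.le, hη⟩)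
  rw [div_mul_eq_mul_div, mul_div_assoc]
  exact mul_le_mul_of_nonneg_left (div_le_div_of_nonneg_left hy hx hxA) hK

end Rotation

namespace IsShootingSolution

variable {ψ g a u w : ℝ → ℝ} {c d δ μ η κ K A b : ℝ}

theorem lt_profile_half (h : IsShootingSolution ψ g a d u w) (hg : DecreasingCrossing g c δ μ)
    (hd : d ∈ Ico (c - δ) c) (hψ : ∀ y, 0 ≤ ψ y) (hψ0 : ∀ y ≤ 0, ψ y = 0)
    (ha : ∀ t ∈ Ioc (0 : ℝ) 1, 0 < a t) (hw : ∀ t ∈ Icc (0 : ℝ) 1, 0 ≤ w t) (hκ : 0 ≤ κ)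
    (hspeed : ∀ t ∈ Ioc (0 : ℝ) 1, κ * w t ≤ ψ (w t / a t)) (hb : 0 ≤ b)
    (hba : ∀ t ∈ Icc (1 / 4 : ℝ) 1, b ≤ a t) (hsteep : 64 < κ * (b * μ)) : c < u (1 / 2) := by
  by_contra! hle
  have hpos : Icc (1 / 4 : ℝ) (1 / 2) ⊆ Ioc 0 1 := fun t ht =>
    ⟨by linarith [ht.1], by linarith [ht.2]⟩
  have hsub : Icc (1 / 4 : ℝ) (1 / 2) ⊆ Icc 0 1 := hpos.trans Ioc_subset_Icc_self
  have hu : ∀ t ∈ Icc (0 : ℝ) (1 / 2), u t ∈ Icc (c - δ) c := fun t ht =>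
    have ht' : t ∈ Icc (0 : ℝ) 1 := ⟨ht.1, ht.2.trans (by norm_num)⟩
    ⟨hd.1.trans (h.le_profile hψ t ht'),
      (h.monotoneOn_profile hψ ht' ⟨by norm_num, by norm_num⟩ ht.2).trans hle⟩
  have hgu {t : ℝ} (ht : t ∈ Icc (0 : ℝ) (1 / 2)) : μ * (c - u t) ≤ g (u t) :=
    hg.mul_sub_le _ (hu t ht)
  have hgap {t : ℝ} (ht : t ∈ Icc (0 : ℝ) (1 / 2)) : 0 ≤ μ * (c - u t) :=
    mul_nonneg hg.slope_pos.le (sub_nonneg.2 (hu t ht).2)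
  obtain ⟨hcu, hw_mid⟩ := le_midpoint_of_le_hasDerivWithinAt (U := c) (κ := κ) (k := b * μ)
    (by norm_num) hκ (mul_nonneg hb hg.slope_pos.le) (by linarith)
    (fun t ht => (h.hasDerivWithinAt_profile t (hsub ht)).mono hsub)
    (fun t ht => (h.hasDerivWithinAt_flux t (hsub ht)).mono hsub)
    (fun t ht => hspeed t (hpos ht))
    (fun t ht => by
      have ht' : t ∈ Icc (0 : ℝ) (1 / 2) := ⟨(hsub ht).1, ht.2⟩
      rw [mul_assoc]
      exact mul_le_mul (hba t ⟨ht.1, (hsub ht).2⟩) (hgu ht') (hgap ht') (ha t (hpos ht)).le)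
    (hw _ (hsub (left_mem_Icc.2 (by norm_num))))
    (fun t ht => (hu t ⟨(hsub ht).1, ht.2⟩).2)
  rw [show ((1 : ℝ) / 4 + 1 / 2) / 2 = 3 / 8 by norm_num] at hcu hw_mid
  have hw_le : ∀ t ∈ Ioo (0 : ℝ) (3 / 8), w t ≤ 0 := fun t ht =>
    (le_of_hasDerivWithinAt_nonneg h.hasDerivWithinAt_flux ht.1.le ht.2.le (by norm_num)
      fun s hs => by
        have hs' : s ∈ Icc (0 : ℝ) (1 / 2) := ⟨(ht.1.trans hs.1).le, by linarith [hs.2]⟩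
        exact mul_nonneg (ha s ⟨ht.1.trans hs.1, by linarith [hs'.2]⟩).le
          ((hgap hs').trans (hgu hs'))).trans hw_mid
  have hfrozen : u (3 / 8) = d := by
    rw [← h.profile_zero]
    exact h.profile_eq_of_flux_nonpos hψ0 ha le_rfl (by norm_num) (by norm_num) hw_le
  exact (hcu.trans_eq hfrozen).not_gt hd.2

theorem flux_one_neg_of_lt_profile_half (h : IsShootingSolution ψ g a d u w)
    (hg : DecreasingCrossing g c δ μ) (hψ : ∀ y, 0 ≤ ψ y)
    (hu : ∀ t ∈ Icc (0 : ℝ) 1, u t ≤ c + δ) (hcu : c < u (1 / 2)) (hκ : 0 ≤ κ)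
    (hspeed : ∀ t ∈ Ioc (0 : ℝ) 1, κ * w t ≤ ψ (w t / a t)) (hb : 0 ≤ b)
    (hba : ∀ t ∈ Icc (1 / 4 : ℝ) 1, b ≤ a t) (hsteep : 64 < κ * (b * μ)) : w 1 < 0 := by
  by_contra! hw1
  have hpos : Icc (1 / 2 : ℝ) 1 ⊆ Ioc 0 1 := fun t ht => ⟨by linarith [ht.1], ht.2⟩
  have hsub : Icc (1 / 2 : ℝ) 1 ⊆ Icc 0 1 := hpos.trans Ioc_subset_Icc_self
  have hge : ∀ t ∈ Icc (1 / 2 : ℝ) 1, u (1 / 2) ≤ u t := fun t ht =>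
    h.monotoneOn_profile hψ ⟨by norm_num, by norm_num⟩ (hsub ht) ht.1
  have hmid := midpoint_le_of_hasDerivWithinAt_le (U := c) (κ := κ) (k := b * μ)
    (by norm_num) hκ (mul_nonneg hb hg.slope_pos.le) (by linarith)
    (fun t ht => (h.hasDerivWithinAt_profile t (hsub ht)).mono hsub)
    (fun t ht => (h.hasDerivWithinAt_flux t (hsub ht)).mono hsub)
    (fun t ht => hspeed t (hpos ht))
    (fun t ht => by
      have hct : c ≤ u t := hcu.le.trans (hge t ht)
      have hgap : 0 ≤ μ * (u t - c) := mul_nonneg hg.slope_pos.le (sub_nonneg.2 hct)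
      have hbt : b ≤ a t := hba t ⟨by linarith [ht.1], ht.2⟩
      have hgu : μ * (u t - c) ≤ -g (u t) := by
        linarith [hg.le_neg_mul_sub _ ⟨hct, hu t (hsub ht)⟩]
      linarith [mul_le_mul hbt hgu hgap (hb.trans hbt)])
    hw1 (fun t ht => hcu.le.trans (hge t ht))
  exact (hge _ ⟨by norm_num, by norm_num⟩).not_gt (hmid.trans_lt hcu)

/- If `w 1 ≥ 0`, then `0 ≤ w / a ≤ η` throughout, where `ψ` is steeper than `K`. The trajectory is
then so fast around `(c, 0)` that it passes `u = c` before `r = 1 / 2`, and the reflected argument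
on `[1 / 2, 1]` brings `w` below `0`. -/
theorem flux_one_neg (h : IsShootingSolution ψ g a d u w) (hg : DecreasingCrossing g c δ μ)
    (hd : d ∈ Ico (c - δ) c) (hψ : ∀ y, 0 ≤ ψ y) (hψ0 : ∀ y ≤ 0, ψ y = 0)
    (ha : ∀ t ∈ Ioc (0 : ℝ) 1, 0 < a t) (hmono : MonotoneOn a (Icc 0 1)) (hη : 0 ≤ η)
    (hgη : ∀ s ∈ Icc d c, g s ≤ η) (hψδ : ∀ y ≤ η, ψ y ≤ δ) (hK : 0 ≤ K)
    (hψK : ∀ y ∈ Icc 0 η, K * y ≤ ψ y) (haA : ∀ t ∈ Ioc (0 : ℝ) 1, a t ≤ A) (hb : 0 ≤ b)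
    (hba : ∀ t ∈ Icc (1 / 4 : ℝ) 1, b ≤ a t) (hsteep : 64 * A < K * b * μ) : w 1 < 0 := by
  by_contra! hw1
  have hw : ∀ t ∈ Icc (0 : ℝ) 1, 0 ≤ w t := h.flux_nonneg hψ0 ha hw1
  have hgη' : ∀ s ∈ Icc d (c + δ), g s ≤ η := fun s hs => by
    rcases le_total s c with hsc | hcs
    · exact hgη s ⟨hs.1, hsc⟩
    · have := hg.le_neg_mul_sub s ⟨hcs, hs.2⟩
      nlinarith [hg.slope_pos]
  have hu_le : ∀ t ∈ Icc (0 : ℝ) 1, u t ≤ c + δ :=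
    h.profile_le hψ ha hmono hη hgη' hψδ (add_lt_add_left hd.2 δ)
  have hspeed : ∀ t ∈ Ioc (0 : ℝ) 1, K / A * w t ≤ ψ (w t / a t) := fun t ht =>
    have ht' : t ∈ Icc (0 : ℝ) 1 := Ioc_subset_Icc_self ht
    div_mul_le_apply_div hψK hK (ha t ht) (haA t ht) (hw t ht')
      (h.flux_div_le hψ ha hmono hη hgη' ht' (hu_le t ht'))
  have hA : 0 < A := have h1 : (1 : ℝ) ∈ Ioc 0 1 := right_mem_Ioc.2 zero_lt_one
    (ha 1 h1).trans_le (haA 1 h1)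
  have hκ : 0 ≤ K / A := div_nonneg hK hA.le
  have hsteep' : 64 < K / A * (b * μ) := by
    rwa [div_mul_eq_mul_div, lt_div_iff₀ hA, ← mul_assoc]
  have hcu : c < u (1 / 2) := h.lt_profile_half hg hd hψ hψ0 ha hw hκ hspeed hb hba hsteep'
  exact hw1.not_gt
    (h.flux_one_neg_of_lt_profile_half hg hψ hu_le hcu hκ hspeed hb hba hsteep')

end IsShootingSolution

theorem exists_isShootingSolution_flux_one_eq_zero {ψ g a : ℝ → ℝ} {Kψ Kg : ℝ≥0}
    {Mψ Mg z c d₁ : ℝ} (hψL : LipschitzWith Kψ ψ) (hgL : LipschitzWith Kg g)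
    (hMψ : ∀ y, |ψ y| ≤ Mψ) (hMg : ∀ y, |g y| ≤ Mg) (ha : ContinuousOn a (Icc 0 1))
    (hpos : ∀ t ∈ Icc (0 : ℝ) 1, 0 < a t) (hψ : ∀ y, 0 ≤ ψ y) (hψ0 : ψ 0 = 0) (hz : g z = 0)
    (hg : ∀ s ∈ Ioo z c, 0 < g s) (hd₁ : d₁ ∈ Ioo z c)
    (hneg : ∀ u w, IsShootingSolution ψ g a d₁ u w → w 1 < 0) :
    ∃ d ∈ Icc z d₁, ∃ u w, IsShootingSolution ψ g a d u w ∧ w 1 = 0 ∧ c ≤ u 1 := by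
  choose u w h using exists_isShootingSolution hψL hgL hMψ hMg ha hpos
  obtain ⟨L, hL⟩ := exists_dist_isShootingSolution_le hψL hgL ha hpos
  have hend : LipschitzWith L fun d => (u d 1, w d 1) :=
    LipschitzWith.of_dist_le_mul fun d₁ d₂ => hL (h d₁) (h d₂) 1 (right_mem_Icc.2 zero_le_one)
  have hu : Continuous fun d => u d 1 := continuous_fst.comp hend.continuous
  have hw : Continuous fun d => w d 1 := continuous_snd.comp hend.continuous
  have hflux_pos {d : ℝ} (hzd : z < d) (hlt : u d 1 < c) : 0 < w d 1 :=
    (h d).flux_one_pos hψ (fun t ht => hpos t (Ioc_subset_Icc_self ht))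
      (fun s hs => hg s ⟨hzd.trans_le hs.1, hs.2⟩) hlt
  have huz : u z 1 = z := by
    have := hL (h z) (.const_of_apply_eq_zero hψ0 hz) 1 (right_mem_Icc.2 zero_le_one)
    rw [dist_self, mul_zero] at this
    exact congrArg Prod.fst (dist_le_zero.1 this)
  have hnear : ∀ᶠ d in 𝓝[>] z, u d 1 < c :=
    (hu.tendsto z).mono_left nhdsWithin_le_nhds |>.eventually
      (gt_mem_nhds (huz.trans_lt (hd₁.1.trans hd₁.2)))
  obtain ⟨d₂, hlt, hd₂⟩ := (hnear.and (Ioo_mem_nhdsGT hd₁.1)).exists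
  obtain ⟨d, hd, hroot⟩ := intermediate_value_Icc' hd₂.2.le hw.continuousOn
    ⟨(hneg _ _ (h d₁)).le, (hflux_pos hd₂.1 hlt).le⟩
  have hzd : z < d := hd₂.1.trans_le hd.1
  exact ⟨d, ⟨hzd.le, hd.2⟩, u d, w d, h d, hroot,
    not_lt.1 fun hlt => (hflux_pos hzd hlt).ne' hroot⟩

/-- A bounded Lipschitz approximation of `y ↦ y ^ q`, `0 < q < 1`, on `[0, Y]`: the power is shifted
by `ε` away from its singularity and frozen outside `[0, Y]`. -/
noncomputable def regPow (q Y ε y : ℝ) : ℝ := (max 0 (min Y y) + ε) ^ q - ε ^ q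

section RegPow

variable {q Y ε y : ℝ}

theorem regPow_of_nonpos (hy : y ≤ 0) : regPow q Y ε y = 0 := by
  simp [regPow, max_eq_left ((min_le_right Y y).trans hy)]

theorem regPow_of_mem (hy : y ∈ Icc 0 Y) : regPow q Y ε y = (y + ε) ^ q - ε ^ q := by
  rw [regPow, min_eq_right hy.2, max_eq_right hy.1]

theorem regPow_nonneg (hq : 0 ≤ q) (hε : 0 ≤ ε) : 0 ≤ regPow q Y ε y :=
  sub_nonneg.2 (rpow_le_rpow hε (le_add_of_nonneg_left (le_max_left _ _)) hq)

theorem regPow_le_rpow {B : ℝ} (hq : 0 ≤ q) (hε : 0 ≤ ε) (hB : max 0 (min Y y) + ε ≤ B) :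
    regPow q Y ε y ≤ B ^ q :=
  (sub_le_self _ (rpow_nonneg hε q)).trans
    (rpow_le_rpow (add_nonneg (le_max_left _ _) hε) hB hq)

theorem regPow_le_rpow_add_one (hq : 0 ≤ q) (hY : 0 ≤ Y) (hε : ε ∈ Ioc 0 1) :
    regPow q Y ε y ≤ (Y + 1) ^ q :=
  regPow_le_rpow hq hε.1.le (add_le_add (max_le hY (min_le_left _ _)) hε.2)

theorem hasDerivAt_add_rpow (hy : 0 < y + ε) :
    HasDerivAt (fun y => (y + ε) ^ q) (q * (y + ε) ^ (q - 1)) y := by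
  simpa using ((hasDerivAt_id y).add_const ε).rpow_const (p := q) (Or.inl hy.ne')

theorem exists_lipschitzWith_regPow (hε : 0 < ε) : ∃ K, LipschitzWith K (regPow q Y ε) := by
  obtain ⟨K, hK⟩ := exists_lipschitzOnWith_Icc_of_hasDerivWithinAt
    (f := fun y => (y + ε) ^ q) (f' := fun y => q * (y + ε) ^ (q - 1)) (a := 0) (b := max 0 Y)
    (fun y hy => (hasDerivAt_add_rpow (by linarith [hy.1])).hasDerivWithinAt)
    (continuousOn_const.mul ((continuousOn_id.add continuousOn_const).rpow_const
      fun y hy => Or.inl (add_pos_of_nonneg_of_pos hy.1 hε).ne'))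
  have hclamp : LipschitzWith 1 fun y : ℝ => max 0 (min Y y) :=
    (LipschitzWith.id.const_min Y).const_max 0
  have hmem (y : ℝ) : max 0 (min Y y) ∈ Icc 0 (max 0 Y) :=
    ⟨le_max_left _ _, max_le_max_left 0 (min_le_left _ _)⟩
  refine ⟨K, LipschitzWith.of_dist_le_mul fun x y => ?_⟩
  calc dist (regPow q Y ε x) (regPow q Y ε y)
      = dist ((max 0 (min Y x) + ε) ^ q) ((max 0 (min Y y) + ε) ^ q) := dist_sub_right _ _ _
    _ ≤ K * dist (max 0 (min Y x)) (max 0 (min Y y)) := hK.dist_le_mul _ (hmem x) _ (hmem y)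
    _ ≤ K * dist x y := by
        gcongr
        simpa using hclamp.dist_le_mul x y

theorem mul_le_regPow {B : ℝ} (hq : 0 ≤ q) (hq1 : q ≤ 1) (hε : 0 < ε) (hy : y ∈ Icc 0 Y)
    (hB : y + ε ≤ B) : q * B ^ (q - 1) * y ≤ regPow q Y ε y := by
  have hpos {t : ℝ} (ht : t ∈ Icc 0 y) : 0 < t + ε := by linarith [ht.1]
  have := mul_sub_le_sub_of_le_hasDerivWithinAt (C := q * B ^ (q - 1)) (a := 0) (b := y)
    (fun t ht => (hasDerivAt_add_rpow (q := q) (hpos ht)).hasDerivWithinAt) le_rfl hy.1 le_rfl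
    fun t ht => mul_le_mul_of_nonneg_left
      (rpow_le_rpow_of_nonpos (hpos (Ioo_subset_Icc_self ht)) (by linarith [ht.2])
        (by linarith)) hq
  simpa only [regPow_of_mem hy, zero_add, sub_zero] using this

theorem tendsto_regPow {y : ℕ → ℝ} {ε : ℕ → ℝ} {y₀ : ℝ} (hq : 0 < q) (hy : Tendsto y atTop (𝓝 y₀))
    (hε : Tendsto ε atTop (𝓝 0)) (hy₀ : y₀ ≤ Y) :
    Tendsto (fun k => regPow q Y (ε k) (y k)) atTop (𝓝 (max 0 y₀ ^ q)) := by
  have hlim : Tendsto (fun k => regPow q Y (ε k) (y k)) atTop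
      (𝓝 ((max 0 (min Y y₀) + 0) ^ q - 0 ^ q)) :=
    (((tendsto_const_nhds.max (tendsto_const_nhds.min hy)).add hε).rpow_const
      (Or.inr hq.le)).sub (hε.rpow_const (Or.inr hq.le))
  rwa [min_eq_right hy₀, add_zero, Real.zero_rpow hq.ne', sub_zero] at hlim

end RegPow

theorem exists_rpow_le_and_lt_mul_rpow_sub_one {q δ Y K : ℝ} (hq : q ∈ Ioo (0 : ℝ) 1)
    (hδ : 0 < δ) (hY : 0 < Y) :
    ∃ η ∈ Ioo 0 Y, (2 * η) ^ q ≤ δ ∧ K < q * (2 * η) ^ (q - 1) := by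
  have htwo : Tendsto (fun η : ℝ => 2 * η) (𝓝[>] 0) (𝓝[>] 0) :=
    tendsto_nhdsWithin_iff.2 ⟨((continuous_const_mul (2 : ℝ)).tendsto' 0 0 (mul_zero 2)).mono_left
      nhdsWithin_le_nhds, eventually_mem_nhdsWithin.mono fun _ hη => mem_Ioi.2 (mul_pos two_pos hη)⟩
  have hpow : Tendsto (fun y : ℝ => y ^ q) (𝓝[>] 0) (𝓝 0) :=
    ((continuous_id.rpow_const fun _ => Or.inr hq.1.le).tendsto' 0 0
      (Real.zero_rpow hq.1.ne')).mono_left nhdsWithin_le_nhds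
  have hsteep : Tendsto (fun y : ℝ => q * y ^ (q - 1)) (𝓝[>] 0) atTop :=
    (tendsto_rpow_neg_nhdsGT_zero (sub_neg.2 hq.2)).const_mul_atTop hq.1
  obtain ⟨η, hδη, hKη, hη⟩ := (((hpow.comp htwo).eventually (ge_mem_nhds hδ)).and
    (((hsteep.comp htwo).eventually (eventually_gt_atTop K)).and (Ioo_mem_nhdsGT hY))).exists
  exact ⟨η, hη, hδη, hKη⟩

theorem DecreasingCrossing.exists_forall_Icc_le {g : ℝ → ℝ} {c δ μ z η : ℝ}
    (hg : DecreasingCrossing g c δ μ) (hcont : Continuous g) (hz : z < c) (hη : 0 < η) :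
    ∃ d ∈ Ioo z c, c - δ ≤ d ∧ ∀ s ∈ Icc d c, g s ≤ η := by
  have hclose : ∀ᶠ s in 𝓝[≤] c, g s < η :=
    (hcont.tendsto c).mono_left nhdsWithin_le_nhds |>.eventually
      (gt_mem_nhds (hg.apply_eq_zero.trans_lt hη))
  obtain ⟨l, hl, hlη⟩ := mem_nhdsLE_iff_exists_Icc_subset.1 hclose
  obtain ⟨d, hd, hdc⟩ := exists_between
    (max_lt hz (max_lt hl (sub_lt_self c hg.radius_pos)))
  simp only [max_lt_iff] at hd
  exact ⟨d, ⟨hd.1, hdc⟩, hd.2.2.le, fun s hs => (hlη ⟨hd.2.1.le.trans hs.1, hs.2⟩).le⟩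

/- The slope of `y ↦ y ^ q` blows up at `0`, so small-amplitude trajectories around `(c, 0)` rotate
arbitrarily fast: this is where `p > 2` enters. -/
theorem exists_isShootingSolution_regPow {q Y z c δ μ : ℝ} {g : ℝ → ℝ} {Kg : ℝ≥0}
    (hq : q ∈ Ioo (0 : ℝ) 1) (m : ℕ) (hgL : LipschitzWith Kg g) (hgY : ∀ s, |g s| ≤ Y)
    (hz : g z = 0) (hzc : z < c) (hpos : ∀ s ∈ Ioo z c, 0 < g s)
    (hg : DecreasingCrossing g c δ μ) :
    ∃ d₁ < c, ∀ᶠ ε in 𝓝[>] (0 : ℝ), ∃ d ∈ Icc z d₁, ∃ u w,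
      IsShootingSolution (regPow q Y ε) g (fun t => (t + ε) ^ m) d u w ∧ w 1 = 0 ∧ c ≤ u 1 := by
  have hY : 0 < Y := (hg.apply_pos ⟨le_rfl, sub_lt_self c hg.radius_pos⟩).trans_le
    ((le_abs_self _).trans (hgY _))
  obtain ⟨η, hη, hηδ, hηK⟩ := exists_rpow_le_and_lt_mul_rpow_sub_one (Y := Y)
    (K := 64 * 2 ^ m / ((1 / 4) ^ m * μ)) hq hg.radius_pos hY
  have hK : 0 ≤ q * (2 * η) ^ (q - 1) :=
    mul_nonneg hq.1.le (rpow_nonneg (mul_nonneg zero_le_two hη.1.le) _)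
  rw [div_lt_iff₀ (mul_pos (by positivity) hg.slope_pos), ← mul_assoc] at hηK
  obtain ⟨d₁, hd₁, hδd₁, hgη⟩ := hg.exists_forall_Icc_le hgL.continuous hzc hη.1
  refine ⟨d₁, hd₁.2, ?_⟩
  filter_upwards [Ioo_mem_nhdsGT hη.1, Ioo_mem_nhdsGT one_pos] with ε hεη hε1
  have hε : 0 < ε := hε1.1
  have hbase {t : ℝ} (ht : 0 ≤ t) : 0 < t + ε := add_pos_of_nonneg_of_pos ht hε
  have ha : ∀ t ∈ Icc (0 : ℝ) 1, 0 < (t + ε) ^ m := fun t ht => pow_pos (hbase ht.1) m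
  have hψ : ∀ y, 0 ≤ regPow q Y ε y := fun y => regPow_nonneg hq.1.le hε.le
  have hψY : ∀ y, |regPow q Y ε y| ≤ (Y + 1) ^ q := fun y => by
    rw [abs_of_nonneg (hψ y)]
    exact regPow_le_rpow_add_one hq.1.le hY.le (Ioo_subset_Ioc_self hε1)
  obtain ⟨Kψ, hψL⟩ := exists_lipschitzWith_regPow (q := q) (Y := Y) hε
  refine exists_isShootingSolution_flux_one_eq_zero hψL hgL hψY hgY (by fun_prop) ha hψ
    (regPow_of_nonpos le_rfl) hz hpos hd₁ fun u w h => ?_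
  refine h.flux_one_neg (A := 2 ^ m) (b := (1 / 4) ^ m) hg ⟨hδd₁, hd₁.2⟩ hψ
    (fun y => regPow_of_nonpos)
    (fun t ht => ha t (Ioc_subset_Icc_self ht)) ?_ hη.1.le hgη ?_ hK ?_ ?_ (by positivity) ?_ hηK
  · exact fun s hs t _ hst => pow_le_pow_left₀ (hbase hs.1).le (by gcongr) m
  · refine fun y hy => le_trans (regPow_le_rpow hq.1.le hε.le ?_) hηδ
    linarith [max_le hη.1.le ((min_le_right Y y).trans hy), hεη.2]
  · exact fun y hy => mul_le_regPow hq.1.le hq.2.le hε ⟨hy.1, hy.2.trans hη.2.le⟩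
      (by linarith [hy.2, hεη.2])
  · exact fun t ht => pow_le_pow_left₀ (hbase ht.1.le).le (by linarith [ht.2, hε1.2]) m
  · exact fun t ht => pow_le_pow_left₀ (by norm_num) (by linarith [ht.1]) m

section Limit

theorem isShootingSolution_of_sub_eq_integral {ψ g u : ℝ → ℝ} {m : ℕ} (hψ : Continuous ψ)
    (hg : Continuous g) (hu : Continuous u)
    (hprofile : ∀ r ∈ Icc (0 : ℝ) 1,
      u r - u 0 = ∫ s in 0..r, ψ ((∫ t in 0..s, t ^ m * g (u t)) / s ^ m)) :
    IsShootingSolution ψ g (fun r => r ^ m) (u 0) u fun r => ∫ s in 0..r, s ^ m * g (u s) where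
  profile_zero := rfl
  flux_zero := intervalIntegral.integral_same
  hasDerivWithinAt_profile r hr := by
    have hspeed := hψ.comp_continuousOn
      (continuousOn_integral_pow_mul_div_pow (R := 1) (hg.comp hu).continuousOn m)
    exact ((hasDerivWithinAt_integral_of_continuousOn_Icc hspeed hr).add_const (u 0)).congr_of_mem
      (fun s hs => (sub_eq_iff_eq_add.1 (hprofile s hs))) hr
  hasDerivWithinAt_flux r _ :=
    (((continuous_pow m).mul (hg.comp hu)).integral_hasStrictDerivAt
      0 r).hasDerivAt.hasDerivWithinAt

variable {ψ a : ℕ → ℝ → ℝ} {g : ℝ → ℝ} {d : ℕ → ℝ} {u w : ℕ → ℝ → ℝ}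

theorem IsShootingSolution.exists_strictMono_tendsto_profile {M d₀ d₁ : ℝ}
    (h : ∀ k, IsShootingSolution (ψ k) g (a k) (d k) (u k) (w k)) (hψ : ∀ k y, 0 ≤ ψ k y)
    (hM : ∀ k y, ψ k y ≤ M) (hd : ∀ k, d k ∈ Icc d₀ d₁) :
    ∃ v : ℝ → ℝ, Continuous v ∧ ∃ φ : ℕ → ℕ, StrictMono φ ∧
      ∀ t ∈ Icc (0 : ℝ) 1, Tendsto (fun k => u (φ k) t) atTop (𝓝 (v t)) := by
  have hM0 : 0 ≤ M := (hψ 0 0).trans (hM 0 0)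
  have hlip : ∀ k, LipschitzWith M.toNNReal ((Icc 0 1).domRestrict (u k)) := fun k =>
    ((convex_Icc 0 1).lipschitzOnWith_of_nnnorm_hasDerivWithin_le
      (h k).hasDerivWithinAt_profile fun t _ => NNReal.coe_le_coe.1 (by
        rw [coe_nnnorm, Real.norm_of_nonneg (hψ _ _), Real.coe_toNNReal M hM0]
        exact hM _ _)).to_restrict
  have hmem : ∀ k (t : Icc (0 : ℝ) 1), u k t ∈ Icc d₀ (d₁ + M) := fun k t => by
    have hle := sub_le_mul_sub_of_hasDerivWithinAt_le (h k).hasDerivWithinAt_profile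
      le_rfl t.2.1 t.2.2 fun s _ => hM k _
    rw [(h k).profile_zero, sub_zero] at hle
    exact ⟨(hd k).1.trans ((h k).le_profile (hψ k) t t.2),
      by linarith [(hd k).2, mul_le_of_le_one_right hM0 t.2.2]⟩
  obtain ⟨v, hv, φ, hφ, hlim⟩ := exists_strictMono_tendsto_of_lipschitzWith hlip isCompact_Icc hmem
  refine ⟨IccExtend zero_le_one v, hv.Icc_extend', φ, hφ, fun t ht => ?_⟩
  rw [IccExtend_of_mem zero_le_one v ht]
  exact hlim ⟨t, ht⟩

theorem IsShootingSolution.tendsto_flux {a₀ v : ℝ → ℝ} {A Y : ℝ}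
    (h : ∀ k, IsShootingSolution (ψ k) g (a k) (d k) (u k) (w k)) (hg : Continuous g)
    (hgY : ∀ s, |g s| ≤ Y) (ha : ∀ k, ContinuousOn (a k) (Icc 0 1))
    (haA : ∀ k, ∀ t ∈ Icc (0 : ℝ) 1, |a k t| ≤ A)
    (halim : ∀ t, Tendsto (fun k => a k t) atTop (𝓝 (a₀ t)))
    (hlim : ∀ t ∈ Icc (0 : ℝ) 1, Tendsto (fun k => u k t) atTop (𝓝 (v t))) :
    ∀ r ∈ Icc (0 : ℝ) 1,
      Tendsto (fun k => w k r) atTop (𝓝 (∫ s in 0..r, a₀ s * g (v s))) := by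
  intro r hr
  simpa only [(h _).flux_zero, sub_zero] using tendsto_sub_of_hasDerivWithinAt_of_bounded
    (fun k => (h k).hasDerivWithinAt_flux)
    (fun k => (ha k).mul (hg.comp_continuousOn (h k).continuousOn_profile))
    (fun k t ht => by
      rw [abs_mul]
      exact mul_le_mul (haA k t ht) (hgY _) (abs_nonneg _) ((abs_nonneg _).trans (haA k t ht)))
    (fun t ht => (halim t).mul ((hg.tendsto _).comp (hlim t (Ioc_subset_Icc_self ht)))) hr

theorem IsShootingSolution.of_tendsto_regPow {q Y : ℝ} {m : ℕ} {ε : ℕ → ℝ} {v : ℝ → ℝ}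
    (h : ∀ k, IsShootingSolution (regPow q Y (ε k)) g (fun t => (t + ε k) ^ m) (d k) (u k) (w k))
    (hq : 0 < q) (hε : ∀ k, ε k ∈ Ioc 0 1) (hεlim : Tendsto ε atTop (𝓝 0)) (hg : Continuous g)
    (hgY : ∀ s, |g s| ≤ Y) (hv : Continuous v)
    (hlim : ∀ t ∈ Icc (0 : ℝ) 1, Tendsto (fun k => u k t) atTop (𝓝 (v t))) :
    ∃ W, IsShootingSolution (fun y => max 0 y ^ q) g (fun t => t ^ m) (v 0) v W ∧
      ∀ r ∈ Icc (0 : ℝ) 1, Tendsto (fun k => w k r) atTop (𝓝 (W r)) := by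
  have hY : 0 ≤ Y := (abs_nonneg _).trans (hgY 0)
  have hbase (k : ℕ) {t : ℝ} (ht : 0 ≤ t) : 0 < t + ε k := add_pos_of_nonneg_of_pos ht (hε k).1
  have ha (k : ℕ) {t : ℝ} (ht : 0 ≤ t) : 0 < (t + ε k) ^ m := pow_pos (hbase k ht) m
  have hacont : ∀ k, ContinuousOn (fun t => (t + ε k) ^ m) (Icc 0 1) := fun k => by fun_prop
  have halim (t : ℝ) : Tendsto (fun k => (t + ε k) ^ m) atTop (𝓝 (t ^ m)) := by
    simpa only [add_zero] using (hεlim.const_add t).pow m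
  have hψ (k : ℕ) : ∀ y, 0 ≤ regPow q Y (ε k) y := fun y => regPow_nonneg hq.le (hε k).1.le
  have hwlim := IsShootingSolution.tendsto_flux (A := 2 ^ m) h hg hgY hacont
    (fun k t ht => by
      rw [abs_of_pos (ha k ht.1)]
      exact pow_le_pow_left₀ (hbase k ht.1).le (by linarith [ht.2, (hε k).2]) m) halim hlim
  refine ⟨_, isShootingSolution_of_sub_eq_integral
    ((continuous_const.max continuous_id).rpow_const fun _ => Or.inr hq.le) hg hv fun r hr => ?_,
    hwlim⟩
  refine tendsto_nhds_unique ((hlim r hr).sub (hlim 0 (left_mem_Icc.2 zero_le_one)))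
    (tendsto_sub_of_hasDerivWithinAt_of_bounded (C := (Y + 1) ^ q)
      (fun k => (h k).hasDerivWithinAt_profile) (fun k => ?_) (fun k t _ => ?_)
      (fun t ht => ?_) hr)
  · obtain ⟨K, hK⟩ := exists_lipschitzWith_regPow (q := q) (Y := Y) (hε k).1
    exact hK.continuous.comp_continuousOn
      ((h k).continuousOn_flux.div (hacont k) fun t ht => (ha k ht.1).ne')
  · rw [abs_of_nonneg (hψ k _)]
    exact regPow_le_rpow_add_one hq.le hY (hε k)
  · have ht' : t ∈ Icc (0 : ℝ) 1 := Ioc_subset_Icc_self ht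
    have hquot := (hwlim t ht').div (halim t) (pow_pos ht.1 m).ne'
    refine tendsto_regPow hq hquot hεlim (le_of_tendsto' hquot fun k => ?_)
    exact (h k).flux_div_le (T := u k t) (hψ k) (fun t ht => ha k ht.1.le)
      (fun s hs t _ hst => pow_le_pow_left₀ (hbase k hs.1).le (by gcongr) m) hY
      (fun s _ => (le_abs_self _).trans (hgY s)) ht' le_rfl

end Limit

theorem exists_isShootingSolution_rpow {q Y z c δ μ : ℝ} {g : ℝ → ℝ} {Kg : ℝ≥0}
    (hq : q ∈ Ioo (0 : ℝ) 1) (m : ℕ) (hgL : LipschitzWith Kg g) (hgY : ∀ s, |g s| ≤ Y)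
    (hz : g z = 0) (hzc : z < c) (hpos : ∀ s ∈ Ioo z c, 0 < g s)
    (hg : DecreasingCrossing g c δ μ) :
    ∃ d ∈ Ico z c, ∃ u w,
      IsShootingSolution (fun y => max 0 y ^ q) g (fun t => t ^ m) d u w ∧ w 1 = 0 ∧ c ≤ u 1 := by
  obtain ⟨d₁, hd₁, hev⟩ := exists_isShootingSolution_regPow hq m hgL hgY hz hzc hpos hg
  obtain ⟨ε, hεlim, hε⟩ := exists_seq_forall_of_frequently
    (hev.and (Ioc_mem_nhdsGT one_pos)).frequently
  choose d hd u w h hw1 hu1 using fun k => (hε k).1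
  have hY : 0 ≤ Y := (abs_nonneg _).trans (hgY 0)
  obtain ⟨v, hv, φ, hφ, hlim⟩ := IsShootingSolution.exists_strictMono_tendsto_profile h
    (fun k y => regPow_nonneg hq.1.le (hε k).2.1.le)
    (fun k y => regPow_le_rpow_add_one hq.1.le hY (hε k).2) hd
  obtain ⟨W, hW, hwlim⟩ := IsShootingSolution.of_tendsto_regPow (fun k => h (φ k)) hq.1
    (fun k => (hε (φ k)).2) ((tendsto_nhdsWithin_iff.1 hεlim).1.comp hφ.tendsto_atTop)
    hgL.continuous hgY hv hlim
  have h0 : (0 : ℝ) ∈ Icc 0 1 := left_mem_Icc.2 zero_le_one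
  have h1 : (1 : ℝ) ∈ Icc 0 1 := right_mem_Icc.2 zero_le_one
  have hv0 : v 0 ∈ Icc z d₁ := isClosed_Icc.mem_of_tendsto (hlim 0 h0)
    (.of_forall fun k => (h (φ k)).profile_zero ▸ hd (φ k))
  refine ⟨v 0, ⟨hv0.1, hv0.2.trans_lt hd₁⟩, v, W, hW, ?_, ge_of_tendsto' (hlim 1 h1) fun k => hu1 _⟩
  exact tendsto_nhds_unique (hwlim 1 h1) (by simp only [hw1, tendsto_const_nhds])

namespace IsShootingSolution

variable {ψ g u w : ℝ → ℝ} {d p : ℝ} {m : ℕ}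

theorem continuousOn_flux_div_pow (h : IsShootingSolution ψ g (fun t => t ^ m) d u w)
    (hg : Continuous g) : ContinuousOn (fun t => w t / t ^ m) (Icc 0 1) := by
  have hgu : ContinuousOn (fun t => g (u t)) (Icc 0 1) :=
    hg.comp_continuousOn h.continuousOn_profile
  refine (continuousOn_integral_pow_mul_div_pow hgu m).congr fun r hr => ?_
  dsimp only
  rw [integral_eq_sub_of_hasDerivWithinAt_Icc h.hasDerivWithinAt_flux
    ((continuousOn_pow m).mul hgu) hr, h.flux_zero, sub_zero]

theorem profile_le_exp_mul
    (h : IsShootingSolution (fun y => max 0 y ^ (p - 1)⁻¹) g (fun t => t ^ m) d u w)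
    (hp : 1 < p) (hd : 0 ≤ d) (hg : ∀ s, 0 ≤ s → g s ≤ s ^ (p - 1)) :
    ∀ r ∈ Icc (0 : ℝ) 1, u r ≤ exp r * d := by
  intro r hr
  have hp1 : 0 < p - 1 := sub_pos.2 hp
  have hψ (y : ℝ) : 0 ≤ max 0 y ^ (p - 1)⁻¹ := rpow_nonneg (le_max_left 0 y) _
  have hspeed : ∀ t ∈ Ioo 0 r, max 0 (w t / t ^ m) ^ (p - 1)⁻¹ ≤ u t := fun t ht => by
    have ht' : t ∈ Icc (0 : ℝ) 1 := ⟨ht.1.le, ht.2.le.trans hr.2⟩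
    have hut : 0 ≤ u t := hd.trans (h.le_profile hψ t ht')
    have hquot : w t / t ^ m ≤ u t ^ (p - 1) :=
      h.flux_div_le hψ (fun s hs => pow_pos hs.1 m)
        (fun s hs s' _ hss' => pow_le_pow_left₀ hs.1 hss' m) (rpow_nonneg hut _)
        (fun s hs => (hg s (hd.trans hs.1)).trans
          (rpow_le_rpow (hd.trans hs.1) hs.2 hp1.le)) ht' le_rfl
    calc max 0 (w t / t ^ m) ^ (p - 1)⁻¹ ≤ (u t ^ (p - 1)) ^ (p - 1)⁻¹ :=
          rpow_le_rpow (le_max_left _ _) (max_le (rpow_nonneg hut _) hquot)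
            (inv_nonneg.2 hp1.le)
      _ = u t := rpow_rpow_inv hut hp1.ne'
  simpa only [sub_zero, h.profile_zero] using
    le_exp_sub_mul_of_hasDerivWithinAt_le h.hasDerivWithinAt_profile le_rfl hr.1 hr.2 hspeed

theorem isRadialNeumannSolution {f : ℝ → ℝ}
    (h : IsShootingSolution (fun y => max 0 y ^ (p - 1)⁻¹) g (fun t => t ^ m) d u w)
    (hp : 1 < p) (hg : Continuous g) (hw : w 1 = 0)
    (hgf : ∀ r ∈ Ioo (0 : ℝ) 1, g (u r) = u r ^ (p - 1) - f (u r)) :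
    IsRadialNeumannSolution p (m + 1) f u (fun t => max 0 (w t / t ^ m) ^ (p - 1)⁻¹) := by
  have hp1 : 0 < p - 1 := sub_pos.2 hp
  have hinv : 0 < (p - 1)⁻¹ := inv_pos.2 hp1
  have hψ0 : ∀ y : ℝ, y ≤ 0 → max 0 y ^ (p - 1)⁻¹ = 0 := fun y hy => by
    rw [max_eq_left hy, zero_rpow hinv.ne']
  have hquot : ∀ t ∈ Ioo (0 : ℝ) 1, 0 ≤ w t / t ^ m := fun t ht =>
    div_nonneg (h.flux_nonneg hψ0 (fun s hs => pow_pos hs.1 m) hw.ge t (Ioo_subset_Icc_self ht))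
      (pow_nonneg ht.1.le m)
  have hflux : ∀ t ∈ Ioo (0 : ℝ) 1,
      flux p (m + 1) (fun t => max 0 (w t / t ^ m) ^ (p - 1)⁻¹) t = w t := fun t ht => by
    have hnonneg : 0 ≤ (w t / t ^ m) ^ (p - 1)⁻¹ := rpow_nonneg (hquot t ht) _
    rw [flux, max_eq_right (hquot t ht), abs_of_nonneg hnonneg,
      ← rpow_add_one' hnonneg (by linarith), show p - 2 + 1 = p - 1 by ring,
      rpow_inv_rpow (hquot t ht) hp1.ne', Nat.add_sub_cancel,
      mul_div_cancel₀ _ (pow_pos ht.1 m).ne']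
  refine ⟨h.hasDerivWithinAt_profile, ?_, ?_, ?_, fun r hr => ?_⟩
  · exact (continuousOn_const.sup (h.continuousOn_flux_div_pow hg)).rpow_const
      fun _ _ => Or.inr hinv.le
  · exact hψ0 (w 0 / 0 ^ m) (by rw [h.flux_zero, zero_div])
  · exact hψ0 (w 1 / 1 ^ m) (by rw [hw, zero_div])
  · have hderiv := (h.hasDerivWithinAt_flux r (Ioo_subset_Icc_self hr)).hasDerivAt
      (Icc_mem_nhds hr.1 hr.2)
    rw [hgf r hr] at hderiv
    exact hderiv.congr_of_eventuallyEq
      (eventually_of_mem (Ioo_mem_nhds hr.1 hr.2) hflux)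

end IsShootingSolution

theorem exists_isShootingSolution_comp_projIcc {q c B : ℝ} {G G' : ℝ → ℝ} (hq : q ∈ Ioo (0 : ℝ) 1)
    (m : ℕ) (hc : 0 < c) (hcB : c < B)
    (hG : ∀ s ∈ Icc 0 B, HasDerivWithinAt G (G' s) (Icc 0 B) s) (hG' : ContinuousOn G' (Icc 0 B))
    (hG0 : G 0 ≤ 0) (hGc : G c = 0) (hG'c : G' c < 0) :
    ∃ z ∈ Ico 0 c, (∀ s ∈ Ioo z c, 0 < G s) ∧ ∃ d ∈ Ico z c, ∃ u w,
      IsShootingSolution (fun y => max 0 y ^ q) (fun s => G (projIcc 0 B (hc.trans hcB).le s))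
        (fun t => t ^ m) d u w ∧ w 1 = 0 ∧ c ≤ u 1 := by
  have hB : 0 ≤ B := (hc.trans hcB).le
  obtain ⟨K, hK⟩ := exists_lipschitzOnWith_Icc_of_hasDerivWithinAt hG hG'
  obtain ⟨Y, hY⟩ := isCompact_Icc.exists_bound_of_continuousOn hK.continuousOn
  obtain ⟨δ, μ, hδ, hcross⟩ := DecreasingCrossing.exists_of_hasDerivAt
    ((hG c ⟨hc.le, hcB.le⟩).hasDerivAt (Icc_mem_nhds hc hcB)) hGc hG'c
    (lt_min hc (sub_pos.2 hcB))
  have hδc : 0 ≤ c - δ := sub_nonneg.2 (hδ.trans (min_le_left _ _))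
  have hδB : c + δ ≤ B := by linarith [hδ.trans (min_le_right _ _)]
  have heq : EqOn G (fun s => G (projIcc 0 B hB s)) (Icc 0 B) := fun s hs => by
    simp only [projIcc_of_mem hB hs]
  obtain ⟨z, hz, hGz, hpos⟩ := hcross.exists_last_zero hδc
    (hK.continuousOn.mono (Icc_subset_Icc_right hcB.le)) hG0
  refine ⟨z, hz, hpos, exists_isShootingSolution_rpow hq m
    (hK.to_restrict.comp (LipschitzWith.projIcc hB)) (fun s => hY _ (projIcc 0 B hB s).2)
    ?_ hz.2 (fun s hs => ?_) (hcross.congr (heq.mono (Icc_subset_Icc hδc hδB)))⟩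
  · exact (heq ⟨hz.1, hz.2.le.trans hcB.le⟩).symm.trans hGz
  · exact (hpos s hs).trans_eq (heq ⟨hz.1.trans hs.1.le, hs.2.le.trans hcB.le⟩)

/-- The zeroth-order term `s ^ (p - 1) - f s` of the radial equation
`(r ^ (N - 1) * |u'| ^ (p - 2) * u')' = r ^ (N - 1) * (u ^ (p - 1) - f u)`. -/
noncomputable def netAbsorption (p : ℝ) (f : ℝ → ℝ) (s : ℝ) : ℝ :=
  s ^ (p - 1) - f s

section Neumann

variable {p B : ℝ} {f f' : ℝ → ℝ}

theorem hasDerivWithinAt_netAbsorption (hp : 2 ≤ p)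
    (hf : ∀ s ∈ Ici (0 : ℝ), HasDerivWithinAt f (f' s) (Ici 0) s) :
    ∀ s ∈ Icc 0 B, HasDerivWithinAt (netAbsorption p f) ((p - 1) * s ^ (p - 2) - f' s)
      (Icc 0 B) s := fun s hs => by
  have hpow : HasDerivAt (fun s => s ^ (p - 1)) ((p - 1) * s ^ (p - 1 - 1)) s :=
    hasDerivAt_rpow_const (Or.inr (by linarith))
  rw [show p - 1 - 1 = p - 2 by ring] at hpow
  exact hpow.hasDerivWithinAt.sub ((hf s hs.1).mono Icc_subset_Ici_self)

theorem netAbsorption_projIcc_le (hp : 1 ≤ p) (hf0 : ∀ s ∈ Ici (0 : ℝ), 0 ≤ f s) (hB : 0 ≤ B)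
    {s : ℝ} (hs : 0 ≤ s) : netAbsorption p f (projIcc 0 B hB s) ≤ s ^ (p - 1) := by
  have hnonneg : 0 ≤ (projIcc 0 B hB s : ℝ) := (projIcc 0 B hB s).2.1
  have hle : (projIcc 0 B hB s : ℝ) ≤ s := by
    rw [coe_projIcc]
    exact max_le hs (min_le_right B s)
  exact (sub_le_self _ (hf0 _ hnonneg)).trans (rpow_le_rpow hnonneg hle (sub_nonneg.2 hp))

/- The profile stays below `exp 1 * d ≤ B`, where the truncation is inactive. -/
theorem isRadialNeumannSolution_of_shooting_projIcc {d : ℝ} {u w : ℝ → ℝ} {m : ℕ}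
    (hp : 1 < p) (hf0 : ∀ s ∈ Ici (0 : ℝ), 0 ≤ f s) (hB : 0 ≤ B)
    (hcont : ContinuousOn (netAbsorption p f) (Icc 0 B))
    (h : IsShootingSolution (fun y => max 0 y ^ (p - 1)⁻¹)
      (fun s => netAbsorption p f (projIcc 0 B hB s)) (fun t => t ^ m) d u w)
    (hd : 0 ≤ d) (hdB : exp 1 * d ≤ B) (hw : w 1 = 0) :
    IsRadialNeumannSolution p (m + 1) f u fun t => max 0 (w t / t ^ m) ^ (p - 1)⁻¹ := by
  refine h.isRadialNeumannSolution hp (hcont.comp_continuous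
    (continuous_subtype_val.comp continuous_projIcc) fun s => (projIcc 0 B hB s).2) hw
    fun r hr => ?_
  have hr' : r ∈ Icc (0 : ℝ) 1 := Ioo_subset_Icc_self hr
  have hu0 : 0 ≤ u r := hd.trans
    (h.le_profile (fun y => rpow_nonneg (le_max_left 0 y) _) r hr')
  have huB : u r ≤ B := calc
    u r ≤ exp r * d :=
      h.profile_le_exp_mul hp hd (fun s hs => netAbsorption_projIcc_le hp.le hf0 hB hs) r hr'
    _ ≤ exp 1 * d := mul_le_mul_of_nonneg_right (exp_le_exp.2 hr.2.le) hd
    _ ≤ B := hdB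
  rw [projIcc_of_mem hB ⟨hu0, huB⟩, netAbsorption]

theorem exists_isRadialNeumannSolution_crossing (hp : 2 < p) (m : ℕ)
    (hf : ∀ s ∈ Ici (0 : ℝ), HasDerivWithinAt f (f' s) (Ici 0) s)
    (hf' : ContinuousOn f' (Ici 0)) (hf0 : ∀ s ∈ Ici (0 : ℝ), 0 ≤ f s) {c : ℝ} (hc : 0 < c)
    (hfc : f c = c ^ (p - 1)) (hf'c : (p - 1) * c ^ (p - 2) < f' c) :
    ∃ u v, IsRadialNeumannSolution p (m + 1) f u v ∧ (∀ r ∈ Icc (0 : ℝ) 1, 0 < u r) ∧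
      MonotoneOn u (Icc 0 1) ∧ u 0 < c ∧ c ≤ u 1 ∧
      ∀ z ∈ Ico 0 c, f z = z ^ (p - 1) → z ≤ u 0 := by
  have hp1 : 1 < p - 1 := by linarith
  have hcB : c < exp 1 * c := lt_mul_of_one_lt_left hc (one_lt_exp_iff.2 one_pos)
  have hG := hasDerivWithinAt_netAbsorption (B := exp 1 * c) hp.le hf
  have hG' : ContinuousOn (fun s => (p - 1) * s ^ (p - 2) - f' s) (Icc 0 (exp 1 * c)) :=
    (continuousOn_const.mul (continuousOn_id.rpow_const fun _ _ => Or.inr (by linarith))).sub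
      (hf'.mono Icc_subset_Ici_self)
  have hG0 : netAbsorption p f 0 ≤ 0 := by
    rw [netAbsorption, zero_rpow (by linarith), zero_sub]
    exact neg_nonpos.2 (hf0 0 self_mem_Ici)
  obtain ⟨z₀, hz₀, hpos, d, hd, u, w, h, hw, hu1⟩ := exists_isShootingSolution_comp_projIcc
    (q := (p - 1)⁻¹) ⟨by positivity, inv_lt_one_of_one_lt₀ hp1⟩ m hc hcB hG hG' hG0
    (by rw [netAbsorption, hfc, sub_self]) (sub_neg.2 hf'c)
  have hd0 : 0 ≤ d := hz₀.1.trans hd.1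
  have hψ (y : ℝ) : 0 ≤ max 0 y ^ (p - 1)⁻¹ := rpow_nonneg (le_max_left 0 y) _
  have hdpos : 0 < d := by
    have hle : u 1 ≤ exp 1 * d := h.profile_le_exp_mul (by linarith) hd0
      (fun s hs => netAbsorption_projIcc_le (by linarith) hf0 _ hs) 1 (right_mem_Icc.2 zero_le_one)
    exact pos_of_mul_pos_right ((hc.trans_le hu1).trans_le hle) (exp_pos 1).le
  refine ⟨u, _, isRadialNeumannSolution_of_shooting_projIcc (by linarith) hf0 _
      (continuousOn_of_forall_hasDerivWithinAt hG) h hd0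
      (mul_le_mul_of_nonneg_left hd.2.le (exp_pos 1).le) hw,
    fun r hr => hdpos.trans_le (h.le_profile hψ r hr), h.monotoneOn_profile hψ,
    h.profile_zero.trans_lt hd.2, hu1, fun z hz hfz => ?_⟩
  rw [h.profile_zero]
  refine le_trans (le_of_not_gt fun hlt => ?_) hd.1
  exact (hpos z ⟨hlt, hz.2⟩).ne' (by rw [netAbsorption, hfz, sub_self])

end Neumann

theorem stmt_1_general {ι : Type*} {p : ℝ} (hp : 2 < p) {N : ℕ} (hN : 1 ≤ N) {f f' : ℝ → ℝ}
    (hC1 : ∀ s ∈ Ici (0 : ℝ), HasDerivWithinAt f (f' s) (Ici 0) s)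
    (hC1' : ContinuousOn f' (Ici 0)) (hf0 : ∀ s ∈ Ici (0 : ℝ), 0 ≤ f s)
    {u₀ : ι → ℝ} (hinj : Function.Injective u₀)
    (hf3 : ∀ i, 0 < u₀ i ∧ f (u₀ i) = u₀ i ^ (p - 1) ∧ (p - 1) * u₀ i ^ (p - 2) < f' (u₀ i)) :
    ∃ u v : ι → ℝ → ℝ,
      (∀ i, IsRadialNeumannSolution p N f (u i) (v i) ∧ (∀ r ∈ Icc (0 : ℝ) 1, 0 < u i r) ∧
        MonotoneOn (u i) (Icc 0 1) ∧ ¬ ∀ r ∈ Icc (0 : ℝ) 1, u i r = u i 0) ∧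
      ∀ i j, i ≠ j → ∃ r ∈ Icc (0 : ℝ) 1, u i r ≠ u j r := by
  obtain ⟨m, rfl⟩ : ∃ m, N = m + 1 := Nat.exists_eq_add_of_le' hN
  choose hpos hzero hslope using hf3
  choose u v hsol hupos hmono hu0 hu1 hge using fun i =>
    exists_isRadialNeumannSolution_crossing hp m hC1 hC1' hf0 (hpos i) (hzero i) (hslope i)
  have hlt : ∀ i j, u₀ i < u₀ j → u i 0 < u j 0 := fun i j hij =>
    (hu0 i).trans_le (hge j (u₀ i) ⟨(hpos i).le, hij⟩ (hzero i))
  refine ⟨u, v, fun i => ⟨hsol i, hupos i, hmono i, fun hconst => ?_⟩, fun i j hij =>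
    ⟨0, left_mem_Icc.2 zero_le_one, ?_⟩⟩
  · exact ((hu0 i).trans_le (hu1 i)).ne' (hconst 1 (right_mem_Icc.2 zero_le_one))
  · rcases (hinj.ne hij).lt_or_gt with h | h
    · exact (hlt i j h).ne
    · exact (hlt j i h).ne'

theorem stmt_1 (p : ℝ) (hp : 2 < p) (N : ℕ) (hN : 1 ≤ N) (f f' : ℝ → ℝ)
    (hC1 : ∀ s ∈ Ici (0:ℝ), HasDerivWithinAt f (f' s) (Ici 0) s)
    (hC1' : ContinuousOn f' (Ici 0))
    (hf0 : ∀ s ∈ Ici (0:ℝ), 0 ≤ f s ∧ 0 ≤ f' s)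
    (hf1 : ∃ L ∈ Ico (0:ℝ) 1,
      Tendsto (fun s => f s / s ^ (p - 1)) (nhdsWithin 0 (Ioi 0)) (nhds L))
    (hf2 : ∃ a : ℝ, 1 < a ∧ ∀ᶠ s in atTop, a ≤ f s / s ^ (p - 1))
    (n : ℕ) (u₀ : Fin n → ℝ) (hinj : Function.Injective u₀)
    (hf3 : ∀ i, 0 < u₀ i ∧ f (u₀ i) = (u₀ i) ^ (p - 1) ∧
      (p - 1) * (u₀ i) ^ (p - 2) < f' (u₀ i)) :
    ∃ u v : Fin n → ℝ → ℝ,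
      (∀ i, IsRadialNeumannSolution p N f (u i) (v i) ∧
        (∀ r ∈ Icc (0:ℝ) 1, 0 < u i r) ∧
        MonotoneOn (u i) (Icc (0:ℝ) 1) ∧
        ¬ (∀ r ∈ Icc (0:ℝ) 1, u i r = u i 0)) ∧
      (∀ i j, i ≠ j → ∃ r ∈ Icc (0:ℝ) 1, u i r ≠ u j r) :=
  stmt_1_general hp hN hC1 hC1' (fun s hs => (hf0 s hs).1) hinj hf3
end
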